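/- arXiv:1303.7291 — 2 statements merged into one kernel-verified Lean document; each statement's English description precedes it below -/
import Mathlib

section
/- (Gordon's Gaussian comparison lemma.) Let m, n ≥ 1, let Φ ⊂ ℝⁿ be a nonempty compact set, and let ψ : ℝⁿ → ℝ be continuous. Let A be a random m×n matrix with i.i.d. standard normal N(0,1) entries, let g ∈ ℝᵐ and h ∈ ℝⁿ be random vectors with i.i.d. N(0,1) entries, and let γ be a standard normal random variable, all mutually independent. Then P( for all φ ∈ Φ: sup_{a ∈ ℝᵐ, ‖a‖₂ = 1} ( aᵀ·A·φ + ‖φ‖₂·γ − ψ(φ) ) ≥ 0 ) ≥ P( for all φ ∈ Φ: sup_{a ∈ ℝᵐ, ‖a‖₂ = 1} ( ‖φ‖₂·⟨g, a⟩ + ⟨h, φ⟩ − ψ(φ) ) ≥ 0 ). -/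
open MeasureTheory ProbabilityTheory

noncomputable def e2norm {d : ℕ} (x : Fin d → ℝ) : ℝ := Real.sqrt (∑ i, x i ^ 2)

/-- The product Gaussian measure on (A, g, h, γ). -/
noncomputable def muGordon (m n : ℕ) :
    Measure ((Fin m → Fin n → ℝ) × ((Fin m → ℝ) × ((Fin n → ℝ) × ℝ))) :=
  (Measure.pi fun _ : Fin m => Measure.pi fun _ : Fin n => gaussianReal 0 1).prod
    ((Measure.pi fun _ : Fin m => gaussianReal 0 1).prod
      ((Measure.pi fun _ : Fin n => gaussianReal 0 1).prod (gaussianReal 0 1)))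

/-!
Let `X = aᵀAφ + ‖φ‖₂γ` and `Y = ‖φ‖₂⟨g, a⟩ + ⟨h, φ⟩` be the two centred Gaussian processes indexed
by `φ` and `‖a‖₂ = 1`. Their covariances satisfy
`E[X X'] - E[Y Y'] = (‖φ‖₂‖φ'‖₂ - ⟨φ, φ'⟩)(1 - ⟨a, a'⟩) ≥ 0`, with equality when `φ = φ'`.

Along the rotation `Z_θ = cos θ • X + sin θ • Y` of independent copies, Gaussian integration by
parts gives `d/dθ E f(Z_θ) = sin θ cos θ ∑ (E[Y_p Y_q] - E[X_p X_q]) E ∂_p ∂_q f(Z_θ)`. For a smooth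
monotone approximation `f` of the indicator of `∀ φ, ∃ a, ψ φ ≤ Z φ a`, the mixed derivatives with
`φ ≠ φ'` are nonnegative, so every term is nonpositive and the probability of the event is at
least as large for `X` as for `Y`. Finite index sets suffice, by continuity in `(φ, a)`,
separability and compactness of the sphere.
-/

open Function Set Filter TopologicalSpace
open scoped Topology NNReal

namespace Gordon

section TemperateGrowth

variable {E F : Type*} [NormedAddCommGroup E] [NormedSpace ℝ E]
  [NormedAddCommGroup F] [NormedSpace ℝ F]

lemma hasTemperateGrowth_finsetProd {ι : Type*} {f : ι → E → ℝ} {s : Finset ι}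
    (hf : ∀ i ∈ s, HasTemperateGrowth (f i)) : HasTemperateGrowth fun x ↦ ∏ i ∈ s, f i x := by
  classical
  induction s using Finset.induction_on with
  | empty => simpa only [Finset.prod_empty] using HasTemperateGrowth.const (1 : ℝ)
  | insert i s hi ih =>
    simp only [Finset.prod_insert hi]
    exact (hf i (s.mem_insert_self i)).mul
      (ih fun j hj ↦ hf j (Finset.mem_insert_of_mem hj))

lemma hasTemperateGrowth_fderiv {f : E → F} (hf : HasTemperateGrowth f) :
    HasTemperateGrowth (fderiv ℝ f) := by
  refine ⟨hf.1.fderiv_right (m := (⊤ : ℕ∞)) le_rfl, fun n ↦ ?_⟩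
  obtain ⟨k, C, hC⟩ := hf.2 (n + 1)
  exact ⟨k, C, fun x ↦ norm_iteratedFDeriv_fderiv.trans_le (hC x)⟩

lemma hasTemperateGrowth_fderiv_apply {f : E → F} (hf : HasTemperateGrowth f) (v : E) :
    HasTemperateGrowth fun x ↦ fderiv ℝ f x v :=
  (ContinuousLinearMap.apply ℝ F v).hasTemperateGrowth.comp (hasTemperateGrowth_fderiv hf)

lemma hasTemperateGrowth_deriv {f : ℝ → F} (hf : HasTemperateGrowth f) :
    HasTemperateGrowth (deriv f) := by
  simpa only [fderiv_apply_one_eq_deriv] using hasTemperateGrowth_fderiv_apply hf 1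

lemma hasTemperateGrowth_smoothTransition : HasTemperateGrowth Real.smoothTransition := by
  have hsmooth := Real.smoothTransition.contDiff (n := ⊤)
  have hconst : ∀ x, x ∉ Icc (0 : ℝ) 1 → fderiv ℝ Real.smoothTransition x = 0 := by
    intro x hx
    have : Real.smoothTransition =ᶠ[𝓝 x] fun _ ↦ Real.smoothTransition x := by
      rcases lt_or_ge x 0 with h | h
      · filter_upwards [eventually_lt_nhds h] with y hy
        rw [Real.smoothTransition.zero_of_nonpos hy.le, Real.smoothTransition.zero_of_nonpos h.le]
      · have h1 : 1 < x := not_le.1 fun h1 ↦ hx ⟨h, h1⟩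
        filter_upwards [eventually_gt_nhds h1] with y hy
        rw [Real.smoothTransition.one_of_one_le hy.le, Real.smoothTransition.one_of_one_le h1.le]
    rw [this.fderiv_eq, fderiv_fun_const, Pi.zero_apply]
  refine .of_fderiv (k := 0) (C := 1) ?_ (hsmooth.differentiable (by simp)) fun x ↦ ?_
  · exact (HasCompactSupport.intro isCompact_Icc fun x hx ↦ hconst x hx).hasTemperateGrowth
      (hsmooth.fderiv_right (m := (⊤ : ℕ∞)) le_rfl)
  · rw [pow_zero, mul_one, Real.norm_of_nonneg (Real.smoothTransition.nonneg x)]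
    exact Real.smoothTransition.le_one x

variable [MeasurableSpace E] [BorelSpace E] [SecondCountableTopology E] [CompleteSpace E]

variable {Ω : Type*} {mΩ : MeasurableSpace Ω} {P : Measure Ω} {Z : Ω → E}

lemma integrable_one_add_norm_pow (hZ : HasGaussianLaw Z P) (k : ℕ) :
    Integrable (fun ω ↦ (1 + ‖Z ω‖) ^ k) P := by
  have := hZ.isProbabilityMeasure
  have hmoment : MemLp (fun ω ↦ 1 + ‖Z ω‖) k P :=
    (memLp_const (1 : ℝ)).add (hZ.memLp (ENNReal.natCast_ne_top k)).norm
  refine hmoment.integrable_norm_pow'.congr (.of_forall fun ω ↦ ?_)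
  simp only [Real.norm_of_nonneg (show 0 ≤ 1 + ‖Z ω‖ by positivity)]

lemma integrable_comp_of_hasGaussianLaw (hZ : HasGaussianLaw Z P) {f : E → ℝ}
    (hf : HasTemperateGrowth f) : Integrable (fun ω ↦ f (Z ω)) P := by
  obtain ⟨k, C, hC⟩ := hf.2 0
  refine ((integrable_one_add_norm_pow hZ k).const_mul C).mono'
    (hf.1.continuous.comp_aestronglyMeasurable hZ.aemeasurable.aestronglyMeasurable)
    (.of_forall fun ω ↦ ?_)
  simpa only [norm_iteratedFDeriv_zero] using hC (Z ω)

end TemperateGrowth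

section Stein

lemma hasDerivAt_gaussianPDFReal (m : ℝ) (v : ℝ≥0) (x : ℝ) :
    HasDerivAt (gaussianPDFReal m v) (-((x - m) / v) * gaussianPDFReal m v x) x := by
  have hexp : HasDerivAt (fun x ↦ -(x - m) ^ 2 / (2 * v)) (-((x - m) / v)) x := by
    refine ((((hasDerivAt_id x).sub_const m).pow 2).neg.div_const (2 * (v : ℝ))).congr_deriv ?_
    simp only [id]; ring
  exact (hexp.exp.const_mul _).congr_deriv (by rw [gaussianPDFReal]; ring)

lemma integral_mul_gaussianReal_eq_integral_deriv (v : ℝ≥0) {f : ℝ → ℝ}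
    (hf : HasTemperateGrowth f) :
    ∫ x, x * f x ∂gaussianReal 0 v = v * ∫ x, deriv f x ∂gaussianReal 0 v := by
  rcases eq_or_ne v 0 with rfl | hv
  · simp
  have hint : ∀ {g : ℝ → ℝ}, HasTemperateGrowth g →
      Integrable (fun x ↦ g x * gaussianPDFReal 0 v x) := by
    intro g hg
    have hg := integrable_comp_of_hasGaussianLaw
      (IsGaussian.hasGaussianLaw_id (μ := gaussianReal 0 v)) hg
    rw [gaussianReal_of_var_ne_zero 0 hv, integrable_withDensity_iff_integrable_smul'
      (measurable_gaussianPDF 0 v) (ae_of_all _ fun _ ↦ gaussianPDF_lt_top)] at hg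
    simpa only [toReal_gaussianPDF, smul_eq_mul, id, mul_comm] using hg
  have hscore : (fun x ↦ f x * (-((x - 0) / v) * gaussianPDFReal 0 v x)) =
      fun x ↦ (-(v : ℝ)⁻¹ * (x * f x)) * gaussianPDFReal 0 v x := by
    funext x; ring
  have hparts := integral_mul_deriv_eq_deriv_mul_of_integrable
    (fun x _ ↦ (hf.1.differentiable (by simp) x).hasDerivAt)
    (fun x _ ↦ hasDerivAt_gaussianPDFReal 0 v x)
    (hscore ▸ hint (by fun_prop) :
      Integrable fun x ↦ f x * (-((x - 0) / v) * gaussianPDFReal 0 v x))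
    (hint (hasTemperateGrowth_deriv hf)) (hint hf)
  have hv' : (v : ℝ) ≠ 0 := NNReal.coe_ne_zero.2 hv
  simp only [hscore, mul_assoc, integral_const_mul] at hparts
  simp only [integral_gaussianReal_eq_integral_smul hv, smul_eq_mul,
    mul_comm (gaussianPDFReal 0 v _), mul_assoc]
  rwa [neg_mul, neg_inj, inv_mul_eq_iff_eq_mul₀ hv'] at hparts

variable {Ω E : Type*} {mΩ : MeasurableSpace Ω} {P : Measure Ω} [NormedAddCommGroup E]
  [NormedSpace ℝ E] [MeasurableSpace E] [BorelSpace E] [SecondCountableTopology E]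
  [CompleteSpace E] {U : Ω → ℝ} {Z : Ω → E} {v : E}

lemma indepFun_sub_smul_of_covariance (hUZ : HasGaussianLaw (fun ω ↦ (U ω, Z ω)) P)
    (hv : ∀ L : StrongDual ℝ E, cov[U, L ∘ Z; P] = Var[U; P] * L v) :
    IndepFun U (fun ω ↦ Z ω - U ω • v) P := by
  have := hUZ.isProbabilityMeasure
  refine HasGaussianLaw.indepFun_of_covariance_strongDual
    (hUZ.map_fun ((ContinuousLinearMap.fst ℝ ℝ E).prod
      (ContinuousLinearMap.snd ℝ ℝ E - (ContinuousLinearMap.fst ℝ ℝ E).smulRight v)))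
    fun L₁ L₂ ↦ ?_
  have hL₁ : L₁ ∘ U = L₁ 1 • U := by
    funext ω
    rw [Function.comp_apply, Pi.smul_apply, smul_eq_mul, mul_comm, ← smul_eq_mul, ← map_smul,
      smul_eq_mul, mul_one]
  have hL₂ : L₂ ∘ (fun ω ↦ Z ω - U ω • v) = L₂ ∘ Z - L₂ v • U := by
    funext ω
    simp only [Function.comp_apply, map_sub, map_smul, Pi.sub_apply, Pi.smul_apply, smul_eq_mul,
      mul_comm]
  have hU : MemLp U 2 P := hUZ.fst.memLp_two
  have hZ : MemLp (L₂ ∘ Z) 2 P := (hUZ.snd.map L₂).memLp_two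
  rw [hL₁, hL₂, covariance_smul_left, covariance_sub_right hU hZ (hU.const_smul _),
    covariance_smul_right, hv, covariance_self hU.aemeasurable]
  ring

lemma integral_comp_eq_integral_integral_add_smul (hUZ : HasGaussianLaw (fun ω ↦ (U ω, Z ω)) P)
    (hv : ∀ L : StrongDual ℝ E, cov[U, L ∘ Z; P] = Var[U; P] * L v) {h : ℝ × E → ℝ}
    (hh : HasTemperateGrowth h) :
    ∫ ω, h (U ω, Z ω) ∂P =
      ∫ w, ∫ u, h (u, w + u • v) ∂P.map U ∂P.map fun ω ↦ Z ω - U ω • v := by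
  have := hUZ.isProbabilityMeasure
  have hW : AEMeasurable (fun ω ↦ Z ω - U ω • v) P :=
    hUZ.snd.aemeasurable.sub (hUZ.fst.aemeasurable.smul_const v)
  have hlaw := (indepFun_iff_map_prod_eq_prod_map_map hUZ.fst.aemeasurable hW).1
    (indepFun_sub_smul_of_covariance hUZ hv)
  have hmeas : AEStronglyMeasurable (fun p : ℝ × E ↦ h (p.1, p.2 + p.1 • v))
      (P.map fun ω ↦ (U ω, Z ω - U ω • v)) :=
    (hh.1.continuous.comp (by fun_prop)).aestronglyMeasurable
  have hrecover : ∀ ω, h (U ω, Z ω - U ω • v + U ω • v) = h (U ω, Z ω) := fun ω ↦ by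
    rw [sub_add_cancel]
  have hpair := hUZ.fst.aemeasurable.prodMk hW
  have hint : Integrable (fun p : ℝ × E ↦ h (p.1, p.2 + p.1 • v))
      ((P.map U).prod (P.map fun ω ↦ Z ω - U ω • v)) := by
    rw [← hlaw, integrable_map_measure hmeas hpair]
    exact (integrable_comp_of_hasGaussianLaw hUZ hh).congr (.of_forall fun ω ↦ (hrecover ω).symm)
  have : IsProbabilityMeasure (P.map U) := Measure.isProbabilityMeasure_map hUZ.fst.aemeasurable
  have : IsProbabilityMeasure (P.map fun ω ↦ Z ω - U ω • v) :=
    Measure.isProbabilityMeasure_map hW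
  rw [← integral_prod_symm _ hint, ← hlaw, integral_map hpair hmeas]
  simp only [hrecover]

lemma integral_mul_comp_eq_variance_mul_integral_fderiv
    (hUZ : HasGaussianLaw (fun ω ↦ (U ω, Z ω)) P) (hU : ∫ ω, U ω ∂P = 0)
    (hv : ∀ L : StrongDual ℝ E, cov[U, L ∘ Z; P] = Var[U; P] * L v) {f : E → ℝ}
    (hf : HasTemperateGrowth f) :
    ∫ ω, U ω * f (Z ω) ∂P = Var[U; P] * ∫ ω, fderiv ℝ f (Z ω) v ∂P := by
  have hlaw : P.map U = gaussianReal 0 Var[U; P].toNNReal := by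
    rw [hUZ.fst.map_eq_gaussianReal, hU]
  have hslice : ∀ w : E, HasTemperateGrowth fun u : ℝ ↦ f (w + u • v) := fun w ↦
    hf.comp (by fun_prop)
  have hderiv : ∀ (w : E) (u : ℝ), deriv (fun u : ℝ ↦ f (w + u • v)) u =
      fderiv ℝ f (w + u • v) v := by
    intro w u
    have hline : HasDerivAt (fun u : ℝ ↦ w + u • v) v u := by
      simpa using ((hasDerivAt_id u).smul_const v).const_add w
    exact ((hf.1.differentiable (by simp) _).hasFDerivAt.comp_hasDerivAt u hline).deriv
  calc ∫ ω, U ω * f (Z ω) ∂P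
      = ∫ w, ∫ u, u * f (w + u • v) ∂P.map U ∂P.map fun ω ↦ Z ω - U ω • v :=
        integral_comp_eq_integral_integral_add_smul hUZ hv
          (h := fun p ↦ p.1 * f p.2)
          ((ContinuousLinearMap.fst ℝ ℝ E).hasTemperateGrowth.mul
            (hf.comp (ContinuousLinearMap.snd ℝ ℝ E).hasTemperateGrowth))
    _ = Var[U; P] * ∫ w, ∫ u, fderiv ℝ f (w + u • v) v ∂P.map U ∂P.map fun ω ↦ Z ω - U ω • v := by
        simp only [hlaw, integral_mul_gaussianReal_eq_integral_deriv _ (hslice _), hderiv,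
          integral_const_mul, Real.coe_toNNReal _ (variance_nonneg U P)]
    _ = Var[U; P] * ∫ ω, fderiv ℝ f (Z ω) v ∂P := by
        rw [integral_comp_eq_integral_integral_add_smul hUZ hv
          (h := fun p ↦ fderiv ℝ f p.2 v)
          ((hasTemperateGrowth_fderiv_apply hf v).comp
            (ContinuousLinearMap.snd ℝ ℝ E).hasTemperateGrowth)]

theorem integral_mul_comp_eq_integral_fderiv_covariance
    (hUZ : HasGaussianLaw (fun ω ↦ (U ω, Z ω)) P) (hU : ∫ ω, U ω ∂P = 0)
    (hv : ∀ L : StrongDual ℝ E, cov[U, L ∘ Z; P] = L v) {f : E → ℝ} (hf : HasTemperateGrowth f) :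
    ∫ ω, U ω * f (Z ω) ∂P = ∫ ω, fderiv ℝ f (Z ω) v ∂P := by
  have := hUZ.isProbabilityMeasure
  by_cases hvar : Var[U; P] = 0
  · have hU0 : U =ᵐ[P] 0 := by
      filter_upwards [ae_eq_integral_of_variance_eq_zero hUZ.fst.memLp_two hvar] with ω hω
      rw [hω, hU, Pi.zero_apply]
    have hv0 : v = 0 := by
      refine (SeparatingDual.eq_zero_iff_forall_dual_eq_zero (R := ℝ) v).2 fun L ↦ ?_
      rw [← hv L, covariance, hU]
      refine integral_eq_zero_of_ae ?_
      filter_upwards [hU0] with ω hω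
      simp only [hω, Pi.zero_apply, sub_zero, zero_mul]
    simp only [hv0, map_zero, integral_zero]
    refine integral_eq_zero_of_ae ?_
    filter_upwards [hU0] with ω hω
    simp only [hω, Pi.zero_apply, zero_mul]
  · have hscaled : ∀ L : StrongDual ℝ E,
        cov[U, L ∘ Z; P] = Var[U; P] * L (Var[U; P]⁻¹ • v) := fun L ↦ by
      rw [hv, map_smul, smul_eq_mul, mul_inv_cancel_left₀ hvar]
    rw [integral_mul_comp_eq_variance_mul_integral_fderiv hUZ hU hscaled hf]
    simp only [map_smul, smul_eq_mul, integral_const_mul, mul_inv_cancel_left₀ hvar]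

end Stein

section Covariance

lemma covariance_comp_measurePreserving {Ω Ω' : Type*} {mΩ : MeasurableSpace Ω}
    {mΩ' : MeasurableSpace Ω'} {μ : Measure Ω} {ν : Measure Ω'} {T : Ω → Ω'} {X Y : Ω' → ℝ}
    (hT : MeasurePreserving T μ ν) (hX : AEStronglyMeasurable X ν)
    (hY : AEStronglyMeasurable Y ν) :
    cov[fun ω ↦ X (T ω), fun ω ↦ Y (T ω); μ] = cov[X, Y; ν] := by
  rw [← hT.map_eq] at hX hY ⊢
  exact (covariance_map_fun hX hY hT.aemeasurable).symm

lemma covariance_strongDual_prod {E F : Type*} [NormedAddCommGroup E] [NormedSpace ℝ E]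
    [MeasurableSpace E] [NormedAddCommGroup F] [NormedSpace ℝ F] [MeasurableSpace F]
    {μ : Measure E} {ν : Measure F} [IsProbabilityMeasure μ] [IsProbabilityMeasure ν]
    (hμ : MemLp id 2 μ) (hν : MemLp id 2 ν) (L M : StrongDual ℝ (E × F)) :
    cov[L, M; μ.prod ν] =
      cov[L ∘L .inl ℝ E F, M ∘L .inl ℝ E F; μ] + cov[L ∘L .inr ℝ E F, M ∘L .inr ℝ E F; ν] := by
  have hsplit : ∀ K : StrongDual ℝ (E × F),
      ⇑K = (fun p ↦ (K ∘L .inl ℝ E F) p.1) + fun p ↦ (K ∘L .inr ℝ E F) p.2 := fun K ↦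
    funext fun p ↦ (K.comp_inl_add_comp_inr p).symm
  have hLμ : ∀ K : StrongDual ℝ E, MemLp K 2 μ := fun K ↦ K.comp_memLp' hμ
  have hLν : ∀ K : StrongDual ℝ F, MemLp K 2 ν := fun K ↦ K.comp_memLp' hν
  have hfst : ∀ K : StrongDual ℝ E, MemLp (fun p : E × F ↦ K p.1) 2 (μ.prod ν) := fun K ↦
    (hLμ K).comp_fst ν
  have hsnd : ∀ K : StrongDual ℝ F, MemLp (fun p : E × F ↦ K p.2) 2 (μ.prod ν) := fun K ↦
    (hLν K).comp_snd μ
  have hcross : ∀ (K : StrongDual ℝ E) (K' : StrongDual ℝ F),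
      cov[fun p ↦ K p.1, fun p ↦ K' p.2; μ.prod ν] = 0 := fun K K' ↦
    covariance_fst_snd_prod (hLμ K) (hLν K')
  have hcross' : ∀ (K : StrongDual ℝ F) (K' : StrongDual ℝ E),
      cov[fun p ↦ K p.2, fun p ↦ K' p.1; μ.prod ν] = 0 := fun K K' ↦
    (covariance_comm _ _).trans (hcross K' K)
  rw [hsplit L, hsplit M, covariance_add_left (hfst _) (hsnd _) ((hfst _).add (hsnd _)),
    covariance_add_right (hfst _) (hfst _) (hsnd _),
    covariance_add_right (hsnd _) (hfst _) (hsnd _), hcross, hcross', add_zero, zero_add,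
    covariance_comp_measurePreserving measurePreserving_fst
      (hLμ _).aestronglyMeasurable (hLμ _).aestronglyMeasurable,
    covariance_comp_measurePreserving measurePreserving_snd
      (hLν _).aestronglyMeasurable (hLν _).aestronglyMeasurable]

lemma covariance_strongDual_pi {ι : Type*} [Fintype ι] [DecidableEq ι] {E : ι → Type*}
    [∀ i, NormedAddCommGroup (E i)] [∀ i, NormedSpace ℝ (E i)] [∀ i, MeasurableSpace (E i)]
    {μ : ∀ i, Measure (E i)} [∀ i, IsProbabilityMeasure (μ i)] (hμ : ∀ i, MemLp id 2 (μ i))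
    (L M : StrongDual ℝ (∀ i, E i)) :
    cov[L, M; Measure.pi μ] = ∑ i, cov[L ∘L .single ℝ E i, M ∘L .single ℝ E i; μ i] := by
  have hsplit : ∀ K : StrongDual ℝ (∀ i, E i), ⇑K = fun x ↦ ∑ i, (K ∘L .single ℝ E i) (x i) :=
    fun K ↦ funext fun x ↦ (ContinuousLinearMap.sum_comp_single ℝ E K x).symm
  have hLμ : ∀ i (K : StrongDual ℝ (E i)), MemLp K 2 (μ i) := fun i K ↦ K.comp_memLp' (hμ i)
  have hLpi : ∀ i (K : StrongDual ℝ (E i)), MemLp (fun x : ∀ i, E i ↦ K (x i)) 2 (Measure.pi μ) :=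
    fun i K ↦ (hLμ i K).comp_measurePreserving (measurePreserving_eval μ i)
  have hindep := iIndepFun_pi (μ := μ)
    (X := fun i x ↦ ((L ∘L .single ℝ E i) x, (M ∘L .single ℝ E i) x))
    fun i ↦ (hLμ i _).aemeasurable.prodMk (hLμ i _).aemeasurable
  rw [hsplit L, hsplit M, covariance_fun_sum_fun_sum (fun i ↦ hLpi i _) fun i ↦ hLpi i _]
  refine Finset.sum_congr rfl fun i _ ↦ (Finset.sum_eq_single_of_mem i (Finset.mem_univ i) ?_).trans
    (covariance_comp_measurePreserving (measurePreserving_eval μ i)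
      (hLμ i _).aestronglyMeasurable (hLμ i _).aestronglyMeasurable)
  exact fun j _ hji ↦ IndepFun.covariance_eq_zero
    ((hindep.indepFun hji.symm).comp measurable_fst measurable_snd) (hLpi i _) (hLpi j _)

lemma covariance_strongDual_gaussianReal (m : ℝ) (v : ℝ≥0) (L M : StrongDual ℝ ℝ) :
    cov[L, M; gaussianReal m v] = v * (L 1 * M 1) := by
  have hlin : ∀ K : StrongDual ℝ ℝ, ⇑K = K 1 • id := fun K ↦ by
    funext x
    rw [Pi.smul_apply, id, smul_eq_mul, mul_comm, ← smul_eq_mul, ← map_smul, smul_eq_mul, mul_one]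
  rw [hlin L, hlin M, covariance_smul_left, covariance_smul_right, covariance_self aemeasurable_id,
    variance_id_gaussianReal]
  simp only [Pi.smul_apply, id, smul_eq_mul]
  ring

lemma apply_covariance_eval {ι : Type*} [Fintype ι] {μ : Measure (ι → ℝ)} [IsFiniteMeasure μ]
    (hμ : MemLp id 2 μ) (L M : StrongDual ℝ (ι → ℝ)) :
    M (fun q ↦ cov[L, fun x ↦ x q; μ]) = cov[L, M; μ] := by
  classical
  obtain ⟨c, hM⟩ : ∃ c : ι → ℝ, ⇑M = fun y ↦ ∑ q, y q * c q :=
    ⟨_, funext fun y ↦ M.toLinearMap.pi_apply_eq_sum_univ y⟩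
  have hcoord : ∀ q, MemLp (fun x : ι → ℝ ↦ x q) 2 μ := fun q ↦
    (ContinuousLinearMap.proj (R := ℝ) q : (ι → ℝ) →L[ℝ] ℝ).comp_memLp' hμ
  have hL : MemLp L 2 μ := L.comp_memLp' hμ
  rw [hM, covariance_fun_sum_right (fun q ↦ (hcoord q).mul_const _) hL]
  simp only [covariance_mul_const_right]

end Covariance

section Interpolation

variable {E : Type*} [NormedAddCommGroup E] [NormedSpace ℝ E]

/-- The point `cos θ • x + sin θ • y` of the quarter circle joining `x` (at `θ = 0`) to `y`
(at `θ = π / 2`), as a linear function of `(x, y)`: for independent Gaussian `x` and `y` this is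
the path along which Gaussian expectations are compared. -/
noncomputable def rotation (θ : ℝ) : E × E →L[ℝ] E :=
  Real.cos θ • ContinuousLinearMap.fst ℝ E E + Real.sin θ • ContinuousLinearMap.snd ℝ E E

lemma rotation_apply (θ : ℝ) (z : E × E) :
    rotation θ z = Real.cos θ • z.1 + Real.sin θ • z.2 := rfl

lemma hasDerivAt_rotation (z : E × E) (θ : ℝ) :
    HasDerivAt (fun θ ↦ rotation θ z) (rotation (θ + Real.pi / 2) z) θ := by
  simpa only [rotation_apply, Real.cos_add_pi_div_two, Real.sin_add_pi_div_two] using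
    ((Real.hasDerivAt_cos θ).smul_const z.1).fun_add ((Real.hasDerivAt_sin θ).smul_const z.2)

lemma norm_rotation_le (θ : ℝ) (z : E × E) : ‖rotation θ z‖ ≤ 2 * ‖z‖ := by
  calc ‖rotation θ z‖ ≤ ‖Real.cos θ • z.1‖ + ‖Real.sin θ • z.2‖ := norm_add_le _ _
    _ ≤ 1 * ‖z‖ + 1 * ‖z‖ := by
      simp only [norm_smul, Real.norm_eq_abs]
      gcongr
      exacts [Real.abs_cos_le_one θ, norm_fst_le z, Real.abs_sin_le_one θ, norm_snd_le z]
    _ = 2 * ‖z‖ := by ring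

variable [MeasurableSpace E] [BorelSpace E] [SecondCountableTopology E] [CompleteSpace E]
  {μ ν : Measure E} [IsGaussian μ] [IsGaussian ν]

lemma covariance_rotation (θ θ' : ℝ) (L M : StrongDual ℝ E) :
    cov[L ∘L rotation θ, M ∘L rotation θ'; μ.prod ν] =
      Real.cos θ * Real.cos θ' * cov[L, M; μ] + Real.sin θ * Real.sin θ' * cov[L, M; ν] := by
  have hinl : ∀ (θ : ℝ) (K : StrongDual ℝ E),
      ⇑((K ∘L rotation θ) ∘L .inl ℝ E E) = Real.cos θ • ⇑K := fun θ K ↦ by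
    funext x
    simp [rotation_apply]
  have hinr : ∀ (θ : ℝ) (K : StrongDual ℝ E),
      ⇑((K ∘L rotation θ) ∘L .inr ℝ E E) = Real.sin θ • ⇑K := fun θ K ↦ by
    funext x
    simp [rotation_apply]
  rw [covariance_strongDual_prod (IsGaussian.memLp_id μ 2 ENNReal.ofNat_ne_top)
    (IsGaussian.memLp_id ν 2 ENNReal.ofNat_ne_top)]
  simp only [hinl, hinr, covariance_smul_left, covariance_smul_right]
  ring

lemma integral_rotation_eq_zero (hμ : ∫ x, x ∂μ = 0) (hν : ∫ x, x ∂ν = 0) (θ : ℝ)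
    (L : StrongDual ℝ E) : ∫ z, L (rotation θ z) ∂μ.prod ν = 0 := by
  have hint : ∀ {ρ : Measure E} [IsGaussian ρ], Integrable L ρ := IsGaussian.integrable_dual _ L
  have hfst : ∫ z, L z.1 ∂μ.prod ν = 0 := by
    rw [integral_fun_fst, L.integral_comp_id_comm IsGaussian.integrable_id, hμ, map_zero, smul_zero]
  have hsnd : ∫ z, L z.2 ∂μ.prod ν = 0 := by
    rw [integral_fun_snd, L.integral_comp_id_comm IsGaussian.integrable_id, hν, map_zero, smul_zero]
  simp only [rotation_apply, map_add, map_smul, smul_eq_mul]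
  rw [integral_add ((hint.comp_fst ν).const_mul _) ((hint.comp_snd μ).const_mul _),
    integral_const_mul, integral_const_mul, hfst, hsnd, mul_zero, mul_zero, add_zero]

lemma hasDerivAt_integral_rotation {f : E → ℝ} (hf : HasTemperateGrowth f) (θ : ℝ) :
    HasDerivAt (fun θ ↦ ∫ z, f (rotation θ z) ∂μ.prod ν)
      (∫ z, fderiv ℝ f (rotation θ z) (rotation (θ + Real.pi / 2) z) ∂μ.prod ν) θ := by
  obtain ⟨k, C, hC⟩ := hf.2 1
  have hC0 : 0 ≤ C := by simpa using (norm_nonneg _).trans (hC 0)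
  have hdiff := hf.1.differentiable (by simp)
  have hgauss := IsGaussian.hasGaussianLaw_id (μ := μ.prod ν)
  have hbound : ∀ θ z, ‖fderiv ℝ f (rotation θ z) (rotation (θ + Real.pi / 2) z)‖ ≤
      C * 2 ^ (k + 1) * (1 + ‖z‖) ^ (k + 1) := by
    intro θ z
    calc ‖fderiv ℝ f (rotation θ z) (rotation (θ + Real.pi / 2) z)‖
        ≤ ‖fderiv ℝ f (rotation θ z)‖ * ‖rotation (θ + Real.pi / 2) z‖ :=
          ContinuousLinearMap.le_opNorm _ _
      _ ≤ C * (1 + 2 * ‖z‖) ^ k * (2 * ‖z‖) := by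
          gcongr
          · rw [← norm_iteratedFDeriv_one]
            refine (hC _).trans ?_
            gcongr
            exact norm_rotation_le θ z
          · exact norm_rotation_le _ z
      _ ≤ C * (2 * (1 + ‖z‖)) ^ k * (2 * (1 + ‖z‖)) := by gcongr <;> linarith
      _ = C * 2 ^ (k + 1) * (1 + ‖z‖) ^ (k + 1) := by rw [mul_pow]; ring
  refine (hasDerivAt_integral_of_dominated_loc_of_deriv_le univ_mem (.of_forall fun θ ↦ ?_) ?_ ?_
    (.of_forall fun z θ _ ↦ hbound θ z)
    ((integrable_one_add_norm_pow hgauss (k + 1)).const_mul _)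
    (.of_forall fun z θ _ ↦ (hdiff _).hasFDerivAt.comp_hasDerivAt θ (hasDerivAt_rotation z θ))).2
  · exact (hdiff.continuous.comp (rotation θ).continuous).aestronglyMeasurable
  · exact integrable_comp_of_hasGaussianLaw (hgauss.map (rotation θ)) hf
  · exact ((hf.1.continuous_fderiv (by simp)).comp (rotation θ).continuous).clm_apply
      (rotation (θ + Real.pi / 2)).continuous |>.aestronglyMeasurable

end Interpolation

section Comparison

variable {ι : Type*} [Fintype ι] {μ ν : Measure (ι → ℝ)}
  [IsGaussian μ] [IsGaussian ν]

lemma integral_rotation_mul_comp_rotation (hμ : ∫ x, x ∂μ = 0) (hν : ∫ x, x ∂ν = 0)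
    {f : (ι → ℝ) → ℝ} (hf : HasTemperateGrowth f) (θ : ℝ) (p : ι) :
    ∫ z : (ι → ℝ) × (ι → ℝ), rotation (θ + Real.pi / 2) z p * f (rotation θ z) ∂μ.prod ν =
      Real.sin θ * Real.cos θ * ∫ z, fderiv ℝ f (rotation θ z)
        (fun q ↦ cov[fun x ↦ x p, fun x ↦ x q; ν] - cov[fun x ↦ x p, fun x ↦ x q; μ])
        ∂μ.prod ν := by
  let pr : StrongDual ℝ (ι → ℝ) := .proj p
  have hgauss := IsGaussian.hasGaussianLaw_id (μ := μ.prod ν)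
  have hcov : ∀ L : StrongDual ℝ (ι → ℝ),
      cov[pr ∘L rotation (θ + Real.pi / 2), L ∘L rotation θ; μ.prod ν] =
        L ((Real.sin θ * Real.cos θ) •
          ((fun q ↦ cov[pr, fun x ↦ x q; ν]) - fun q ↦ cov[pr, fun x ↦ x q; μ])) := fun L ↦ by
    rw [covariance_rotation, map_smul, map_sub,
      apply_covariance_eval (IsGaussian.memLp_id ν 2 ENNReal.ofNat_ne_top),
      apply_covariance_eval (IsGaussian.memLp_id μ 2 ENNReal.ofNat_ne_top),
      Real.cos_add_pi_div_two, Real.sin_add_pi_div_two, smul_eq_mul]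
    ring
  have hstein := integral_mul_comp_eq_integral_fderiv_covariance
    (hgauss.map ((pr ∘L rotation (θ + Real.pi / 2)).prod (rotation θ)))
    (integral_rotation_eq_zero hμ hν _ pr) hcov hf
  simp only [map_smul, smul_eq_mul, integral_const_mul] at hstein
  exact hstein

lemma integral_fderiv_rotation [DecidableEq ι] (hμ : ∫ x, x ∂μ = 0) (hν : ∫ x, x ∂ν = 0)
    {f : (ι → ℝ) → ℝ} (hf : HasTemperateGrowth f) (θ : ℝ) :
    ∫ z, fderiv ℝ f (rotation θ z) (rotation (θ + Real.pi / 2) z) ∂μ.prod ν =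
      Real.sin θ * Real.cos θ * ∫ z, ∑ p, fderiv ℝ (fun y ↦ fderiv ℝ f y (Pi.single p 1))
        (rotation θ z) (fun q ↦ cov[fun x ↦ x p, fun x ↦ x q; ν] - cov[fun x ↦ x p, fun x ↦ x q; μ])
        ∂μ.prod ν := by
  have hgauss := IsGaussian.hasGaussianLaw_id (μ := μ.prod ν)
  have hpartial : ∀ p, HasTemperateGrowth fun y ↦ fderiv ℝ f y (Pi.single p 1) := fun p ↦
    hasTemperateGrowth_fderiv_apply hf _
  have hexpand : ∀ x w, fderiv ℝ f x w = ∑ p, w p * fderiv ℝ f x (Pi.single p 1) := fun x w ↦ by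
    conv_lhs => rw [pi_eq_sum_univ' w, map_sum]
    simp only [map_smul, smul_eq_mul]
  have hcoord : ∀ p, HasTemperateGrowth fun w : (ι → ℝ) × (ι → ℝ) ↦ w.1 p := fun p ↦
    (ContinuousLinearMap.proj (R := ℝ) (φ := fun _ : ι ↦ ℝ) p ∘L
      ContinuousLinearMap.fst ℝ (ι → ℝ) (ι → ℝ)).hasTemperateGrowth
  have hintegrable : ∀ p, Integrable (fun z : (ι → ℝ) × (ι → ℝ) ↦
      rotation (θ + Real.pi / 2) z p * fderiv ℝ f (rotation θ z) (Pi.single p 1)) (μ.prod ν) :=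
    fun p ↦ integrable_comp_of_hasGaussianLaw
      (f := fun w : (ι → ℝ) × (ι → ℝ) ↦ w.1 p * fderiv ℝ f w.2 (Pi.single p 1))
      (hgauss.map ((rotation (θ + Real.pi / 2)).prod (rotation θ)))
      ((hcoord p).mul ((hpartial p).comp
        (ContinuousLinearMap.snd ℝ (ι → ℝ) (ι → ℝ)).hasTemperateGrowth))
  have hintegrable' : ∀ p v, Integrable (fun z ↦ fderiv ℝ
      (fun y ↦ fderiv ℝ f y (Pi.single p 1)) (rotation θ z) v) (μ.prod ν) := fun p v ↦
    integrable_comp_of_hasGaussianLaw (hgauss.map (rotation θ))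
      (hasTemperateGrowth_fderiv_apply (hpartial p) v)
  calc ∫ z, fderiv ℝ f (rotation θ z) (rotation (θ + Real.pi / 2) z) ∂μ.prod ν
      = ∑ p, ∫ z, rotation (θ + Real.pi / 2) z p *
          fderiv ℝ f (rotation θ z) (Pi.single p 1) ∂μ.prod ν := by
        rw [← integral_finsetSum _ fun p _ ↦ hintegrable p]
        exact integral_congr_ae (.of_forall fun z ↦ hexpand _ _)
    _ = Real.sin θ * Real.cos θ * ∑ p, ∫ z, fderiv ℝ (fun y ↦ fderiv ℝ f y (Pi.single p 1))
          (rotation θ z)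
          (fun q ↦ cov[fun x ↦ x p, fun x ↦ x q; ν] - cov[fun x ↦ x p, fun x ↦ x q; μ])
          ∂μ.prod ν := by
        rw [Finset.mul_sum]
        exact Finset.sum_congr rfl fun p _ ↦
          integral_rotation_mul_comp_rotation hμ hν (hpartial p) θ p
    _ = _ := by rw [integral_finsetSum _ fun p _ ↦ hintegrable' p _]

theorem integral_le_integral_of_sum_fderiv_covariance_nonpos [DecidableEq ι]
    (hμ : ∫ x, x ∂μ = 0) (hν : ∫ x, x ∂ν = 0) {f : (ι → ℝ) → ℝ} (hf : HasTemperateGrowth f)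
    (hle : ∀ x, ∑ p, fderiv ℝ (fun y ↦ fderiv ℝ f y (Pi.single p 1)) x
      (fun q ↦ cov[fun x ↦ x p, fun x ↦ x q; ν] - cov[fun x ↦ x p, fun x ↦ x q; μ]) ≤ 0) :
    ∫ x, f x ∂ν ≤ ∫ x, f x ∂μ := by
  have hderiv := hasDerivAt_integral_rotation (μ := μ) (ν := ν) hf
  have hanti : AntitoneOn (fun θ ↦ ∫ z, f (rotation θ z) ∂μ.prod ν) (Icc 0 (Real.pi / 2)) := by
    refine antitoneOn_of_deriv_nonpos (convex_Icc _ _)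
      (fun θ _ ↦ (hderiv θ).continuousAt.continuousWithinAt)
      (fun θ _ ↦ (hderiv θ).differentiableAt.differentiableWithinAt) fun θ hθ ↦ ?_
    rw [interior_Icc] at hθ
    rw [(hderiv θ).deriv, integral_fderiv_rotation hμ hν hf]
    exact mul_nonpos_of_nonneg_of_nonpos
      (mul_nonneg (Real.sin_nonneg_of_nonneg_of_le_pi hθ.1.le (by linarith [hθ.2, Real.pi_pos]))
        (Real.cos_nonneg_of_neg_pi_div_two_le_of_le (by linarith [hθ.1, Real.pi_pos]) hθ.2.le))
      (integral_nonpos fun z ↦ hle _)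
  have hends := hanti (left_mem_Icc.2 Real.pi_div_two_pos.le)
    (right_mem_Icc.2 Real.pi_div_two_pos.le) Real.pi_div_two_pos.le
  simp only [rotation_apply, Real.cos_zero, Real.sin_zero, Real.cos_pi_div_two,
    Real.sin_pi_div_two, one_smul, zero_smul, add_zero, zero_add] at hends
  rw [integral_fun_fst, integral_fun_snd] at hends
  simpa using hends

end Comparison

section MinMaxProduct

variable {I J : Type*} [Fintype I] [Fintype J]

/-- The function `x ↦ ∏ᵢ (1 - ∏ⱼ u (i, j) (x (i, j)))`. When `u p` is the indicator function of
`(-∞, lam p)`, this is the indicator function of the event `∀ i, ∃ j, lam (i, j) ≤ x (i, j)`;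
Gordon's inequality is first proved for smooth `u`. -/
def minMaxProduct (u : I × J → ℝ → ℝ) (x : I × J → ℝ) : ℝ :=
  ∏ i, (1 - ∏ j, u (i, j) (x (i, j)))

variable {u : I × J → ℝ → ℝ}

lemma hasTemperateGrowth_minMaxProduct (hu : ∀ p, HasTemperateGrowth (u p)) :
    HasTemperateGrowth (minMaxProduct u) := by
  have hcoord : ∀ p, HasTemperateGrowth fun x : I × J → ℝ ↦ u p (x p) := fun p ↦
    (hu p).comp (ContinuousLinearMap.proj (R := ℝ) (φ := fun _ : I × J ↦ ℝ) p).hasTemperateGrowth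
  exact hasTemperateGrowth_finsetProd fun i _ ↦
    (HasTemperateGrowth.const 1).sub (hasTemperateGrowth_finsetProd fun j _ ↦ hcoord (i, j))

lemma minMaxProduct_mem_Icc (hu : ∀ p s, u p s ∈ Icc (0 : ℝ) 1) (x : I × J → ℝ) :
    minMaxProduct u x ∈ Icc (0 : ℝ) 1 := by
  have hrow : ∀ i, ∏ j, u (i, j) (x (i, j)) ∈ Icc (0 : ℝ) 1 := fun i ↦
    ⟨Finset.prod_nonneg fun j _ ↦ (hu _ _).1,
      Finset.prod_le_one (fun j _ ↦ (hu _ _).1) fun j _ ↦ (hu _ _).2⟩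
  exact ⟨Finset.prod_nonneg fun i _ ↦ sub_nonneg.2 (hrow i).2,
    Finset.prod_le_one (fun i _ ↦ sub_nonneg.2 (hrow i).2) fun i _ ↦ sub_le_self 1 (hrow i).1⟩

section Derivatives

variable [DecidableEq I] [DecidableEq J]

lemma minMaxProduct_update (x : I × J → ℝ) (i : I) (j : J) (s : ℝ) :
    minMaxProduct u (update x (i, j) s) =
      (1 - u (i, j) s * ∏ k ∈ Finset.univ.erase j, u (i, k) (x (i, k))) *
        ∏ l ∈ Finset.univ.erase i, (1 - ∏ k, u (l, k) (x (l, k))) := by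
  rw [minMaxProduct, ← Finset.mul_prod_erase _ _ (Finset.mem_univ i),
    ← Finset.mul_prod_erase _ _ (Finset.mem_univ j), update_self]
  congr 1
  · congr 2
    refine Finset.prod_congr rfl fun k hk ↦ ?_
    rw [update_of_ne (by simp [Finset.ne_of_mem_erase hk])]
  · refine Finset.prod_congr rfl fun l hl ↦ ?_
    congr 1
    refine Finset.prod_congr rfl fun k _ ↦ ?_
    rw [update_of_ne (by simp [Finset.ne_of_mem_erase hl])]

lemma fderiv_minMaxProduct_single (hu : ∀ p, HasTemperateGrowth (u p)) (x : I × J → ℝ) (i : I)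
    (j : J) :
    fderiv ℝ (minMaxProduct u) x (Pi.single (i, j) 1) =
      -deriv (u (i, j)) (x (i, j)) * (∏ k ∈ Finset.univ.erase j, u (i, k) (x (i, k))) *
        ∏ l ∈ Finset.univ.erase i, (1 - ∏ k, u (l, k) (x (l, k))) := by
  have hdiff : Differentiable ℝ (minMaxProduct u) :=
    (hasTemperateGrowth_minMaxProduct hu).1.differentiable (by simp)
  have hchain : HasDerivAt (fun s ↦ minMaxProduct u (update x (i, j) s))
      (fderiv ℝ (minMaxProduct u) x (Pi.single (i, j) 1)) (x (i, j)) := by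
    have hx := (hdiff (update x (i, j) (x (i, j)))).hasFDerivAt.comp_hasDerivAt (x (i, j))
      (hasDerivAt_update x (i, j) (x (i, j)))
    rwa [update_eq_self] at hx
  have hexplicit := (((((hu (i, j)).1.differentiable (by simp) (x (i, j))).hasDerivAt.mul_const
    (∏ k ∈ Finset.univ.erase j, u (i, k) (x (i, k)))).const_sub 1).mul_const
    (∏ l ∈ Finset.univ.erase i, (1 - ∏ k, u (l, k) (x (l, k)))))
  simp only [minMaxProduct_update] at hchain
  rw [hchain.unique hexplicit]
  ring

lemma antitone_fderiv_minMaxProduct_single (hu : ∀ p, HasTemperateGrowth (u p))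
    (hanti : ∀ p, Antitone (u p)) (hmem : ∀ p s, u p s ∈ Icc (0 : ℝ) 1) (x : I × J → ℝ)
    {i : I} {j : J} {w : I × J → ℝ} (hij : w (i, j) = 0) (hrow : ∀ k, 0 ≤ w (i, k))
    (hother : ∀ l, l ≠ i → ∀ k, w (l, k) ≤ 0) :
    Antitone fun t : ℝ ↦ fderiv ℝ (minMaxProduct u) (x + t • w) (Pi.single (i, j) 1) := by
  intro s t hst
  have hsame : ∀ k, u (i, k) (x (i, k) + t * w (i, k)) ≤ u (i, k) (x (i, k) + s * w (i, k)) :=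
    fun k ↦ hanti _ (add_le_add_right (mul_le_mul_of_nonneg_right hst (hrow k)) _)
  have hne : ∀ l ∈ Finset.univ.erase i, ∀ k,
      u (l, k) (x (l, k) + s * w (l, k)) ≤ u (l, k) (x (l, k) + t * w (l, k)) := fun l hl k ↦
    hanti _ (add_le_add_right
      (mul_le_mul_of_nonpos_right hst (hother l (Finset.ne_of_mem_erase hl) k)) _)
  have hfactor : ∀ (l : I) (r : ℝ), 0 ≤ 1 - ∏ k, u (l, k) (x (l, k) + r * w (l, k)) := fun l r ↦
    sub_nonneg.2 (Finset.prod_le_one (fun k _ ↦ (hmem _ _).1) fun k _ ↦ (hmem _ _).2)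
  simp only [fderiv_minMaxProduct_single hu, Pi.add_apply, Pi.smul_apply, smul_eq_mul, hij,
    mul_zero, add_zero]
  refine mul_le_mul (mul_le_mul_of_nonneg_left
    (Finset.prod_le_prod (fun k _ ↦ (hmem _ _).1) fun k _ ↦ hsame k) ?_)
    (Finset.prod_le_prod (fun l _ ↦ hfactor l t) fun l hl ↦ ?_)
    (Finset.prod_nonneg fun l _ ↦ hfactor l t) (mul_nonneg ?_ ?_)
  · exact neg_nonneg.2 (hanti _).deriv_nonpos
  · exact sub_le_sub_left (Finset.prod_le_prod (fun k _ ↦ (hmem _ _).1) fun k _ ↦ hne l hl k) 1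
  · exact neg_nonneg.2 (hanti _).deriv_nonpos
  · exact Finset.prod_nonneg fun k _ ↦ (hmem _ _).1

lemma fderiv_fderiv_minMaxProduct_nonpos (hu : ∀ p, HasTemperateGrowth (u p))
    (hanti : ∀ p, Antitone (u p)) (hmem : ∀ p s, u p s ∈ Icc (0 : ℝ) 1) (x : I × J → ℝ)
    {i : I} {j : J} {w : I × J → ℝ} (hij : w (i, j) = 0) (hrow : ∀ k, 0 ≤ w (i, k))
    (hother : ∀ l, l ≠ i → ∀ k, w (l, k) ≤ 0) :
    fderiv ℝ (fun y ↦ fderiv ℝ (minMaxProduct u) y (Pi.single (i, j) 1)) x w ≤ 0 := by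
  have hpartial := hasTemperateGrowth_fderiv_apply (hasTemperateGrowth_minMaxProduct hu)
    (Pi.single (i, j) 1)
  rw [← (hpartial.1.differentiable (by simp) x).lineDeriv_eq_fderiv]
  exact (antitone_fderiv_minMaxProduct_single hu hanti hmem x hij hrow hother).deriv_nonpos

end Derivatives

variable {μ ν : Measure (I × J → ℝ)} [IsGaussian μ] [IsGaussian ν]

lemma integral_minMaxProduct_le_integral_minMaxProduct (hμ : ∫ x, x ∂μ = 0) (hν : ∫ x, x ∂ν = 0)
    (hvar : ∀ p, Var[fun x ↦ x p; μ] = Var[fun x ↦ x p; ν])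
    (hrow : ∀ i j k, cov[fun x ↦ x (i, j), fun x ↦ x (i, k); μ] ≤
      cov[fun x ↦ x (i, j), fun x ↦ x (i, k); ν])
    (hother : ∀ i l, i ≠ l → ∀ j k, cov[fun x ↦ x (i, j), fun x ↦ x (l, k); ν] ≤
      cov[fun x ↦ x (i, j), fun x ↦ x (l, k); μ])
    (hu : ∀ p, HasTemperateGrowth (u p)) (hanti : ∀ p, Antitone (u p))
    (hmem : ∀ p s, u p s ∈ Icc (0 : ℝ) 1) :
    ∫ x, minMaxProduct u x ∂ν ≤ ∫ x, minMaxProduct u x ∂μ := by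
  classical
  refine integral_le_integral_of_sum_fderiv_covariance_nonpos hμ hν
    (hasTemperateGrowth_minMaxProduct hu) fun x ↦ Finset.sum_nonpos fun ⟨i, j⟩ _ ↦
    fderiv_fderiv_minMaxProduct_nonpos hu hanti hmem x ?_ (fun k ↦ sub_nonneg.2 (hrow i j k))
      fun l hl k ↦ sub_nonpos.2 (hother i l hl.symm j k)
  have hmeas : Measurable fun x : I × J → ℝ ↦ x (i, j) := measurable_pi_apply _
  rw [covariance_self hmeas.aemeasurable, covariance_self hmeas.aemeasurable, hvar, sub_self]

end MinMaxProduct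

section SoftThreshold

/-- A smooth antitone approximation, sharper as `k` grows, of the indicator function of `(-∞, c)`.
It vanishes on all of `[c, ∞)`, so that the approximation becomes exact at every point. -/
noncomputable def softThreshold (k : ℕ) (c s : ℝ) : ℝ :=
  1 - Real.smoothTransition (k * (s - c) + 1)

lemma hasTemperateGrowth_softThreshold (k : ℕ) (c : ℝ) : HasTemperateGrowth (softThreshold k c) :=
  (HasTemperateGrowth.const 1).sub
    (hasTemperateGrowth_smoothTransition.comp (by fun_prop : HasTemperateGrowth fun s : ℝ ↦
      k * (s - c) + 1))

lemma antitone_softThreshold (k : ℕ) (c : ℝ) : Antitone (softThreshold k c) := fun s t hst ↦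
  sub_le_sub_left (Real.smoothTransition.monotone (by gcongr)) 1

lemma softThreshold_mem_Icc (k : ℕ) (c s : ℝ) : softThreshold k c s ∈ Icc (0 : ℝ) 1 :=
  ⟨sub_nonneg.2 (Real.smoothTransition.le_one _), sub_le_self 1 (Real.smoothTransition.nonneg _)⟩

lemma eventually_softThreshold_eq (c s : ℝ) :
    ∀ᶠ k : ℕ in atTop, softThreshold k c s = if c ≤ s then 0 else 1 := by
  split_ifs with h
  · refine .of_forall fun k ↦ ?_
    have : 0 ≤ (k : ℝ) * (s - c) := mul_nonneg k.cast_nonneg (sub_nonneg.2 h)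
    rw [softThreshold, Real.smoothTransition.one_of_one_le (by linarith), sub_self]
  · have hlim : Tendsto (fun k : ℕ ↦ (k : ℝ) * (s - c) + 1) atTop atBot :=
      tendsto_atBot_add_const_right _ _
        (tendsto_natCast_atTop_atTop.atTop_mul_const_of_neg (sub_neg.2 (not_le.1 h)))
    filter_upwards [hlim.eventually_le_atBot 0] with k hk
    rw [softThreshold, Real.smoothTransition.zero_of_nonpos hk, sub_zero]

end SoftThreshold

section Gordon

variable {I J : Type*}

lemma measurableSet_forall_exists_le [Countable I] [Countable J] (lam : I × J → ℝ) :
    MeasurableSet {x : I × J → ℝ | ∀ i, ∃ j, lam (i, j) ≤ x (i, j)} := by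
  simp only [ofPred_forall, ofPred_exists]
  exact .iInter fun i ↦ .iUnion fun j ↦ measurableSet_le measurable_const (measurable_pi_apply _)

section Fintype

variable [Fintype I] [Fintype J]

lemma eventually_minMaxProduct_softThreshold_eq_indicator (lam x : I × J → ℝ) :
    ∀ᶠ k : ℕ in atTop, minMaxProduct (fun p ↦ softThreshold k (lam p)) x =
      {x : I × J → ℝ | ∀ i, ∃ j, lam (i, j) ≤ x (i, j)}.indicator 1 x := by
  filter_upwards [eventually_all.2 fun p ↦ eventually_softThreshold_eq (lam p) (x p)] with k hk
  simp only [minMaxProduct, hk]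
  by_cases hx : x ∈ {x : I × J → ℝ | ∀ i, ∃ j, lam (i, j) ≤ x (i, j)}
  · rw [indicator_of_mem hx]
    refine Finset.prod_eq_one fun i _ ↦ ?_
    obtain ⟨j, hj⟩ := hx i
    exact sub_eq_self.2 (Finset.prod_eq_zero (Finset.mem_univ j) (if_pos hj))
  · rw [indicator_of_notMem hx]
    obtain ⟨i, hi⟩ := not_forall.1 hx
    push Not at hi
    refine Finset.prod_eq_zero (Finset.mem_univ i) ?_
    exact sub_eq_zero.2 (Finset.prod_eq_one fun j _ ↦ if_neg (hi j).not_ge).symm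

lemma tendsto_integral_minMaxProduct_softThreshold (ρ : Measure (I × J → ℝ)) [IsFiniteMeasure ρ]
    (lam : I × J → ℝ) :
    Tendsto (fun k : ℕ ↦ ∫ x, minMaxProduct (fun p ↦ softThreshold k (lam p)) x ∂ρ) atTop
      (𝓝 (ρ.real {x | ∀ i, ∃ j, lam (i, j) ≤ x (i, j)})) := by
  rw [← integral_indicator_one (measurableSet_forall_exists_le lam)]
  refine tendsto_integral_of_dominated_convergence 1 (fun k ↦ ?_) (integrable_const _)
    (fun k ↦ .of_forall fun x ↦ ?_) (.of_forall fun x ↦ tendsto_const_nhds.congr'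
      ((eventually_minMaxProduct_softThreshold_eq_indicator lam x).mono fun k hk ↦ hk.symm))
  · exact (hasTemperateGrowth_minMaxProduct fun p ↦
      hasTemperateGrowth_softThreshold k (lam p)).1.continuous.aestronglyMeasurable
  · have hmem := minMaxProduct_mem_Icc (fun p ↦ softThreshold_mem_Icc k (lam p)) x
    rw [Real.norm_of_nonneg hmem.1]
    exact hmem.2

theorem measure_forall_exists_le_of_isGaussian {μ ν : Measure (I × J → ℝ)} [IsGaussian μ]
    [IsGaussian ν] (hμ : ∫ x, x ∂μ = 0) (hν : ∫ x, x ∂ν = 0)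
    (hvar : ∀ p, Var[fun x ↦ x p; μ] = Var[fun x ↦ x p; ν])
    (hrow : ∀ i j k, cov[fun x ↦ x (i, j), fun x ↦ x (i, k); μ] ≤
      cov[fun x ↦ x (i, j), fun x ↦ x (i, k); ν])
    (hother : ∀ i l, i ≠ l → ∀ j k, cov[fun x ↦ x (i, j), fun x ↦ x (l, k); ν] ≤
      cov[fun x ↦ x (i, j), fun x ↦ x (l, k); μ]) (lam : I × J → ℝ) :
    ν {x | ∀ i, ∃ j, lam (i, j) ≤ x (i, j)} ≤ μ {x | ∀ i, ∃ j, lam (i, j) ≤ x (i, j)} := by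
  refine (ENNReal.toReal_le_toReal (measure_ne_top ν _) (measure_ne_top μ _)).1
    (le_of_tendsto_of_tendsto' (tendsto_integral_minMaxProduct_softThreshold ν lam)
      (tendsto_integral_minMaxProduct_softThreshold μ lam) fun k ↦ ?_)
  exact integral_minMaxProduct_le_integral_minMaxProduct hμ hν hvar hrow hother
    (fun p ↦ hasTemperateGrowth_softThreshold k (lam p))
    (fun p ↦ antitone_softThreshold k (lam p)) fun p ↦ softThreshold_mem_Icc k (lam p)

end Fintype

variable [Finite I] [Finite J] {Ω Ω' : Type*} {mΩ : MeasurableSpace Ω} {mΩ' : MeasurableSpace Ω'}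
  {P : Measure Ω} {Q : Measure Ω'}

theorem measure_forall_exists_le_of_hasGaussianLaw {X : I × J → Ω → ℝ} {Y : I × J → Ω' → ℝ}
    (hX : HasGaussianLaw (fun ω p ↦ X p ω) P) (hY : HasGaussianLaw (fun ω p ↦ Y p ω) Q)
    (hX₀ : ∀ p, P[X p] = 0) (hY₀ : ∀ p, Q[Y p] = 0) (hvar : ∀ p, Var[X p; P] = Var[Y p; Q])
    (hrow : ∀ i j k, cov[X (i, j), X (i, k); P] ≤ cov[Y (i, j), Y (i, k); Q])
    (hother : ∀ i l, i ≠ l → ∀ j k, cov[Y (i, j), Y (l, k); Q] ≤ cov[X (i, j), X (l, k); P])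
    (lam : I × J → ℝ) :
    Q {ω | ∀ i, ∃ j, lam (i, j) ≤ Y (i, j) ω} ≤ P {ω | ∀ i, ∃ j, lam (i, j) ≤ X (i, j) ω} := by
  have := Fintype.ofFinite I
  have := Fintype.ofFinite J
  have := hX.isGaussian_map
  have := hY.isGaussian_map
  have hmeas : ∀ (ρ : Measure (I × J → ℝ)) p, AEStronglyMeasurable (fun x : I × J → ℝ ↦ x p) ρ :=
    fun ρ p ↦ (measurable_pi_apply p).aestronglyMeasurable
  have hXm := hX.aemeasurable
  have hYm := hY.aemeasurable
  have hcenter : ∀ {ρ : Measure (I × J → ℝ)} [IsGaussian ρ], (∀ p, ∫ x, x p ∂ρ = 0) →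
      ∫ x, x ∂ρ = 0 := fun hρ ↦ funext fun p ↦ by
    rw [eval_integral fun q ↦ (IsGaussian.integrable_id).eval q]
    exact hρ p
  have hmain := measure_forall_exists_le_of_isGaussian 
    (μ := P.map fun ω p ↦ X p ω) (ν := Q.map fun ω p ↦ Y p ω)
    (hcenter fun p ↦ by rw [integral_map hXm (hmeas _ p), hX₀])
    (hcenter fun p ↦ by rw [integral_map hYm (hmeas _ p), hY₀])
    (fun p ↦ by
      simpa only [comp_def, variance_map (hmeas _ p).aemeasurable hXm,
        variance_map (hmeas _ p).aemeasurable hYm] using hvar p)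
    (fun i j k ↦ by
      simpa only [covariance_map_fun (hmeas _ _) (hmeas _ _) hXm,
        covariance_map_fun (hmeas _ _) (hmeas _ _) hYm] using hrow i j k)
    (fun i l hil j k ↦ by
      simpa only [covariance_map_fun (hmeas _ _) (hmeas _ _) hXm,
        covariance_map_fun (hmeas _ _) (hmeas _ _) hYm] using hother i l hil j k) lam
  rwa [Measure.map_apply_of_aemeasurable hXm (measurableSet_forall_exists_le lam),
    Measure.map_apply_of_aemeasurable hYm (measurableSet_forall_exists_le lam)] at hmain

end Gordon

section Discretization

variable {A B : Type*} [TopologicalSpace A] [TopologicalSpace B] [CompactSpace B] {d : ℕ → A}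
  {e : ℕ → B}

lemma forall_exists_nonneg_iff_of_denseRange {f : A × B → ℝ} (hf : Continuous f)
    (hd : DenseRange d) (he : DenseRange e) :
    (∀ a, ∃ b, 0 ≤ f (a, b)) ↔
      ∀ (k : ℕ) (i : Fin k), ∃ j, -(1 / (k + 1) : ℝ) ≤ f (d i, e j) := by
  constructor
  · intro h k i
    obtain ⟨b, hb⟩ := h (d i)
    have hopen : IsOpen {b | -(1 / (k + 1) : ℝ) < f (d i, b)} :=
      isOpen_lt continuous_const (hf.comp (by fun_prop))
    have hneg : -(1 / (k + 1) : ℝ) < 0 := neg_neg_of_pos Nat.one_div_pos_of_nat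
    obtain ⟨j, hj⟩ := he.exists_mem_open hopen ⟨b, hneg.trans_le hb⟩
    exact ⟨j, le_of_lt hj⟩
  · intro h a
    have hclosed : IsClosed (Prod.fst '' {p : A × B | 0 ≤ f p}) :=
      isClosedMap_fst_of_compactSpace _ (isClosed_le continuous_const hf)
    suffices ∀ i, d i ∈ Prod.fst '' {p : A × B | 0 ≤ f p} by
      obtain ⟨⟨_, b⟩, hb, rfl⟩ := closure_minimal (range_subset_iff.2 this) hclosed (hd a)
      exact ⟨b, hb⟩
    intro i
    obtain ⟨b, -, hb⟩ := isCompact_univ.exists_isMaxOn ⟨e 0, mem_univ _⟩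
      (hf.comp (by fun_prop : Continuous fun b ↦ (d i, b))).continuousOn
    refine ⟨(d i, b), ?_, rfl⟩
    have hlim : Tendsto (fun k : ℕ ↦ -(1 / (k + 1) : ℝ)) atTop (𝓝 0) := by
      simpa only [neg_zero] using (tendsto_one_div_add_atTop_nhds_zero_nat (𝕜 := ℝ)).neg
    refine le_of_tendsto hlim ?_
    filter_upwards [eventually_gt_atTop i] with k hk
    obtain ⟨j, hj⟩ := h k ⟨i, hk⟩
    exact hj.trans (hb (mem_univ (e j)))

lemma measure_forall_exists_nonneg_eq_iInf_iSup {Ω : Type*} {mΩ : MeasurableSpace Ω}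
    {P : Measure Ω} [IsFiniteMeasure P] {f : A × B → Ω → ℝ} (hmeas : ∀ p, AEMeasurable (f p) P)
    (hcont : ∀ ω, Continuous fun p ↦ f p ω) (hd : DenseRange d) (he : DenseRange e) :
    P {ω | ∀ a, ∃ b, 0 ≤ f (a, b) ω} =
      ⨅ k : ℕ, ⨆ m : ℕ,
        P {ω | ∀ i : Fin k, ∃ j : Fin m, -(1 / (k + 1) : ℝ) ≤ f (d i, e j) ω} := by
  let S : ℕ → Set Ω := fun k ↦ {ω | ∀ i : Fin k, ∃ j, -(1 / (k + 1) : ℝ) ≤ f (d i, e j) ω}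
  have hS_anti : Antitone S := fun k l hkl ω hω i ↦ by
    obtain ⟨j, hj⟩ := hω (i.castLE hkl)
    exact ⟨j, le_trans (neg_le_neg (Nat.one_div_le_one_div hkl)) hj⟩
  have hS_meas : ∀ k, NullMeasurableSet (S k) P := fun k ↦ by
    simp only [S, ofPred_forall, ofPred_exists]
    exact .iInter fun i ↦ .iUnion fun j ↦ nullMeasurableSet_le aemeasurable_const (hmeas _)
  have hS_mono : ∀ k : ℕ, Monotone fun m : ℕ ↦
      {ω | ∀ i : Fin k, ∃ j : Fin m, -(1 / (k + 1) : ℝ) ≤ f (d i, e j) ω} :=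
    fun k l m hlm ω hω i ↦ by
      obtain ⟨j, hj⟩ := hω i
      exact ⟨j.castLE hlm, hj⟩
  have hS_iUnion : ∀ k : ℕ, S k = ⋃ m : ℕ,
      {ω | ∀ i : Fin k, ∃ j : Fin m, -(1 / (k + 1) : ℝ) ≤ f (d i, e j) ω} := fun k ↦ by
    refine Subset.antisymm (fun ω hω ↦ ?_) (iUnion_subset fun m ω hω i ↦ ?_)
    · choose j hj using hω
      exact mem_iUnion.2 ⟨Finset.univ.sup j + 1, fun i ↦
        ⟨⟨j i, Nat.lt_succ_of_le (Finset.le_sup (Finset.mem_univ i))⟩, hj i⟩⟩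
    · obtain ⟨j, hj⟩ := hω i
      exact ⟨j, hj⟩
  calc P {ω | ∀ a, ∃ b, 0 ≤ f (a, b) ω}
      = P (⋂ k, S k) := by
        simp only [S, forall_exists_nonneg_iff_of_denseRange (hcont _) hd he, ofPred_forall]
    _ = ⨅ k, P (S k) := hS_anti.measure_iInter hS_meas ⟨0, measure_ne_top P _⟩
    _ = _ := by simp only [hS_iUnion, (hS_mono _).measure_iUnion]

lemma hasGaussianLaw_of_isGaussianProcess_of_finite {ι T Ω : Type*} [Finite ι]
    {mΩ : MeasurableSpace Ω} {P : Measure Ω} {X : T → Ω → ℝ} (hX : IsGaussianProcess X P)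
    (s : ι → T) : HasGaussianLaw (fun ω i ↦ X (s i) ω) P := by
  classical
  have := Fintype.ofFinite ι
  let L : (↥(Finset.univ.image s) → ℝ) →L[ℝ] (ι → ℝ) := .pi fun i ↦
    .proj ⟨s i, Finset.mem_image_of_mem s (Finset.mem_univ i)⟩
  exact (hX.hasGaussianLaw _).map L

theorem measure_forall_exists_le_of_isGaussianProcess {A B : Type*} [TopologicalSpace A]
    [SeparableSpace A] [Nonempty A] [TopologicalSpace B] [CompactSpace B] [SeparableSpace B]
    [Nonempty B] {Ω Ω' : Type*} {mΩ : MeasurableSpace Ω} {mΩ' : MeasurableSpace Ω'}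
    {P : Measure Ω} {Q : Measure Ω'} {X : A × B → Ω → ℝ} {Y : A × B → Ω' → ℝ}
    (hX : IsGaussianProcess X P) (hY : IsGaussianProcess Y Q)
    (hXc : ∀ ω, Continuous fun p ↦ X p ω) (hYc : ∀ ω, Continuous fun p ↦ Y p ω)
    (hX₀ : ∀ p, P[X p] = 0) (hY₀ : ∀ p, Q[Y p] = 0)
    (hrow : ∀ a b b', cov[X (a, b), X (a, b'); P] = cov[Y (a, b), Y (a, b'); Q])
    (hother : ∀ a a' b b', cov[Y (a, b), Y (a', b'); Q] ≤ cov[X (a, b), X (a', b'); P])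
    {lam : A → ℝ} (hlam : Continuous lam) :
    Q {ω | ∀ a, ∃ b, lam a ≤ Y (a, b) ω} ≤ P {ω | ∀ a, ∃ b, lam a ≤ X (a, b) ω} := by
  have := hX.isProbabilityMeasure
  have := hY.isProbabilityMeasure
  have hd := denseRange_denseSeq A
  have he := denseRange_denseSeq B
  have hX' := measure_forall_exists_nonneg_eq_iInf_iSup (P := P)
    (f := fun p ω ↦ X p ω - lam p.1) (fun p ↦ (hX.aemeasurable p).sub_const _)
    (fun ω ↦ (hXc ω).sub (hlam.comp continuous_fst)) hd he
  have hY' := measure_forall_exists_nonneg_eq_iInf_iSup (P := Q)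
    (f := fun p ω ↦ Y p ω - lam p.1) (fun p ↦ (hY.aemeasurable p).sub_const _)
    (fun ω ↦ (hYc ω).sub (hlam.comp continuous_fst)) hd he
  simp only [le_sub_iff_add_le, zero_add] at hX' hY'
  rw [hX', hY']
  refine iInf_mono fun k ↦ iSup_mono fun m ↦ ?_
  let s : Fin k × Fin m → A × B := fun p ↦ (denseSeq A p.1, denseSeq B p.2)
  refine measure_forall_exists_le_of_hasGaussianLaw (X := fun p ↦ X (s p)) (Y := fun p ↦ Y (s p))
    (hasGaussianLaw_of_isGaussianProcess_of_finite hX s)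
    (hasGaussianLaw_of_isGaussianProcess_of_finite hY s) (fun p ↦ hX₀ _) (fun p ↦ hY₀ _)
    (fun p ↦ ?_) (fun i j l ↦ (hrow _ _ _).le) (fun i l _ j k ↦ hother _ _ _ _)
    (fun p ↦ -(1 / (k + 1) : ℝ) + lam (denseSeq A p.1))
  rw [← covariance_self (hX.aemeasurable _), ← covariance_self (hY.aemeasurable _)]
  exact hrow _ _ _

end Discretization

section Euclidean

variable {d : ℕ}

lemma e2norm_eq_norm (x : Fin d → ℝ) : e2norm x = ‖WithLp.toLp 2 x‖ := by
  simp only [e2norm, EuclideanSpace.norm_eq, Real.norm_eq_abs, sq_abs]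

lemma continuous_e2norm : Continuous (e2norm : (Fin d → ℝ) → ℝ) := by
  unfold e2norm
  fun_prop

lemma dotProduct_self_eq_e2norm_sq (x : Fin d → ℝ) : x ⬝ᵥ x = e2norm x ^ 2 := by
  rw [e2norm, Real.sq_sqrt (Finset.sum_nonneg fun i _ ↦ sq_nonneg _)]
  simp only [dotProduct, sq]

lemma dotProduct_le_e2norm_mul_e2norm (x y : Fin d → ℝ) : x ⬝ᵥ y ≤ e2norm x * e2norm y :=
  Real.sum_mul_le_sqrt_mul_sqrt _ _ _

lemma isCompact_e2norm_sphere : IsCompact {a : Fin d → ℝ | e2norm a = 1} := by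
  convert (isCompact_sphere (0 : EuclideanSpace ℝ (Fin d)) 1).image (PiLp.continuous_ofLp 2 _)
  ext a
  simp only [e2norm_eq_norm]
  exact ⟨fun h ↦ ⟨_, mem_sphere_zero_iff_norm.2 h, rfl⟩, by
    rintro ⟨b, hb, rfl⟩
    exact mem_sphere_zero_iff_norm.1 hb⟩

lemma e2norm_sphere_nonempty (hd : 1 ≤ d) : {a : Fin d → ℝ | e2norm a = 1}.Nonempty :=
  ⟨Pi.single ⟨0, hd⟩ 1, by
    rw [mem_ofPred_eq, e2norm_eq_norm, PiLp.toLp_single, PiLp.norm_single, norm_one]⟩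

lemma zero_le_sSup_e2norm_sphere_iff (hd : 1 ≤ d) {f : (Fin d → ℝ) → ℝ} (hf : Continuous f) :
    0 ≤ sSup {z | ∃ a, e2norm a = 1 ∧ z = f a} ↔
      ∃ a : {a : Fin d → ℝ // e2norm a = 1}, 0 ≤ f a := by
  have himage : {z | ∃ a, e2norm a = 1 ∧ z = f a} = f '' {a | e2norm a = 1} := by
    simp only [image, eq_comm, mem_ofPred_eq]
  have hcompact := isCompact_e2norm_sphere.image hf
  rw [himage]
  constructor
  · intro h
    obtain ⟨a, ha, hfa⟩ := hcompact.sSup_mem ((e2norm_sphere_nonempty hd).image f)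
    exact ⟨⟨a, ha⟩, hfa ▸ h⟩
  · rintro ⟨⟨a, ha⟩, h⟩
    exact h.trans (le_csSup hcompact.bddAbove ⟨a, ha, rfl⟩)

end Euclidean

section GaussianMeasures

instance isGaussian_pi {ι : Type*} [Fintype ι] {E : ι → Type*} [∀ i, NormedAddCommGroup (E i)]
    [∀ i, NormedSpace ℝ (E i)] [∀ i, MeasurableSpace (E i)] [∀ i, BorelSpace (E i)]
    [∀ i, SecondCountableTopology (E i)] [∀ i, CompleteSpace (E i)] (μ : ∀ i, Measure (E i))
    [∀ i, IsGaussian (μ i)] :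
    IsGaussian (Measure.pi μ) := by
  have hlaw : ∀ i, HasGaussianLaw (fun x : ∀ i, E i ↦ x i) (Measure.pi μ) := fun i ↦
    ⟨by rw [(measurePreserving_eval μ i).map_eq]; infer_instance⟩
  have := (iIndepFun.hasGaussianLaw hlaw (iIndepFun_pi fun i ↦ aemeasurable_id)).isGaussian_map
  rwa [Measure.map_id'] at this

instance isNegInvariant_prod {E F : Type*} [MeasurableSpace E] [Neg E] [MeasurableNeg E]
    [MeasurableSpace F] [Neg F] [MeasurableNeg F] (μ : Measure E) (ν : Measure F) [SFinite μ]
    [SFinite ν] [μ.IsNegInvariant] [ν.IsNegInvariant] : (μ.prod ν).IsNegInvariant :=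
  ⟨((Measure.measurePreserving_neg μ).prod (Measure.measurePreserving_neg ν)).map_eq⟩

instance isNegInvariant_gaussianReal (v : ℝ≥0) : (gaussianReal 0 v).IsNegInvariant :=
  ⟨gaussianReal_map_neg.trans (by rw [neg_zero])⟩

lemma integral_strongDual_eq_zero {E : Type*} [NormedAddCommGroup E] [NormedSpace ℝ E]
    [MeasurableSpace E] [MeasurableNeg E] (μ : Measure E) [μ.IsNegInvariant]
    (L : StrongDual ℝ E) : ∫ x, L x ∂μ = 0 := by
  have h := integral_neg_eq_self L μ
  simp only [map_neg, integral_neg] at h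
  exact self_eq_neg.1 h.symm

lemma isGaussianProcess_strongDual {E T : Type*} [NormedAddCommGroup E] [NormedSpace ℝ E]
    [MeasurableSpace E] [BorelSpace E] (μ : Measure E) [IsGaussian μ]
    (L : T → StrongDual ℝ E) : IsGaussianProcess (fun t ↦ ⇑(L t)) μ :=
  ⟨fun I ↦ IsGaussian.hasGaussianLaw_id.map (.pi fun t : I ↦ L t)⟩

variable (m n : ℕ)

instance isGaussian_muGordon : IsGaussian (muGordon m n) := by
  unfold muGordon
  infer_instance

instance isNegInvariant_muGordon : (muGordon m n).IsNegInvariant := by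
  have hvec : ∀ d, (Measure.pi fun _ : Fin d ↦ gaussianReal 0 1).IsNegInvariant := fun d ↦
    Measure.pi.isNegInvariant _
  have hmat : (Measure.pi fun _ : Fin m ↦
      Measure.pi fun _ : Fin n ↦ gaussianReal 0 1).IsNegInvariant :=
    Measure.pi.isNegInvariant fun _ ↦ Measure.pi fun _ ↦ gaussianReal 0 1
  have hhγ := isNegInvariant_prod (Measure.pi fun _ : Fin n ↦ gaussianReal 0 1) (gaussianReal 0 1)
  have hghγ := isNegInvariant_prod (Measure.pi fun _ : Fin m ↦ gaussianReal 0 1)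
    ((Measure.pi fun _ : Fin n ↦ gaussianReal 0 1).prod (gaussianReal 0 1))
  exact isNegInvariant_prod _ _

variable {m n}

lemma covariance_strongDual_muGordon
    (L M : StrongDual ℝ ((Fin m → Fin n → ℝ) × ((Fin m → ℝ) × ((Fin n → ℝ) × ℝ)))) :
    cov[L, M; muGordon m n] =
      (∑ i, ∑ j, L (Pi.single i (Pi.single j 1), 0) * M (Pi.single i (Pi.single j 1), 0)) +
      ((∑ i, L (0, Pi.single i 1, 0) * M (0, Pi.single i 1, 0)) +
      ((∑ j, L (0, 0, Pi.single j 1, 0) * M (0, 0, Pi.single j 1, 0)) +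
        L (0, 0, 0, 1) * M (0, 0, 0, 1))) := by
  unfold muGordon
  simp only [covariance_strongDual_prod IsGaussian.memLp_two_id IsGaussian.memLp_two_id,
    covariance_strongDual_pi fun _ ↦ IsGaussian.memLp_two_id, covariance_strongDual_gaussianReal,
    ContinuousLinearMap.comp_apply, ContinuousLinearMap.single_apply,
    ContinuousLinearMap.inl_apply, ContinuousLinearMap.inr_apply, NNReal.coe_one, one_mul]

/-- The linear functional `(A, g, h, γ) ↦ aᵀAφ + ‖φ‖₂γ`: the process on the larger side of
Gordon's comparison, as a function of its index `(φ, a)`. -/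
noncomputable def matrixForm (φ : Fin n → ℝ) (a : Fin m → ℝ) :
    StrongDual ℝ ((Fin m → Fin n → ℝ) × ((Fin m → ℝ) × ((Fin n → ℝ) × ℝ))) where
  toFun ω := (∑ i, ∑ j, a i * ω.1 i j * φ j) + e2norm φ * ω.2.2.2
  map_add' ω ω' := by
    simp only [Prod.fst_add, Prod.snd_add, Pi.add_apply, mul_add, add_mul, Finset.sum_add_distrib]
    ring
  map_smul' c ω := by
    simp only [Prod.smul_fst, Prod.smul_snd, Pi.smul_apply, smul_eq_mul, RingHom.id_apply, mul_add,
      Finset.mul_sum]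
    congr 1
    · exact Finset.sum_congr rfl fun i _ ↦ Finset.sum_congr rfl fun j _ ↦ by ring
    · ring
  cont := by fun_prop

/-- The linear functional `(A, g, h, γ) ↦ ‖φ‖₂⟨g, a⟩ + ⟨h, φ⟩`: the decoupled process on the
smaller side of Gordon's comparison, as a function of its index `(φ, a)`. -/
noncomputable def vectorForm (φ : Fin n → ℝ) (a : Fin m → ℝ) :
    StrongDual ℝ ((Fin m → Fin n → ℝ) × ((Fin m → ℝ) × ((Fin n → ℝ) × ℝ))) where
  toFun ω := e2norm φ * (∑ i, ω.2.1 i * a i) + ∑ j, ω.2.2.1 j * φ j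
  map_add' ω ω' := by
    simp only [Prod.fst_add, Prod.snd_add, Pi.add_apply, mul_add, add_mul, Finset.sum_add_distrib]
    ring
  map_smul' c ω := by
    simp only [Prod.smul_fst, Prod.smul_snd, Pi.smul_apply, smul_eq_mul, RingHom.id_apply, mul_add,
      Finset.mul_sum]
    congr 1 <;> exact Finset.sum_congr rfl fun i _ ↦ by ring
  cont := by fun_prop

lemma matrixForm_apply (φ : Fin n → ℝ) (a : Fin m → ℝ)
    (ω : (Fin m → Fin n → ℝ) × ((Fin m → ℝ) × ((Fin n → ℝ) × ℝ))) :
    matrixForm φ a ω = (∑ i, ∑ j, a i * ω.1 i j * φ j) + e2norm φ * ω.2.2.2 := rfl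

lemma vectorForm_apply (φ : Fin n → ℝ) (a : Fin m → ℝ)
    (ω : (Fin m → Fin n → ℝ) × ((Fin m → ℝ) × ((Fin n → ℝ) × ℝ))) :
    vectorForm φ a ω = e2norm φ * (∑ i, ω.2.1 i * a i) + ∑ j, ω.2.2.1 j * φ j := rfl

section Continuity

variable {T : Type*} [TopologicalSpace T] {φ : T → Fin n → ℝ} {a : T → Fin m → ℝ}

lemma continuous_matrixForm (hφ : Continuous φ) (ha : Continuous a)
    (ω : (Fin m → Fin n → ℝ) × ((Fin m → ℝ) × ((Fin n → ℝ) × ℝ))) :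
    Continuous fun t ↦ matrixForm (φ t) (a t) ω := by
  have := continuous_e2norm.comp' hφ
  simp only [matrixForm_apply]
  fun_prop

lemma continuous_vectorForm (hφ : Continuous φ) (ha : Continuous a)
    (ω : (Fin m → Fin n → ℝ) × ((Fin m → ℝ) × ((Fin n → ℝ) × ℝ))) :
    Continuous fun t ↦ vectorForm (φ t) (a t) ω := by
  have := continuous_e2norm.comp' hφ
  simp only [vectorForm_apply]
  fun_prop

end Continuity

lemma covariance_matrixForm (φ φ' : Fin n → ℝ) (a a' : Fin m → ℝ) :
    cov[matrixForm φ a, matrixForm φ' a'; muGordon m n] =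
      (a ⬝ᵥ a') * (φ ⬝ᵥ φ') + e2norm φ * e2norm φ' := by
  have hsingle : ∀ (ψ : Fin n → ℝ) (b : Fin m → ℝ) i j,
      matrixForm ψ b (Pi.single i (Pi.single j 1), 0) = b i * ψ j := fun ψ b i j ↦ by
    simp [matrixForm_apply, Pi.single_apply, ite_apply]
  rw [covariance_strongDual_muGordon, dotProduct, dotProduct, Finset.sum_mul_sum]
  simp only [hsingle]
  simp [matrixForm_apply, mul_mul_mul_comm]

lemma covariance_vectorForm (φ φ' : Fin n → ℝ) (a a' : Fin m → ℝ) :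
    cov[vectorForm φ a, vectorForm φ' a'; muGordon m n] =
      e2norm φ * e2norm φ' * (a ⬝ᵥ a') + φ ⬝ᵥ φ' := by
  rw [covariance_strongDual_muGordon, dotProduct, dotProduct, Finset.mul_sum]
  simp [vectorForm_apply, Pi.single_apply, mul_mul_mul_comm]

lemma covariance_vectorForm_le_covariance_matrixForm (φ φ' : Fin n → ℝ) {a a' : Fin m → ℝ}
    (ha : e2norm a = 1) (ha' : e2norm a' = 1) :
    cov[vectorForm φ a, vectorForm φ' a'; muGordon m n] ≤
      cov[matrixForm φ a, matrixForm φ' a'; muGordon m n] := by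
  have hφ : 0 ≤ e2norm φ * e2norm φ' - φ ⬝ᵥ φ' :=
    sub_nonneg.2 (dotProduct_le_e2norm_mul_e2norm φ φ')
  have haa' : 0 ≤ 1 - a ⬝ᵥ a' := by
    simpa only [ha, ha', mul_one, sub_nonneg] using dotProduct_le_e2norm_mul_e2norm a a'
  rw [covariance_vectorForm, covariance_matrixForm]
  linear_combination mul_nonneg hφ haa'

lemma covariance_matrixForm_eq_covariance_vectorForm (φ : Fin n → ℝ) (a a' : Fin m → ℝ) :
    cov[matrixForm φ a, matrixForm φ a'; muGordon m n] =
      cov[vectorForm φ a, vectorForm φ a'; muGordon m n] := by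
  rw [covariance_matrixForm, covariance_vectorForm, dotProduct_self_eq_e2norm_sq φ]
  ring

theorem muGordon_vectorForm_le_muGordon_matrixForm (hm : 1 ≤ m) (Φ : Set (Fin n → ℝ))
    (ψ : (Fin n → ℝ) → ℝ) :
    muGordon m n {ω | ∀ φ ∈ Φ, ∃ a : {a : Fin m → ℝ // e2norm a = 1}, ψ φ ≤ vectorForm φ a ω} ≤
      muGordon m n
        {ω | ∀ φ ∈ Φ, ∃ a : {a : Fin m → ℝ // e2norm a = 1}, ψ φ ≤ matrixForm φ a ω} := by
  obtain rfl | ⟨φ₀, hφ₀⟩ := Φ.eq_empty_or_nonempty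
  · simp only [mem_empty_iff_false, false_imp_iff, implies_true, le_refl]
  -- Indexing by the graph of `ψ` on `Φ` makes the threshold `(φ, ψ φ) ↦ ψ φ` continuous.
  let G : Set ((Fin n → ℝ) × ℝ) := (fun φ ↦ (φ, ψ φ)) '' Φ
  let S : Set (Fin m → ℝ) := {a | e2norm a = 1}
  have : Nonempty G := ⟨⟨_, mem_image_of_mem _ hφ₀⟩⟩
  have : CompactSpace S := isCompact_iff_compactSpace.1 isCompact_e2norm_sphere
  have : Nonempty S := (e2norm_sphere_nonempty hm).to_subtype
  have hfst : Continuous fun p : G × S ↦ p.1.1.1 := by fun_prop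
  have hsnd : Continuous fun p : G × S ↦ p.2.1 := by fun_prop
  have hcomparison := measure_forall_exists_le_of_isGaussianProcess
    (isGaussianProcess_strongDual (muGordon m n) fun p : G × S ↦ matrixForm p.1.1.1 p.2.1)
    (isGaussianProcess_strongDual (muGordon m n) fun p : G × S ↦ vectorForm p.1.1.1 p.2.1)
    (continuous_matrixForm hfst hsnd) (continuous_vectorForm hfst hsnd)
    (fun p ↦ integral_strongDual_eq_zero _ _) (fun p ↦ integral_strongDual_eq_zero _ _)
    (fun φ a a' ↦ covariance_matrixForm_eq_covariance_vectorForm _ _ _)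
    (fun φ φ' a a' ↦ covariance_vectorForm_le_covariance_matrixForm _ _ a.2 a'.2)
    (lam := fun p ↦ p.1.2) (continuous_snd.comp continuous_subtype_val)
  refine (measure_mono ?_).trans (hcomparison.trans (measure_mono ?_))
  · rintro ω hω ⟨_, φ, hφ, rfl⟩
    exact hω φ hφ
  · exact fun ω hω φ hφ ↦ hω ⟨_, mem_image_of_mem _ hφ⟩

end GaussianMeasures

end Gordon

open Gordon in
theorem lasso_stmt10_general (m n : ℕ) (hm : 1 ≤ m) (Φ : Set (Fin n → ℝ))
    (ψ : (Fin n → ℝ) → ℝ) :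
    muGordon m n
      {ω | ∀ φ ∈ Φ, 0 ≤ sSup {z : ℝ | ∃ a : Fin m → ℝ, e2norm a = 1 ∧
          z = (∑ i, ∑ j, a i * ω.1 i j * φ j) + e2norm φ * ω.2.2.2 - ψ φ}}
    ≥ muGordon m n
      {ω | ∀ φ ∈ Φ, 0 ≤ sSup {z : ℝ | ∃ a : Fin m → ℝ, e2norm a = 1 ∧
          z = e2norm φ * (∑ i, ω.2.1 i * a i) + (∑ j, ω.2.2.1 j * φ j) - ψ φ}} := by
  have hX : ∀ (φ : Fin n → ℝ) ω, Continuous fun a : Fin m → ℝ ↦ matrixForm φ a ω - ψ φ :=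
    fun φ ω ↦ (continuous_matrixForm continuous_const continuous_id ω).sub continuous_const
  have hY : ∀ (φ : Fin n → ℝ) ω, Continuous fun a : Fin m → ℝ ↦ vectorForm φ a ω - ψ φ :=
    fun φ ω ↦ (continuous_vectorForm continuous_const continuous_id ω).sub continuous_const
  simp only [← matrixForm_apply, ← vectorForm_apply, zero_le_sSup_e2norm_sphere_iff hm (hX _ _),
    zero_le_sSup_e2norm_sphere_iff hm (hY _ _), sub_nonneg]
  exact muGordon_vectorForm_le_muGordon_matrixForm hm Φ ψ

theorem lasso_stmt10 (m n : ℕ) (hm : 1 ≤ m) (hn : 1 ≤ n)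
    (Φ : Set (Fin n → ℝ)) (hΦne : Φ.Nonempty) (hΦc : IsCompact Φ)
    (ψ : (Fin n → ℝ) → ℝ) (hψ : Continuous ψ) :
    muGordon m n
      {ω | ∀ φ ∈ Φ, 0 ≤ sSup {z : ℝ | ∃ a : Fin m → ℝ, e2norm a = 1 ∧
          z = (∑ i, ∑ j, a i * ω.1 i j * φ j) + e2norm φ * ω.2.2.2 - ψ φ}}
    ≥ muGordon m n
      {ω | ∀ φ ∈ Φ, 0 ≤ sSup {z : ℝ | ∃ a : Fin m → ℝ, e2norm a = 1 ∧
          z = e2norm φ * (∑ i, ω.2.1 i * a i) + (∑ j, ω.2.2.1 j * φ j) - ψ φ}} :=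
  lasso_stmt10_general m n hm Φ ψ
end

section
/- Fix integers m, n ≥ 1 and k with 1 ≤ k ≤ n, let x̃ ∈ ℝⁿ be k-sparse nonnegative, σ > 0 and C > 0. Let A be a random m×n matrix with i.i.d. standard normal N(0,1) entries and let v ∈ ℝᵐ be a random vector, independent of A, with i.i.d. N(0, σ²) entries. Set y = A·x̃ + v and ζ_obj(A, v) = inf { ‖y − A·x‖₂ : x ∈ ℝⁿ, ‖x‖₁ ≤ ‖x̃‖₁ }. Let g ∈ ℝᵐ, h ∈ ℝⁿ be independent standard normal vectors and assume E[ξ_up(σ, g, h, x̃, C)] ≥ 0. Then for all ε₁, ε₂, ε₃ ∈ (0,1): P( ζ_obj(A, v) ≤ (1 + ε₁)·E[ξ_up(σ, g, h, x̃, C)] + (ε₂ + ε₃)·√n ) ≥ 1 − 2·exp( −(ε₁·E[ξ_up(σ, g, h, x̃, C)])²/(2·(2·C² + σ²)) ) − exp( −ε₂²·n/(2·σ²) ) − exp( −ε₃²·n/2 ). -/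
open MeasureTheory ProbabilityTheory

noncomputable def l1norm {d : ℕ} (x : Fin d → ℝ) : ℝ := ∑ i, |x i|

def kSparseNonneg (n k : ℕ) (x : Fin n → ℝ) : Prop :=
  (∀ i : Fin n, (i : ℕ) < n - k → x i = 0) ∧ ∀ i, 0 ≤ x i

noncomputable def tailSum {n : ℕ} (k : ℕ) (lam x : Fin n → ℝ) : ℝ :=
  ∑ i ∈ Finset.univ.filter (fun i : Fin n => n - k ≤ (i : ℕ)), lam i * x i

/-- Product Gaussian measure on (g, h). -/
noncomputable def muGH (m n : ℕ) : Measure ((Fin m → ℝ) × (Fin n → ℝ)) :=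
  (Measure.pi fun _ : Fin m => gaussianReal 0 1).prod
    (Measure.pi fun _ : Fin n => gaussianReal 0 1)

/-- Product Gaussian measure on (A, v). -/
noncomputable def muAv (m n : ℕ) (σ : ℝ) :
    Measure ((Fin m → Fin n → ℝ) × (Fin m → ℝ)) :=
  (Measure.pi fun _ : Fin m => Measure.pi fun _ : Fin n => gaussianReal 0 1).prod
    (Measure.pi fun _ : Fin m => gaussianReal 0 (σ ^ 2).toNNReal)

/-- ‖y − A·x‖₂ with y = A·x̃ + v, for the sample ω = (A, v). -/
noncomputable def lassoVal (m n : ℕ) (xt : Fin n → ℝ)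
    (ω : (Fin m → Fin n → ℝ) × (Fin m → ℝ)) (x : Fin n → ℝ) : ℝ :=
  e2norm (fun i => ((∑ j, ω.1 i j * xt j) + ω.2 i) - ∑ j, ω.1 i j * x j)

/-- ζ_obj(A, v): the optimal value of the LASSO (1.9). -/
noncomputable def zetaObj (m n : ℕ) (xt : Fin n → ℝ)
    (ω : (Fin m → Fin n → ℝ) × (Fin m → ℝ)) : ℝ :=
  sInf {r : ℝ | ∃ x : Fin n → ℝ, l1norm x ≤ l1norm xt ∧ r = lassoVal m n xt ω x}

/-- ξ_up(σ, g, h, x̃, C) as a function of the Gaussian pair (g, h). -/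
noncomputable def xiUpFun (m n k : ℕ) (σ C : ℝ) (xt : Fin n → ℝ)
    (p : (Fin m → ℝ) × (Fin n → ℝ)) : ℝ :=
  sSup {z : ℝ | ∃ ν : ℝ, ∃ lam : Fin n → ℝ, 0 ≤ ν ∧
    (∀ i, 0 ≤ lam i ∧ lam i ≤ 2 * ν) ∧
    z = Real.sqrt (C ^ 2 + σ ^ 2) * e2norm p.1
        - C * e2norm (fun i => p.2 i + ν - lam i) - tailSum k lam xt}

/-! Restricting `x - x̃` to the ball of radius `C` only increases the LASSO value, and by Lagrangian
duality and Sion's minimax theorem the restricted value is the maximum of `κ (Aᵀ u) - ⟨u, v⟩` over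
unit vectors `u`, where `κ` is the part of `ξ_up` that depends on `h`, a `C`-Lipschitz function.
Appending the noise to `A` as one more Gaussian column turns this into the maximum over the sphere
of an `L`-Lipschitz function of a Gaussian combination of the rows, with `L = √(C² + σ²)`. Comparing
covariances along a Gaussian interpolation of a smoothed maximum bounds the expectation of such a
maximum by that of `κ(h) + L ‖g‖` (Chevet's inequality), which is `E ξ_up`. The same comparison,
applied to many independent copies of a Lipschitz function, bounds its exponential moments and
hence its deviations from the mean. -/

open Filter Set Function
open scoped NNReal ENNReal Topology

/-- The law on `ι → ℝ` of a family of independent standard normal variables. `stdGaussian` is its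
image in `EuclideanSpace ℝ ι`. -/
noncomputable abbrev gaussianPi (ι : Type*) [Fintype ι] : Measure (ι → ℝ) :=
  Measure.pi fun _ ↦ gaussianReal 0 1

section GaussianIntegrationByParts

theorem integral_mul_id_gaussianReal {f f' : ℝ → ℝ} (hf : ∀ x, HasDerivAt f (f' x) x)
    (hf_int : Integrable f (gaussianReal 0 1)) (hf'_int : Integrable f' (gaussianReal 0 1))
    (hfx_int : Integrable (fun x ↦ f x * x) (gaussianReal 0 1)) :
    ∫ x, f x * x ∂gaussianReal 0 1 = ∫ x, f' x ∂gaussianReal 0 1 := by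
  set ρ := gaussianPDFReal 0 1 with hρ_def
  have hρ : ∀ x, HasDerivAt ρ (-x * ρ x) x := fun x ↦ by
    have hexp := ((hasDerivAt_pow 2 x).neg.div_const 2).exp.const_mul (√(2 * Real.pi * 1))⁻¹
    simp only [hρ_def, gaussianPDFReal_def, NNReal.coe_one, sub_zero, mul_one] at hexp ⊢
    exact hexp.congr_deriv (by simp; ring)
  have integrable_iff : ∀ g : ℝ → ℝ,
      Integrable g (gaussianReal 0 1) ↔ Integrable (fun x ↦ g x * ρ x) := fun g ↦ by
    rw [gaussianReal_of_var_ne_zero 0 one_ne_zero, integrable_withDensity_iff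
      (measurable_gaussianPDF 0 1) (by simp [gaussianPDF])]
    simp [toReal_gaussianPDF, hρ_def]
  rw [integrable_iff] at hf_int hf'_int hfx_int
  have hparts := integral_mul_deriv_eq_deriv_mul_of_integrable (u := f) (v := ρ)
    (fun x _ ↦ hf x) (fun x _ ↦ hρ x)
    (hfx_int.neg.congr (ae_of_all _ fun x ↦ by simp only [Pi.neg_apply, Pi.mul_apply]; ring))
    hf'_int hf_int
  simp only [integral_gaussianReal_eq_integral_smul one_ne_zero, smul_eq_mul, ← hρ_def]
  calc ∫ x, ρ x * (f x * x) = -∫ x, f x * (-x * ρ x) := by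
        rw [← integral_neg]; congr 1; ext x; ring
    _ = ∫ x, ρ x * f' x := by rw [hparts, neg_neg]; simp only [mul_comm]

variable {ι : Type*} [Fintype ι]

theorem measurePreserving_update [DecidableEq ι] {α : ι → Type*} [∀ i, MeasurableSpace (α i)]
    (μ : ∀ i, Measure (α i)) [∀ i, IsProbabilityMeasure (μ i)] (i : ι) :
    MeasurePreserving (fun p : (∀ j, α j) × α i ↦ update p.1 i p.2)
      ((Measure.pi μ).prod (μ i)) (Measure.pi μ) := by
  have hmeas : Measurable fun p : (∀ j, α j) × α i ↦ update p.1 i p.2 :=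
    measurable_pi_iff.2 fun j ↦ by
      rcases eq_or_ne j i with rfl | hj
      · simpa using measurable_snd
      · simpa [hj] using measurable_fst.eval
  refine ⟨hmeas, (Measure.pi_eq fun s hs ↦ ?_).symm⟩
  have hpre : (fun p : (∀ j, α j) × α i ↦ update p.1 i p.2) ⁻¹' univ.pi s
      = univ.pi (update s i univ) ×ˢ s i := by
    ext p
    simp only [mem_preimage, mem_univ_pi, mem_prod]
    refine ⟨fun h ↦ ⟨fun j ↦ ?_, by simpa using h i⟩, fun h j ↦ ?_⟩
    · rcases eq_or_ne j i with rfl | hj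
      · simp
      · simpa [hj] using h j
    · rcases eq_or_ne j i with rfl | hj
      · simpa using h.2
      · simpa [hj] using h.1 j
  rw [Measure.map_apply hmeas (.univ_pi hs), hpre, Measure.prod_prod, Measure.pi_pi,
    ← Finset.prod_erase_mul _ _ (Finset.mem_univ i),
    ← Finset.prod_erase_mul _ _ (Finset.mem_univ i)]
  simp only [update_self, measure_univ, mul_one]
  congr 1
  exact Finset.prod_congr rfl fun j hj ↦ by rw [update_of_ne (Finset.ne_of_mem_erase hj)]

theorem integral_mul_eval_gaussianPi [DecidableEq ι] (i : ι) {f f' : (ι → ℝ) → ℝ}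
    (hf : ∀ ω, HasDerivAt (fun t ↦ f (update ω i t)) (f' ω) (ω i))
    (hf_int : Integrable f (gaussianPi ι))
    (hf'_int : Integrable f' (gaussianPi ι))
    (hfx_int : Integrable (fun ω ↦ f ω * ω i) (gaussianPi ι)) :
    ∫ ω, f ω * ω i ∂gaussianPi ι
      = ∫ ω, f' ω ∂gaussianPi ι := by
  have hmp := measurePreserving_update (fun _ : ι ↦ gaussianReal 0 1) i
  have integral_eq : ∀ {g : (ι → ℝ) → ℝ}, Integrable g (gaussianPi ι) →
      ∫ ω, g ω ∂gaussianPi ι = ∫ ω, ∫ t, g (update ω i t)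
        ∂gaussianReal 0 1 ∂gaussianPi ι := fun {g} hg ↦ by
    rw [← integral_prod (fun p : (ι → ℝ) × ℝ ↦ g (update p.1 i p.2))
      (hmp.integrable_comp_of_integrable hg), ← integral_map hmp.measurable.aemeasurable
      (hmp.map_eq.symm ▸ hg.aestronglyMeasurable), hmp.map_eq]
  have slice_int : ∀ {g : (ι → ℝ) → ℝ}, Integrable g (gaussianPi ι) →
      ∀ᵐ ω ∂gaussianPi ι,
        Integrable (fun t ↦ g (update ω i t)) (gaussianReal 0 1) := fun hg ↦
    (hmp.integrable_comp_of_integrable hg).prod_right_ae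
  rw [integral_eq hfx_int, integral_eq hf'_int]
  refine integral_congr_ae ?_
  filter_upwards [slice_int hf_int, slice_int hf'_int, slice_int hfx_int] with ω h h' hx
  simp only [update_self] at hx ⊢
  exact integral_mul_id_gaussianReal (fun t ↦ by simpa using hf (update ω i t)) h h' hx

end GaussianIntegrationByParts

section GaussianInterpolation

variable {ι V : Type*} [Fintype ι] [NormedAddCommGroup V] [NormedSpace ℝ V]

theorem integrable_eval_gaussianPi (i : ι) : Integrable (fun ω ↦ ω i) (gaussianPi ι) :=
  (measurePreserving_eval (fun _ : ι ↦ gaussianReal 0 1) i).integrable_comp_of_integrable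
    ((memLp_id_gaussianReal 1).integrable le_rfl)

theorem integrable_gaussianPi_of_bounded {f : (ι → ℝ) → ℝ} (hf : Continuous f) {C : ℝ}
    (hC : ∀ ω, ‖f ω‖ ≤ C) : Integrable f (gaussianPi ι) :=
  .of_bound hf.aestronglyMeasurable C (ae_of_all _ hC)

variable {Φ : V → ℝ} {K : ℝ≥0} {C : ℝ}

theorem integrable_gaussianPi_of_lipschitzWith (hΦ : LipschitzWith K Φ) (w : ι → V) :
    Integrable (fun ω ↦ Φ (∑ i, ω i • w i)) (gaussianPi ι) := by
  refine ((integrable_const ‖Φ 0‖).add ((integrable_finsetSum Finset.univ fun i _ ↦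
    (integrable_eval_gaussianPi i).norm.mul_const ‖w i‖).const_mul (K : ℝ))).mono'
    (hΦ.continuous.comp (by fun_prop)).aestronglyMeasurable (ae_of_all _ fun ω ↦ ?_)
  have hsum : ‖∑ i, ω i • w i‖ ≤ ∑ i, ‖ω i‖ * ‖w i‖ :=
    (norm_sum_le _ _).trans_eq (Finset.sum_congr rfl fun i _ ↦ norm_smul _ _)
  calc ‖Φ (∑ i, ω i • w i)‖ ≤ ‖Φ 0‖ + ‖Φ (∑ i, ω i • w i) - Φ 0‖ := norm_le_norm_add_norm_sub' _ _
    _ ≤ ‖Φ 0‖ + K * ∑ i, ‖ω i‖ * ‖w i‖ := by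
      gcongr
      refine (hΦ.norm_sub_le _ 0).trans ?_
      rw [sub_zero]
      gcongr

theorem toLp_eq_sum_smul_single [DecidableEq ι] (ω : ι → ℝ) :
    WithLp.toLp 2 ω = ∑ i, ω i • EuclideanSpace.single i (1 : ℝ) := by
  ext j
  simp [Finset.sum_apply, Pi.single_apply]

theorem integrable_comp_toLp_gaussianPi {f : EuclideanSpace ℝ ι → ℝ}
    (hf : LipschitzWith K f) :
    Integrable (fun ω ↦ f (WithLp.toLp 2 ω)) (gaussianPi ι) := by
  classical
  simpa only [toLp_eq_sum_smul_single] using integrable_gaussianPi_of_lipschitzWith hf _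

theorem integral_fderiv_mul_eval_gaussianPi (hΦ : ContDiff ℝ 2 Φ) (hΦK : LipschitzWith K Φ)
    (hΦC : ∀ z, ‖fderiv ℝ (fderiv ℝ Φ) z‖ ≤ C) (w : ι → V) (i : ι) (v : V) :
    ∫ ω, fderiv ℝ Φ (∑ j, ω j • w j) v * ω i ∂gaussianPi ι
      = ∫ ω, fderiv ℝ (fderiv ℝ Φ) (∑ j, ω j • w j) (w i) v ∂gaussianPi ι := by
  classical
  have hΦ' : ContDiff ℝ 1 (fderiv ℝ Φ) := hΦ.fderiv_right (by norm_num)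
  have hΦ'_cont : Continuous fun ω : ι → ℝ ↦ fderiv ℝ Φ (∑ j, ω j • w j) v :=
    (hΦ'.continuous.comp (by fun_prop)).clm_apply continuous_const
  have hΦ''_cont : Continuous fun ω : ι → ℝ ↦ fderiv ℝ (fderiv ℝ Φ) (∑ j, ω j • w j) (w i) v :=
    (((hΦ'.continuous_fderiv one_ne_zero).comp (by fun_prop)).clm_apply
      continuous_const).clm_apply continuous_const
  have hΦ'_le : ∀ z, ‖fderiv ℝ Φ z v‖ ≤ K * ‖v‖ := fun z ↦
    (fderiv ℝ Φ z).le_of_opNorm_le (norm_fderiv_le_of_lipschitz ℝ hΦK) _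
  have hΦ''_le : ∀ z, ‖fderiv ℝ (fderiv ℝ Φ) z (w i) v‖ ≤ C * ‖w i‖ * ‖v‖ := fun z ↦
    ContinuousLinearMap.le_of_opNorm_le _ (ContinuousLinearMap.le_of_opNorm_le _ (hΦC z) _) _
  refine integral_mul_eval_gaussianPi i (f := fun ω ↦ fderiv ℝ Φ (∑ j, ω j • w j) v)
    (f' := fun ω ↦ fderiv ℝ (fderiv ℝ Φ) (∑ j, ω j • w j) (w i) v) (fun ω ↦ ?_)
    (integrable_gaussianPi_of_bounded hΦ'_cont fun ω ↦ hΦ'_le _)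
    (integrable_gaussianPi_of_bounded hΦ''_cont fun ω ↦ hΦ''_le _)
    ((integrable_eval_gaussianPi i).bdd_mul (c := K * ‖v‖) hΦ'_cont.aestronglyMeasurable
      (ae_of_all _ fun ω ↦ hΦ'_le _))
  have hline : HasDerivAt (fun t ↦ ∑ j, update ω i t j • w j) (w i) (ω i) := by
    refine (HasDerivAt.fun_sum fun j _ ↦ (hasDerivAt_pi.1
      (hasDerivAt_update ω i (ω i)) j).smul_const (w j)).congr_deriv ?_
    simp [Pi.single_apply, ite_smul]
  have hfderiv : HasFDerivAt (fderiv ℝ Φ) (fderiv ℝ (fderiv ℝ Φ) (∑ j, ω j • w j))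
      (∑ j, update ω i (ω i) j • w j) := by
    rw [update_eq_self]
    exact (hΦ'.differentiable one_ne_zero _).hasFDerivAt
  have hcomp : HasDerivAt (fun t ↦ fderiv ℝ Φ (∑ j, update ω i t j • w j))
      (fderiv ℝ (fderiv ℝ Φ) (∑ j, ω j • w j) (w i)) (ω i) :=
    hfderiv.comp_hasDerivAt (ω i) hline
  exact (ContinuousLinearMap.apply ℝ ℝ v).hasFDerivAt.comp_hasDerivAt (ω i) hcomp

theorem hasDerivAt_integral_comp_gaussianPi (hΦ : ContDiff ℝ 2 Φ) (hΦK : LipschitzWith K Φ)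
    (hΦC : ∀ z, ‖fderiv ℝ (fderiv ℝ Φ) z‖ ≤ C) {w w' : ℝ → ι → V} {B : ℝ}
    (hw : ∀ s i, HasDerivAt (fun s ↦ w s i) (w' s i) s) (hw' : ∀ s i, ‖w' s i‖ ≤ B) (s : ℝ) :
    HasDerivAt (fun s ↦ ∫ ω, Φ (∑ i, ω i • w s i) ∂gaussianPi ι)
      (∑ i, ∫ ω, fderiv ℝ (fderiv ℝ Φ) (∑ j, ω j • w s j) (w s i) (w' s i) ∂gaussianPi ι) s := by
  have hΦ'_le : ∀ z, ‖fderiv ℝ Φ z‖ ≤ K := fun z ↦ norm_fderiv_le_of_lipschitz ℝ hΦK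
  have hΦ'_cont : ∀ s, Continuous fun ω : ι → ℝ ↦ fderiv ℝ Φ (∑ i, ω i • w s i) := fun s ↦
    (hΦ.continuous_fderiv two_ne_zero).comp (by fun_prop)
  have hderiv := (hasDerivAt_integral_of_dominated_loc_of_deriv_le (μ := gaussianPi ι)
    (F := fun s ω ↦ Φ (∑ i, ω i • w s i)) (x₀ := s)
    (F' := fun s ω ↦ fderiv ℝ Φ (∑ i, ω i • w s i) (∑ i, ω i • w' s i))
    (bound := fun ω ↦ K * ∑ i, ‖ω i‖ * B) univ_mem
    (Eventually.of_forall fun s ↦ (hΦ.continuous.comp (by fun_prop)).aestronglyMeasurable)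
    (integrable_gaussianPi_of_lipschitzWith hΦK (w s))
    ((hΦ'_cont s).clm_apply (by fun_prop)).aestronglyMeasurable (ae_of_all _ fun ω s _ ↦ ?_)
    ((integrable_finsetSum _ fun i _ ↦
      (integrable_eval_gaussianPi i).norm.mul_const B).const_mul (K : ℝ))
    (ae_of_all _ fun ω s _ ↦ (hΦ.differentiable two_ne_zero _).hasFDerivAt.comp_hasDerivAt s
      (HasDerivAt.fun_sum fun i _ ↦ (hw s i).const_smul (ω i)))).2
  · refine hderiv.congr_deriv ?_
    simp only [map_sum, map_smul, smul_eq_mul]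
    rw [integral_finsetSum _ fun i _ ↦ ?_]
    · refine Finset.sum_congr rfl fun i _ ↦ ?_
      rw [← integral_fderiv_mul_eval_gaussianPi hΦ hΦK hΦC]
      simp only [mul_comm]
    · exact (integrable_eval_gaussianPi i).mul_bdd
        ((hΦ'_cont s).clm_apply continuous_const).aestronglyMeasurable
        (ae_of_all _ fun ω ↦ (fderiv ℝ Φ _).le_of_opNorm_le (hΦ'_le _) _)
  · refine (fderiv ℝ Φ _).le_of_opNorm_le_of_le (hΦ'_le _) ((norm_sum_le _ _).trans ?_)
    gcongr with i
    rw [norm_smul]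
    gcongr
    exact hw' s i

end GaussianInterpolation

section GaussianComparison

variable {ι κ V : Type*} [Fintype ι] [Fintype κ] [NormedAddCommGroup V] [NormedSpace ℝ V]

theorem measurePreserving_gaussianPi_comp {e : κ → ι} (he : Injective e) :
    MeasurePreserving (fun ω k ↦ ω (e k)) (gaussianPi ι) (gaussianPi κ) := by
  have hindep : iIndepFun (fun k (ω : ι → ℝ) ↦ ω (e k)) (gaussianPi ι) :=
    (iIndepFun_pi (X := fun _ ↦ id) fun _ ↦ aemeasurable_id).precomp he
  refine ⟨by fun_prop, ?_⟩
  rw [(iIndepFun_iff_map_fun_eq_pi_map fun k ↦ (measurable_pi_apply (e k)).aemeasurable).1 hindep]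
  simp_rw [(measurePreserving_eval (fun _ : ι ↦ gaussianReal 0 1) _).map_eq]

theorem integral_gaussianPi_comp {e : κ → ι} (he : Injective e) {f : (κ → ℝ) → ℝ}
    (hf : Continuous f) : ∫ ω, f (fun k ↦ ω (e k)) ∂gaussianPi ι = ∫ ω, f ω ∂gaussianPi κ := by
  have hmp := measurePreserving_gaussianPi_comp he
  rw [← hmp.map_eq, integral_map hmp.measurable.aemeasurable hf.aestronglyMeasurable]

theorem integral_add_gaussianPi_sum {f : (ι → ℝ) → ℝ}
    {g : (κ → ℝ) → ℝ} (hf : Continuous f) (hf_int : Integrable f (gaussianPi ι))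
    (hg : Continuous g) (hg_int : Integrable g (gaussianPi κ)) :
    ∫ ω, (f (fun i ↦ ω (.inl i)) + g fun k ↦ ω (.inr k)) ∂gaussianPi (ι ⊕ κ)
      = ∫ ω, f ω ∂gaussianPi ι + ∫ ω, g ω ∂gaussianPi κ := by
  have hf_inl : Integrable (fun ω : ι ⊕ κ → ℝ ↦ f fun i ↦ ω (.inl i)) (gaussianPi (ι ⊕ κ)) :=
    (measurePreserving_gaussianPi_comp Sum.inl_injective).integrable_comp_of_integrable hf_int
  have hg_inr : Integrable (fun ω : ι ⊕ κ → ℝ ↦ g fun k ↦ ω (.inr k)) (gaussianPi (ι ⊕ κ)) :=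
    (measurePreserving_gaussianPi_comp Sum.inr_injective).integrable_comp_of_integrable hg_int
  rw [integral_add hf_inl hg_inr,
    integral_gaussianPi_comp Sum.inl_injective hf, integral_gaussianPi_comp Sum.inr_injective hg]

variable {Φ : V → ℝ} {K : ℝ≥0} {C : ℝ}

theorem monotoneOn_integral_cos_sin_smul (hΦ : ContDiff ℝ 2 Φ) (hΦK : LipschitzWith K Φ)
    (hΦC : ∀ z, ‖fderiv ℝ (fderiv ℝ Φ) z‖ ≤ C) (a : ι → V) (b : κ → V)
    (hab : ∀ z, ∑ i, fderiv ℝ (fderiv ℝ Φ) z (a i) (a i)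
      ≤ ∑ k, fderiv ℝ (fderiv ℝ Φ) z (b k) (b k)) :
    MonotoneOn (fun s : ℝ ↦ ∫ ω, Φ (∑ i, ω i • Sum.elim (fun i ↦ Real.cos s • a i)
      (fun k ↦ Real.sin s • b k) i) ∂gaussianPi (ι ⊕ κ)) (Icc 0 (Real.pi / 2)) := by
  set w : ℝ → ι ⊕ κ → V := fun s ↦ Sum.elim (fun i ↦ Real.cos s • a i) fun k ↦ Real.sin s • b k
  set w' : ℝ → ι ⊕ κ → V := fun s ↦ Sum.elim (fun i ↦ -Real.sin s • a i) fun k ↦ Real.cos s • b k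
  have hw : ∀ s i, HasDerivAt (fun s ↦ w s i) (w' s i) s := by
    rintro s (i | k)
    · exact (Real.hasDerivAt_cos s).smul_const (a i)
    · exact (Real.hasDerivAt_sin s).smul_const (b k)
  have hw' : ∀ s i, ‖w' s i‖ ≤ ‖Sum.elim a b‖ := by
    rintro s (i | k)
    · refine .trans ?_ (norm_le_pi_norm (Sum.elim a b) (.inl i))
      simpa [w', norm_smul] using mul_le_of_le_one_left (norm_nonneg (a i)) (Real.abs_sin_le_one s)
    · refine .trans ?_ (norm_le_pi_norm (Sum.elim a b) (.inr k))
      simpa [w', norm_smul] using mul_le_of_le_one_left (norm_nonneg (b k)) (Real.abs_cos_le_one s)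
  have hderiv := hasDerivAt_integral_comp_gaussianPi hΦ hΦK hΦC hw hw'
  refine monotoneOn_of_deriv_nonneg (convex_Icc _ _)
    (fun s _ ↦ (hderiv s).continuousAt.continuousWithinAt)
    (fun s _ ↦ (hderiv s).differentiableAt.differentiableWithinAt) fun s hs ↦ ?_
  rw [interior_Icc] at hs
  have hcos : 0 < Real.cos s := Real.cos_pos_of_mem_Ioo ⟨by linarith [hs.1, Real.pi_pos], hs.2⟩
  have hsin : 0 < Real.sin s := Real.sin_pos_of_mem_Ioo ⟨hs.1, by linarith [hs.2, Real.pi_pos]⟩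
  have hint : ∀ u v, Integrable (fun ω ↦ fderiv ℝ (fderiv ℝ Φ) (∑ j, ω j • w s j) u v)
      (gaussianPi (ι ⊕ κ)) := fun u v ↦
    integrable_gaussianPi_of_bounded ((((hΦ.fderiv_right (m := 1) (by norm_num)).continuous_fderiv
      one_ne_zero).comp (by fun_prop)).clm_apply continuous_const |>.clm_apply continuous_const)
      fun ω ↦ ContinuousLinearMap.le_of_opNorm_le _
        (ContinuousLinearMap.le_of_opNorm_le _ (hΦC _) u) v
  rw [(hderiv s).deriv, ← integral_finsetSum _ fun i _ ↦ hint _ _]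
  refine integral_nonneg fun ω ↦ ?_
  have hsum := mul_nonneg (mul_pos hsin hcos).le (sub_nonneg.2 (hab (∑ j, ω j • w s j)))
  refine hsum.trans_eq ?_
  simp only [w, w', Fintype.sum_sum_type, Sum.elim_inl, Sum.elim_inr, map_smul, neg_smul, map_neg,
    smul_apply, smul_eq_mul, mul_sub, Finset.mul_sum, Finset.sum_neg_distrib]
  rw [sub_eq_neg_add]
  simp only [mul_assoc, mul_left_comm]

theorem integral_gaussianPi_le_of_sum_fderiv_fderiv_le (hΦ : ContDiff ℝ 2 Φ)
    (hΦK : LipschitzWith K Φ) (hΦC : ∀ z, ‖fderiv ℝ (fderiv ℝ Φ) z‖ ≤ C) (a : ι → V) (b : κ → V)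
    (hab : ∀ z, ∑ i, fderiv ℝ (fderiv ℝ Φ) z (a i) (a i)
      ≤ ∑ k, fderiv ℝ (fderiv ℝ Φ) z (b k) (b k)) :
    ∫ ω, Φ (∑ i, ω i • a i) ∂gaussianPi ι ≤ ∫ ω, Φ (∑ k, ω k • b k) ∂gaussianPi κ := by
  have hmono := monotoneOn_integral_cos_sin_smul hΦ hΦK hΦC a b hab
    (left_mem_Icc.2 (by positivity)) (right_mem_Icc.2 (by positivity)) (by positivity)
  simp only [Fintype.sum_sum_type, Sum.elim_inl, Sum.elim_inr, Real.cos_zero, Real.sin_zero,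
    Real.cos_pi_div_two, Real.sin_pi_div_two, one_smul, zero_smul, smul_zero,
    Finset.sum_const_zero, add_zero, zero_add] at hmono
  rw [integral_gaussianPi_comp Sum.inl_injective (f := fun ω ↦ Φ (∑ i, ω i • a i))
      (hΦ.continuous.comp (by fun_prop)),
    integral_gaussianPi_comp Sum.inr_injective (f := fun ω ↦ Φ (∑ k, ω k • b k))
      (hΦ.continuous.comp (by fun_prop))] at hmono
  exact hmono

end GaussianComparison

theorem hasDerivAt_fderiv_apply_line {V : Type*} [NormedAddCommGroup V] [NormedSpace ℝ V]
    {Φ : V → ℝ} (hΦ : ContDiff ℝ 2 Φ) (z v w : V) :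
    HasDerivAt (fun t : ℝ ↦ fderiv ℝ Φ (z + t • v) w) (fderiv ℝ (fderiv ℝ Φ) z v w) 0 :=
  (ContinuousLinearMap.apply ℝ ℝ w).hasFDerivAt.comp_hasDerivAt (0 : ℝ)
    (((hΦ.fderiv_right (m := 1) (by norm_num)).differentiable one_ne_zero
      z).hasFDerivAt.hasLineDerivAt v)

section LogSumExp

variable {U : Type*} [Fintype U]

/-- The logarithm of a sum of exponentials, a smooth approximation of the maximum of a finite
family. -/
noncomputable def logSumExp (x : U → ℝ) : ℝ := Real.log (∑ u, Real.exp (x u))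

/-- The Gibbs weights of a finite family, the gradient of `logSumExp`. -/
noncomputable def softmax (x : U → ℝ) (u : U) : ℝ := Real.exp (x u) / ∑ v, Real.exp (x v)

theorem softmax_nonneg (x : U → ℝ) (u : U) : 0 ≤ softmax x u :=
  div_nonneg (Real.exp_pos _).le (Finset.sum_nonneg fun _ _ ↦ (Real.exp_pos _).le)

theorem le_logSumExp (x : U → ℝ) (u : U) : x u ≤ logSumExp x := by
  rw [← Real.log_exp (x u)]
  exact Real.log_le_log (Real.exp_pos _)
    (Finset.single_le_sum (f := fun u ↦ Real.exp (x u)) (fun _ _ ↦ (Real.exp_pos _).le)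
      (Finset.mem_univ u))

variable [Nonempty U]

theorem sum_exp_pos (x : U → ℝ) : 0 < ∑ u, Real.exp (x u) :=
  Finset.sum_pos (fun _ _ ↦ Real.exp_pos _) Finset.univ_nonempty

theorem sum_softmax (x : U → ℝ) : ∑ u, softmax x u = 1 := by
  simp_rw [softmax, ← Finset.sum_div, div_self (sum_exp_pos x).ne']

theorem logSumExp_add_const (x : U → ℝ) (c : ℝ) :
    logSumExp (fun u ↦ x u + c) = logSumExp x + c := by
  simp_rw [logSumExp, Real.exp_add, ← Finset.sum_mul]
  rw [Real.log_mul (sum_exp_pos x).ne' (Real.exp_pos c).ne', Real.log_exp]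

theorem logSumExp_mono : Monotone (logSumExp : (U → ℝ) → ℝ) := fun x _ hxy ↦
  Real.log_le_log (sum_exp_pos x) (Finset.sum_le_sum fun u _ ↦ Real.exp_le_exp.2 (hxy u))

theorem lipschitzWith_logSumExp : LipschitzWith 1 (logSumExp : (U → ℝ) → ℝ) :=
  LipschitzWith.of_le_add fun x y ↦ by
    rw [← logSumExp_add_const]
    exact logSumExp_mono fun u ↦
      sub_le_iff_le_add'.1 ((le_abs_self _).trans (dist_le_pi_dist x y u))

theorem logSumExp_le_of_le {x : U → ℝ} {c : ℝ} (hx : ∀ u, x u ≤ c) :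
    logSumExp x ≤ c + Real.log (Fintype.card U) := by
  have hcard : (0 : ℝ) < Fintype.card U := by exact_mod_cast Fintype.card_pos
  calc logSumExp x ≤ logSumExp fun _ : U ↦ c := logSumExp_mono hx
    _ = c + Real.log (Fintype.card U) := by
      simp [logSumExp, Real.log_mul hcard.ne' (Real.exp_pos c).ne', add_comm]

theorem hasDerivAt_logSumExp {x : ℝ → U → ℝ} {x' : U → ℝ} {t : ℝ}
    (hx : ∀ u, HasDerivAt (fun s ↦ x s u) (x' u) t) :
    HasDerivAt (fun s ↦ logSumExp (x s)) (∑ u, softmax (x t) u * x' u) t := by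
  refine ((HasDerivAt.fun_sum fun u _ ↦ (hx u).exp).log (sum_exp_pos _).ne').congr_deriv ?_
  simp only [softmax, Finset.sum_div, div_mul_eq_mul_div]

theorem hasDerivAt_softmax {x : ℝ → U → ℝ} {x' : U → ℝ} {t : ℝ}
    (hx : ∀ u, HasDerivAt (fun s ↦ x s u) (x' u) t) (u : U) :
    HasDerivAt (fun s ↦ softmax (x s) u)
      (softmax (x t) u * (x' u - ∑ v, softmax (x t) v * x' v)) t := by
  have hexp : ∀ y : U → ℝ, softmax y u = Real.exp (y u - logSumExp y) := fun y ↦ by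
    rw [Real.exp_sub, logSumExp, Real.exp_log (sum_exp_pos y), softmax]
  simp_rw [hexp (x _)]
  exact ((hx u).sub (hasDerivAt_logSumExp hx)).exp

theorem lipschitzWith_logSumExp_comp {W : Type*} [PseudoMetricSpace W] {F : W → ℝ} {K : ℝ≥0}
    (hF : LipschitzWith K F) :
    LipschitzWith K fun z : U → W ↦ logSumExp fun u ↦ F (z u) := by
  have hpi : LipschitzWith K fun (z : U → W) u ↦ F (z u) :=
    LipschitzWith.of_dist_le_mul fun z z' ↦ (dist_pi_le_iff (by positivity)).2 fun u ↦
      (hF.dist_le_mul _ _).trans (by gcongr; exact dist_le_pi_dist z z' u)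
  simpa only [one_mul] using! lipschitzWith_logSumExp.comp hpi

variable {W : Type*} [NormedAddCommGroup W] [NormedSpace ℝ W] {F : W → ℝ} {K : ℝ≥0} {C : ℝ}

theorem contDiff_logSumExp_comp {r : WithTop ℕ∞} (hF : ContDiff ℝ r F) :
    ContDiff ℝ r fun z : U → W ↦ logSumExp fun u ↦ F (z u) :=
  (ContDiff.sum fun u _ ↦ (hF.comp (contDiff_apply ℝ W u)).exp).log fun z ↦
    (sum_exp_pos fun u ↦ F (z u)).ne'

theorem fderiv_logSumExp_comp (hF : ContDiff ℝ 1 F) (z v : U → W) :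
    fderiv ℝ (fun z : U → W ↦ logSumExp fun u ↦ F (z u)) z v
      = ∑ u, softmax (fun u ↦ F (z u)) u * fderiv ℝ F (z u) (v u) := by
  have hF' : ∀ u, HasDerivAt (fun t : ℝ ↦ F ((z + t • v) u)) (fderiv ℝ F (z u) (v u)) 0 := fun u ↦
    (hF.differentiable one_ne_zero (z u)).hasFDerivAt.hasLineDerivAt (v u)
  rw [← ((contDiff_logSumExp_comp hF).differentiable one_ne_zero z).lineDeriv_eq_fderiv]
  refine HasDerivAt.deriv ?_
  simpa using hasDerivAt_logSumExp hF'

theorem fderiv_fderiv_logSumExp_comp (hF : ContDiff ℝ 2 F) (z v w : U → W) :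
    fderiv ℝ (fderiv ℝ fun z : U → W ↦ logSumExp fun u ↦ F (z u)) z v w
      = ∑ u, softmax (fun u ↦ F (z u)) u * (fderiv ℝ (fderiv ℝ F) (z u) (v u) (w u)
        + fderiv ℝ F (z u) (w u) * (fderiv ℝ F (z u) (v u)
          - ∑ u', softmax (fun u ↦ F (z u)) u' * fderiv ℝ F (z u') (v u'))) := by
  have hF' : ∀ u, HasDerivAt (fun t : ℝ ↦ F ((z + t • v) u)) (fderiv ℝ F (z u) (v u)) 0 := fun u ↦
    (hF.differentiable two_ne_zero (z u)).hasFDerivAt.hasLineDerivAt (v u)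
  have hF'' : ∀ u, HasDerivAt (fun t : ℝ ↦ fderiv ℝ F ((z + t • v) u) (w u))
      (fderiv ℝ (fderiv ℝ F) (z u) (v u) (w u)) 0 := fun u ↦
    hasDerivAt_fderiv_apply_line hF (z u) (v u) (w u)
  have hΦ'' := hasDerivAt_fderiv_apply_line (contDiff_logSumExp_comp (U := U) hF) z v w
  simp_rw [fderiv_logSumExp_comp (hF.of_le one_le_two)] at hΦ''
  rw [hΦ''.unique (HasDerivAt.fun_sum fun u _ ↦ (hasDerivAt_softmax hF' u).mul (hF'' u))]
  refine Finset.sum_congr rfl fun u _ ↦ ?_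
  simp only [zero_smul, add_zero]
  ring

theorem norm_fderiv_fderiv_logSumExp_comp_le (hF : ContDiff ℝ 2 F) (hFK : LipschitzWith K F)
    (hFC : ∀ w, ‖fderiv ℝ (fderiv ℝ F) w‖ ≤ C) (z : U → W) :
    ‖fderiv ℝ (fderiv ℝ fun z : U → W ↦ logSumExp fun u ↦ F (z u)) z‖ ≤ C + 2 * K ^ 2 := by
  have hC : 0 ≤ C := (norm_nonneg (fderiv ℝ (fderiv ℝ F) 0)).trans (hFC 0)
  set s := softmax fun u ↦ F (z u) with hs
  have hF' : ∀ (v : U → W) u, ‖fderiv ℝ F (z u) (v u)‖ ≤ K * ‖v‖ := fun v u ↦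
    (fderiv ℝ F _).le_of_opNorm_le_of_le (norm_fderiv_le_of_lipschitz ℝ hFK) (norm_le_pi_norm v u)
  have hmean : ∀ {y : U → ℝ} {c : ℝ}, (∀ u, ‖y u‖ ≤ c) → ‖∑ u, s u * y u‖ ≤ c := fun {y c} hy ↦ by
    calc ‖∑ u, s u * y u‖ ≤ ∑ u, s u * c := norm_sum_le_of_le _ fun u _ ↦ by
          rw [norm_mul, Real.norm_of_nonneg (softmax_nonneg _ u)]
          exact mul_le_mul_of_nonneg_left (hy u) (softmax_nonneg _ u)
      _ = c := by rw [← Finset.sum_mul, hs, sum_softmax, one_mul]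
  refine ContinuousLinearMap.opNorm_le_bound₂ _ (by positivity) fun v w ↦ ?_
  rw [fderiv_fderiv_logSumExp_comp hF]
  refine hmean fun u ↦ ?_
  calc _ ≤ C * ‖v‖ * ‖w‖ + K * ‖w‖ * (K * ‖v‖ + K * ‖v‖) := by
        refine norm_add_le_of_le (ContinuousLinearMap.le_of_opNorm_le_of_le _
          (ContinuousLinearMap.le_of_opNorm_le_of_le _ (hFC _) (norm_le_pi_norm v u))
          (norm_le_pi_norm w u)) ?_
        rw [norm_mul]
        gcongr
        · exact hF' w u
        · exact norm_sub_le_of_le (hF' v u) (hmean (hF' v))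
    _ = (C + 2 * K ^ 2) * ‖v‖ * ‖w‖ := by ring

end LogSumExp

section ChevetInequality

theorem sum_mul_eq_inner {ι : Type*} [Fintype ι] (x y : EuclideanSpace ℝ ι) :
    ∑ i, x i * y i = inner ℝ x y := by
  simp [PiLp.inner_apply, mul_comm]

section SumSMulSingle

variable {U I J : Type*} [Fintype I] [Fintype J] [DecidableEq J]

theorem sum_smul_prod_single_apply (e : U → EuclideanSpace ℝ I) (ω : I × J → ℝ)
    (u : U) :
    (∑ q : I × J, ω q • fun u ↦ (e u q.1 • EuclideanSpace.single q.2 (1 : ℝ), (0 : ℝ))) u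
      = (WithLp.toLp 2 fun j ↦ ∑ i, e u i * ω (i, j), 0) := by
  ext j <;> simp [Prod.fst_sum, Prod.snd_sum, Fintype.sum_prod_type_right, Pi.single_apply,
    mul_comm]

theorem sum_smul_sumElim_single_apply (c : ℝ) (e : U → EuclideanSpace ℝ I)
    (ω : J ⊕ I → ℝ) (u : U) :
    (∑ k, ω k • Sum.elim (fun j _ ↦ (EuclideanSpace.single j (1 : ℝ), (0 : ℝ)))
        (fun i u ↦ (0, c * e u i)) k) u
      = (WithLp.toLp 2 fun j ↦ ω (.inl j), c * ∑ i, e u i * ω (.inr i)) := by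
  ext j <;> simp [Prod.fst_sum, Prod.snd_sum, Finset.mul_sum, Pi.single_apply, mul_comm,
    mul_left_comm]

end SumSMulSingle

variable {U I J : Type*} [Fintype U] [Fintype I] [Fintype J]

theorem sum_mul_sub_weighted_mean {ι : Type*} [Fintype ι] {s : U → ℝ} (hs : ∑ u, s u = 1)
    (x : ι → U → ℝ) :
    ∑ i, ∑ u, s u * (x i u * (x i u - ∑ v, s v * x i v))
      = ∑ u, ∑ v, s u * s v * ∑ i, (x i u ^ 2 - x i u * x i v) := by
  have hmean : ∀ i u, x i u - ∑ v, s v * x i v = ∑ v, s v * (x i u - x i v) := fun i u ↦ by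
    simp only [mul_sub, Finset.sum_sub_distrib, ← Finset.sum_mul, hs, one_mul]
  simp_rw [hmean, Finset.mul_sum]
  rw [Finset.sum_comm]
  refine Finset.sum_congr rfl fun u _ ↦ ?_
  rw [Finset.sum_comm]
  refine Finset.sum_congr rfl fun v _ ↦ Finset.sum_congr rfl fun i _ ↦ ?_
  ring

theorem sum_variance_mul_le {s : U → ℝ} (hs₀ : ∀ u, 0 ≤ s u) (hs : ∑ u, s u = 1)
    {e : U → EuclideanSpace ℝ I} (he : ∀ u, ‖e u‖ = 1) {p : U → EuclideanSpace ℝ J} {L : ℝ}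
    (hp : ∀ u, ‖p u‖ ≤ L) :
    ∑ q : I × J, ∑ u, s u * (e u q.1 * p u q.2 * (e u q.1 * p u q.2
        - ∑ v, s v * (e v q.1 * p v q.2)))
      ≤ ∑ j, ∑ u, s u * (p u j * (p u j - ∑ v, s v * p v j))
        + ∑ i, ∑ u, s u * (L * e u i * (L * e u i - ∑ v, s v * (L * e v i))) := by
  rw [sum_mul_sub_weighted_mean hs fun (q : I × J) u ↦ e u q.1 * p u q.2,
    sum_mul_sub_weighted_mean hs fun j u ↦ p u j,
    sum_mul_sub_weighted_mean hs fun i u ↦ L * e u i]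
  simp_rw [← Finset.sum_add_distrib, ← mul_add]
  refine Finset.sum_le_sum fun u _ ↦ Finset.sum_le_sum fun v _ ↦
    mul_le_mul_of_nonneg_left ?_ (mul_nonneg (hs₀ u) (hs₀ v))
  have hpp : inner ℝ (p u) (p v) ≤ L ^ 2 := (real_inner_le_norm _ _).trans <| by
    rw [sq]; exact mul_le_mul (hp u) (hp v) (norm_nonneg _) ((norm_nonneg _).trans (hp u))
  have hee : inner ℝ (e u) (e v) ≤ 1 := by simpa [he] using real_inner_le_norm (e u) (e v)
  simp only [Finset.sum_sub_distrib, mul_pow, mul_mul_mul_comm _ (p u _), mul_mul_mul_comm L,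
    Fintype.sum_prod_type, ← Finset.mul_sum, ← Finset.sum_mul, ← EuclideanSpace.real_norm_sq_eq,
    sum_mul_eq_inner, he]
  nlinarith [mul_nonneg (sub_nonneg.2 hpp) (sub_nonneg.2 hee)]

section Shift

theorem lipschitzWith_comp_fst_add_snd {W : Type*} [PseudoMetricSpace W] {κ : W → ℝ} {K : ℝ≥0}
    (hκ : LipschitzWith K κ) :
    LipschitzWith (K + 1) fun w : W × ℝ ↦ κ w.1 + w.2 := by
  simpa using (hκ.comp LipschitzWith.prod_fst).add LipschitzWith.prod_snd

variable {W : Type*} [NormedAddCommGroup W] [NormedSpace ℝ W] {κ : W → ℝ} {K : ℝ≥0} {C : ℝ}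

theorem fderiv_comp_fst_add_snd (hκ : Differentiable ℝ κ) (w v : W × ℝ) :
    fderiv ℝ (fun w : W × ℝ ↦ κ w.1 + w.2) w v = fderiv ℝ κ w.1 v.1 + v.2 := by
  have hsum : HasFDerivAt (fun w : W × ℝ ↦ κ w.1 + w.2)
      ((fderiv ℝ κ w.1).comp (.fst ℝ W ℝ) + .snd ℝ W ℝ) w :=
    ((hκ w.1).hasFDerivAt.comp w hasFDerivAt_fst).add hasFDerivAt_snd
  rw [hsum.fderiv]
  rfl

theorem fderiv_fderiv_comp_fst_add_snd (hκ : ContDiff ℝ 2 κ) (w u v : W × ℝ) :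
    fderiv ℝ (fderiv ℝ fun w : W × ℝ ↦ κ w.1 + w.2) w u v
      = fderiv ℝ (fderiv ℝ κ) w.1 u.1 v.1 := by
  have hline := hasDerivAt_fderiv_apply_line (Φ := fun w : W × ℝ ↦ κ w.1 + w.2)
    ((hκ.comp contDiff_fst).add contDiff_snd) w u v
  simp_rw [fderiv_comp_fst_add_snd (hκ.differentiable two_ne_zero)] at hline
  exact hline.unique ((hasDerivAt_fderiv_apply_line hκ w.1 u.1 v.1).add_const v.2)

theorem norm_fderiv_fderiv_comp_fst_add_snd_le (hκ : ContDiff ℝ 2 κ)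
    (hκC : ∀ x, ‖fderiv ℝ (fderiv ℝ κ) x‖ ≤ C) (w : W × ℝ) :
    ‖fderiv ℝ (fderiv ℝ fun w : W × ℝ ↦ κ w.1 + w.2) w‖ ≤ C := by
  refine ContinuousLinearMap.opNorm_le_bound₂ _
    ((norm_nonneg (fderiv ℝ (fderiv ℝ κ) 0)).trans (hκC 0)) fun u v ↦ ?_
  rw [fderiv_fderiv_comp_fst_add_snd hκ]
  exact ContinuousLinearMap.le_of_opNorm_le_of_le _ (ContinuousLinearMap.le_of_opNorm_le_of_le _
    (hκC _) (norm_fst_le u)) (norm_fst_le v)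

end Shift

variable [Nonempty U]

theorem sum_fderiv_fderiv_logSumExp_le [DecidableEq J] {L : ℝ≥0} {κ : EuclideanSpace ℝ J → ℝ}
    (hκ : ContDiff ℝ 2 κ) (hκL : LipschitzWith L κ) {e : U → EuclideanSpace ℝ I}
    (he : ∀ u, ‖e u‖ = 1) (z : U → EuclideanSpace ℝ J × ℝ) :
    ∑ q : I × J, fderiv ℝ (fderiv ℝ fun z : U → EuclideanSpace ℝ J × ℝ ↦
        logSumExp fun u ↦ κ (z u).1 + (z u).2) z
        (fun u ↦ (e u q.1 • EuclideanSpace.single q.2 1, 0))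
        (fun u ↦ (e u q.1 • EuclideanSpace.single q.2 1, 0))
      ≤ ∑ j, fderiv ℝ (fderiv ℝ fun z : U → EuclideanSpace ℝ J × ℝ ↦
          logSumExp fun u ↦ κ (z u).1 + (z u).2) z
          (fun _ ↦ (EuclideanSpace.single j 1, 0)) (fun _ ↦ (EuclideanSpace.single j 1, 0))
        + ∑ i, fderiv ℝ (fderiv ℝ fun z : U → EuclideanSpace ℝ J × ℝ ↦
          logSumExp fun u ↦ κ (z u).1 + (z u).2) z
          (fun u ↦ (0, L * e u i)) (fun u ↦ (0, L * e u i)) := by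
  set s := softmax fun u ↦ κ (z u).1 + (z u).2
  set D : U → J → ℝ := fun u j ↦ fderiv ℝ (fderiv ℝ κ) (z u).1 (EuclideanSpace.single j 1)
    (EuclideanSpace.single j 1)
  have hgrad : ∀ u j, fderiv ℝ κ (z u).1 (EuclideanSpace.single j 1) = gradient κ (z u).1 j :=
    fun u j ↦ by
      rw [gradient, ← InnerProductSpace.toDual_symm_apply, EuclideanSpace.inner_single_right]
      simp
  have hgrad_le : ∀ u, ‖gradient κ (z u).1‖ ≤ L := fun u ↦ by
    rw [gradient, LinearIsometryEquiv.norm_map]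
    exact norm_fderiv_le_of_lipschitz ℝ hκL
  have hF : ContDiff ℝ 2 fun w : EuclideanSpace ℝ J × ℝ ↦ κ w.1 + w.2 :=
    (hκ.comp contDiff_fst).add contDiff_snd
  simp only [fderiv_fderiv_logSumExp_comp hF, fderiv_fderiv_comp_fst_add_snd hκ,
    fderiv_comp_fst_add_snd (hκ.differentiable two_ne_zero), map_smul, smul_apply, smul_eq_mul,
    map_zero, hgrad, add_zero, zero_add]
  have htrace : ∑ q : I × J, ∑ u, s u * (e u q.1 * (e u q.1 * D u q.2))
      = ∑ j, ∑ u, s u * D u j := by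
    rw [Fintype.sum_prod_type_right]
    refine Finset.sum_congr rfl fun j _ ↦ ?_
    rw [Finset.sum_comm]
    refine Finset.sum_congr rfl fun u _ ↦ ?_
    calc ∑ i, s u * (e u i * (e u i * D u j)) = s u * D u j * ∑ i, e u i ^ 2 := by
          rw [Finset.mul_sum]; exact Finset.sum_congr rfl fun i _ ↦ by ring
      _ = s u * D u j := by rw [← EuclideanSpace.real_norm_sq_eq, he, one_pow, mul_one]
  have hvar := sum_variance_mul_le (fun u ↦ softmax_nonneg _ u) (sum_softmax _ : ∑ u, s u = 1)
    he hgrad_le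
  simp only [mul_add, Finset.sum_add_distrib]
  linarith [htrace, hvar]

theorem integrable_logSumExp_gaussianPi (c : ℝ) (e : U → EuclideanSpace ℝ I) :
    Integrable (fun ω ↦ logSumExp fun u ↦ c * ∑ i, e u i * ω i) (gaussianPi I) := by
  refine (integrable_gaussianPi_of_lipschitzWith lipschitzWith_logSumExp
    fun i u ↦ c * e u i).congr (ae_of_all _ fun ω ↦ ?_)
  simp only [Finset.sum_fn, Pi.smul_def, smul_eq_mul, Finset.mul_sum, mul_comm, mul_left_comm]

variable {L : ℝ≥0} {κ : EuclideanSpace ℝ J → ℝ}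

theorem integral_logSumExp_gaussianPi_le_of_contDiff (hκ : ContDiff ℝ 2 κ)
    (hκL : LipschitzWith L κ) {C : ℝ} (hκC : ∀ x, ‖fderiv ℝ (fderiv ℝ κ) x‖ ≤ C)
    {e : U → EuclideanSpace ℝ I} (he : ∀ u, ‖e u‖ = 1) :
    ∫ ω, logSumExp (fun u ↦ κ (WithLp.toLp 2 fun j ↦ ∑ i, e u i * ω (i, j))) ∂gaussianPi (I × J)
      ≤ ∫ ω, κ (WithLp.toLp 2 ω) ∂gaussianPi J
        + ∫ ω, logSumExp (fun u ↦ L * ∑ i, e u i * ω i) ∂gaussianPi I := by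
  classical
  have hF : ContDiff ℝ 2 fun w : EuclideanSpace ℝ J × ℝ ↦ κ w.1 + w.2 :=
    (hκ.comp contDiff_fst).add contDiff_snd
  have hFL := lipschitzWith_comp_fst_add_snd hκL
  set Φ : (U → EuclideanSpace ℝ J × ℝ) → ℝ := fun z ↦ logSumExp fun u ↦ κ (z u).1 + (z u).2
  set a : I × J → U → EuclideanSpace ℝ J × ℝ := fun q u ↦
    (e u q.1 • EuclideanSpace.single q.2 1, 0)
  set b : J ⊕ I → U → EuclideanSpace ℝ J × ℝ :=
    Sum.elim (fun j _ ↦ (EuclideanSpace.single j 1, 0)) fun i u ↦ (0, L * e u i)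
  have hΦ : ContDiff ℝ 2 Φ := contDiff_logSumExp_comp hF
  have hΦL : LipschitzWith (L + 1) Φ := (lipschitzWith_logSumExp_comp (U := U) hFL :)
  have hΦC : ∀ z, ‖fderiv ℝ (fderiv ℝ Φ) z‖ ≤ C + 2 * ((L + 1 : ℝ≥0) : ℝ) ^ 2 := fun z ↦
    norm_fderiv_fderiv_logSumExp_comp_le hF hFL
      (norm_fderiv_fderiv_comp_fst_add_snd_le hκ hκC) z
  have hab : ∀ z, ∑ q, fderiv ℝ (fderiv ℝ Φ) z (a q) (a q)
      ≤ ∑ k, fderiv ℝ (fderiv ℝ Φ) z (b k) (b k) := fun z ↦ by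
    rw [Fintype.sum_sum_type]
    exact sum_fderiv_fderiv_logSumExp_le hκ hκL he z
  have hcomp := integral_gaussianPi_le_of_sum_fderiv_fderiv_le hΦ hΦL hΦC a b hab
  simp only [Φ, a, b, sum_smul_prod_single_apply, sum_smul_sumElim_single_apply, add_zero] at hcomp
  simp only [add_comm (κ _), logSumExp_add_const] at hcomp
  simp only [add_comm _ (κ _)] at hcomp
  exact hcomp.trans_eq (integral_add_gaussianPi_sum (hκ.continuous.comp (by fun_prop))
    (integrable_comp_toLp_gaussianPi hκL) (lipschitzWith_logSumExp.continuous.comp (by fun_prop))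
    (integrable_logSumExp_gaussianPi L e))

end ChevetInequality

section Mollification

variable {V F F' F'' : Type*} [NormedAddCommGroup V] [MeasurableSpace V] [BorelSpace V]
  [NormedAddCommGroup F] [NormedSpace ℝ F] [NormedAddCommGroup F'] [NormedSpace ℝ F']
  [NormedAddCommGroup F''] [NormedSpace ℝ F''] {μ : Measure V} [IsFiniteMeasureOnCompacts μ]

theorem lipschitzWith_convolution (B : F →L[ℝ] F' →L[ℝ] F'') {f : V → F} {g : V → F'} {K : ℝ≥0}
    (hf : Continuous f) (hf_supp : HasCompactSupport f) (hg : LipschitzWith K g) :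
    LipschitzWith (‖B‖₊ * (∫ t, ‖f t‖ ∂μ).toNNReal * K) (convolution f g B μ) := by
  have hint : ∀ x, Integrable (fun t ↦ B (f t) (g (x - t))) μ := fun x ↦ by
    have hg' := hg.continuous
    exact Continuous.integrable_of_hasCompactSupport (by fun_prop)
      (hf_supp.mono fun t ht ↦ by contrapose! ht; simp [notMem_support.1 ht])
  refine LipschitzWith.of_dist_le_mul fun x y ↦ ?_
  rw [dist_eq_norm, convolution, convolution, ← integral_sub (hint x) (hint y)]
  calc ‖∫ t, (B (f t) (g (x - t)) - B (f t) (g (y - t))) ∂μ‖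
      ≤ ∫ t, ‖B‖ * ‖f t‖ * (K * dist x y) ∂μ := by
        refine norm_integral_le_of_norm_le
          (((hf.integrable_of_hasCompactSupport hf_supp).norm.const_mul ‖B‖).mul_const _)
          (ae_of_all _ fun t ↦ ?_)
        rw [← map_sub]
        refine (B.le_opNorm₂ _ _).trans ?_
        gcongr
        simpa [dist_eq_norm] using hg.dist_le_mul (x - t) (y - t)
    _ = (‖B‖₊ * (∫ t, ‖f t‖ ∂μ).toNNReal * K : ℝ≥0) * dist x y := by
        rw [integral_mul_const, integral_const_mul]
        push_cast
        rw [Real.coe_toNNReal _ (integral_nonneg fun t ↦ norm_nonneg _)]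
        ring

theorem exists_contDiff_lipschitzWith_dist_le {V : Type*} [NormedAddCommGroup V]
    [NormedSpace ℝ V] [FiniteDimensional ℝ V]
    {κ : V → ℝ} {K : ℝ≥0} (hκ : LipschitzWith K κ) {ε : ℝ} (hε : 0 < ε) :
    ∃ κ' : V → ℝ, ContDiff ℝ 2 κ' ∧ LipschitzWith K κ' ∧
      (∃ C, ∀ x, ‖fderiv ℝ (fderiv ℝ κ') x‖ ≤ C) ∧ ∀ x, dist (κ' x) (κ x) ≤ ε := by
  obtain ⟨δ, hδ, hδε⟩ : ∃ δ > 0, K * δ ≤ ε :=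
    ⟨ε / (K + 1), by positivity, by rw [mul_div_assoc', div_le_iff₀ (by positivity)]; nlinarith⟩
  borelize V
  let φ : ContDiffBump (0 : V) := ⟨δ / 2, δ, half_pos hδ, half_lt_self hδ⟩
  let μ : Measure V := Measure.addHaar
  have hφ_supp : HasCompactSupport (φ.normed μ) := φ.hasCompactSupport_normed
  have hκ_int : LocallyIntegrable κ μ := hκ.continuous.locallyIntegrable
  refine ⟨convolution (φ.normed μ) κ (.lsmul ℝ ℝ) μ,
    hφ_supp.contDiff_convolution_left _ φ.contDiff_normed hκ_int, ?_, ?_, fun x ↦ ?_⟩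
  · refine (lipschitzWith_convolution _ φ.continuous_normed hφ_supp hκ).weaken ?_
    simp_rw [Real.norm_of_nonneg (φ.nonneg_normed _), φ.integral_normed, Real.toNNReal_one, mul_one]
    exact mul_le_of_le_one_left' ContinuousLinearMap.opNorm_lsmul_le
  · have hfderiv : fderiv ℝ (convolution (φ.normed μ) κ (.lsmul ℝ ℝ) μ)
        = convolution (fderiv ℝ (φ.normed μ)) κ ((ContinuousLinearMap.lsmul ℝ ℝ).precompL V) μ :=
      funext fun x ↦ (hφ_supp.hasFDerivAt_convolution_left _ φ.contDiff_normed hκ_int x).fderiv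
    rw [hfderiv]
    exact ⟨_, fun x ↦ norm_fderiv_le_of_lipschitz ℝ (lipschitzWith_convolution _
      (φ.contDiff_normed.continuous_fderiv one_ne_zero) (hφ_supp.fderiv ℝ) hκ)⟩
  · refine φ.dist_normed_convolution_le hκ.continuous.aestronglyMeasurable fun y hy ↦ ?_
    refine (hκ.dist_le_mul y x).trans (le_trans ?_ hδε)
    gcongr
    exact (Metric.mem_ball.1 hy).le

end Mollification

theorem lipschitzWith_ciSup {X : Type*} {ι : Sort*} [PseudoMetricSpace X] {K : ℝ≥0} [Nonempty ι]
    {f : ι → X → ℝ} (hf : ∀ i, LipschitzWith K (f i))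
    (hbdd : ∀ x, BddAbove (range fun i ↦ f i x)) : LipschitzWith K fun x ↦ ⨆ i, f i x :=
  LipschitzWith.of_le_add_mul K fun x y ↦ ciSup_le fun i ↦
    (LipschitzWith.le_add_mul (hf i) x y).trans
      (by gcongr; exact le_ciSup (hbdd y) i)

section ChevetLipschitz

variable {U I J : Type*} [Nonempty U] [Fintype I] [Fintype J] {L : ℝ≥0}
  {κ : EuclideanSpace ℝ J → ℝ}

theorem integrable_logSumExp_comp_gaussianPi [Fintype U] (hκ : LipschitzWith L κ)
    (e : U → EuclideanSpace ℝ I) :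
    Integrable (fun ω ↦ logSumExp fun u ↦ κ (WithLp.toLp 2 fun j ↦ ∑ i, e u i * ω (i, j)))
      (gaussianPi (I × J)) := by
  classical
  simpa only [sum_smul_prod_single_apply, add_zero] using integrable_gaussianPi_of_lipschitzWith
    (lipschitzWith_logSumExp_comp (lipschitzWith_comp_fst_add_snd hκ))
    fun (q : I × J) u ↦ (e u q.1 • EuclideanSpace.single q.2 (1 : ℝ), (0 : ℝ))

theorem integral_logSumExp_gaussianPi_le [Fintype U] (hκ : LipschitzWith L κ)
    {e : U → EuclideanSpace ℝ I} (he : ∀ u, ‖e u‖ = 1) :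
    ∫ ω, logSumExp (fun u ↦ κ (WithLp.toLp 2 fun j ↦ ∑ i, e u i * ω (i, j))) ∂gaussianPi (I × J)
      ≤ ∫ ω, κ (WithLp.toLp 2 ω) ∂gaussianPi J
        + ∫ ω, logSumExp (fun u ↦ L * ∑ i, e u i * ω i) ∂gaussianPi I := by
  refine le_of_forall_pos_le_add fun ε hε ↦ ?_
  obtain ⟨κ', hκ', hκ'L, ⟨C, hκ'C⟩, hdist⟩ := exists_contDiff_lipschitzWith_dist_le hκ (half_pos hε)
  have hclose : ∀ x, κ' x ≤ κ x + ε / 2 ∧ κ x ≤ κ' x + ε / 2 := fun x ↦ by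
    have := abs_le.1 (Real.dist_eq _ _ ▸ hdist x)
    constructor <;> linarith
  have hleft := integral_mono (integrable_logSumExp_comp_gaussianPi hκ e)
    ((integrable_logSumExp_comp_gaussianPi hκ'L e).add (integrable_const (ε / 2))) fun ω ↦
      (logSumExp_mono fun u ↦ (hclose _).2).trans_eq (logSumExp_add_const _ _)
  have hright := integral_mono (integrable_comp_toLp_gaussianPi hκ'L)
    ((integrable_comp_toLp_gaussianPi hκ).add (integrable_const (ε / 2))) fun ω ↦ (hclose _).1
  have hmid := integral_logSumExp_gaussianPi_le_of_contDiff hκ' hκ'L hκ'C he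
  simp only [Pi.add_apply] at hleft hright
  rw [integral_add (integrable_logSumExp_comp_gaussianPi hκ'L e) (integrable_const _)] at hleft
  rw [integral_add (integrable_comp_toLp_gaussianPi hκ) (integrable_const _)] at hright
  simp only [integral_const, probReal_univ, one_smul] at hleft hright
  linarith

theorem lipschitzWith_toLp_sum_mul (u : EuclideanSpace ℝ I) :
    LipschitzWith ‖u‖₊ fun G : EuclideanSpace ℝ (I × J) ↦
      (WithLp.toLp 2 fun j ↦ ∑ i, u i * G (i, j) : EuclideanSpace ℝ J) := by
  refine LipschitzWith.of_dist_le_mul fun G G' ↦ ?_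
  rw [coe_nnnorm, dist_eq_norm, dist_eq_norm, ← sq_le_sq₀ (norm_nonneg _) (by positivity), mul_pow]
  simp_rw [EuclideanSpace.real_norm_sq_eq, Fintype.sum_prod_type_right, Finset.mul_sum]
  refine Finset.sum_le_sum fun j _ ↦ ?_
  simpa [mul_sub, Finset.mul_sum] using
    Finset.sum_mul_sq_le_sq_mul_sq Finset.univ (fun i ↦ u i) fun i ↦ G (i, j) - G' (i, j)

theorem lipschitzWith_iSup_comp_toLp_sum_mul [Finite U] (hκ : LipschitzWith L κ)
    {e : U → EuclideanSpace ℝ I} (he : ∀ u, ‖e u‖ = 1) :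
    LipschitzWith L fun G : EuclideanSpace ℝ (I × J) ↦
      ⨆ u, κ (WithLp.toLp 2 fun j ↦ ∑ i, e u i * G (i, j)) :=
  lipschitzWith_ciSup (fun u ↦ by
    simpa [comp_def, show ‖e u‖₊ = 1 from NNReal.eq (he u)] using
      hκ.comp (lipschitzWith_toLp_sum_mul (J := J) (e u))) fun _ ↦ (finite_range _).bddAbove

theorem integral_iSup_gaussianPi_le [Finite U] (hκ : LipschitzWith L κ)
    {e : U → EuclideanSpace ℝ I} (he : ∀ u, ‖e u‖ = 1) :
    ∫ ω, ⨆ u, κ (WithLp.toLp 2 fun j ↦ ∑ i, e u i * ω (i, j)) ∂gaussianPi (I × J)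
      ≤ ∫ ω, κ (WithLp.toLp 2 ω) ∂gaussianPi J
        + L * ∫ ω, ‖(WithLp.toLp 2 ω : EuclideanSpace ℝ I)‖ ∂gaussianPi I := by
  have := Fintype.ofFinite U
  set S := fun ω : I × J → ℝ ↦ ⨆ u, κ (WithLp.toLp 2 fun j ↦ ∑ i, e u i * ω (i, j))
  have hS : Integrable S (gaussianPi (I × J)) :=
    integrable_comp_toLp_gaussianPi (lipschitzWith_iSup_comp_toLp_sum_mul hκ he)
  have hnorm : Integrable (fun ω ↦ ‖(WithLp.toLp 2 ω : EuclideanSpace ℝ I)‖) (gaussianPi I) :=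
    integrable_comp_toLp_gaussianPi lipschitzWith_one_norm
  have hscaled : ∀ β : ℝ≥0, 0 < β → ∫ ω, S ω ∂gaussianPi (I × J)
      ≤ ∫ ω, κ (WithLp.toLp 2 ω) ∂gaussianPi J
        + L * ∫ ω, ‖(WithLp.toLp 2 ω : EuclideanSpace ℝ I)‖ ∂gaussianPi I
        + Real.log (Fintype.card U) / β := fun β hβ ↦ by
    have hβκ : LipschitzWith (β * L) fun x ↦ (β : ℝ) * κ x := by
      simpa [comp_def] using (lipschitzWith_smul (β : ℝ)).comp hκ
    have hlower := integral_mono (hS.const_mul (β : ℝ)) (integrable_logSumExp_comp_gaussianPi hβκ e)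
      fun ω ↦ by
        rw [Real.mul_iSup_of_nonneg β.coe_nonneg]
        exact ciSup_le (le_logSumExp _)
    have hupper := integral_mono (integrable_logSumExp_gaussianPi (β * L : ℝ≥0) e)
      ((hnorm.const_mul (β * L : ℝ)).add (integrable_const (Real.log (Fintype.card U)))) fun ω ↦
        logSumExp_le_of_le fun u ↦ by
          rw [NNReal.coe_mul]
          refine mul_le_mul_of_nonneg_left ?_ (by positivity)
          simpa [sum_mul_eq_inner, he] using real_inner_le_norm (e u) (WithLp.toLp 2 ω)
    have hcomp := integral_logSumExp_gaussianPi_le hβκ he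
    simp only [Pi.add_apply] at hupper
    rw [integral_add (hnorm.const_mul _) (integrable_const _)] at hupper
    simp only [integral_const_mul, integral_const, probReal_univ, one_smul] at hlower hupper hcomp
    rw [← sub_le_iff_le_add', le_div_iff₀ (NNReal.coe_pos.2 hβ)]
    linarith
  have hlim := (tendsto_one_div_add_atTop_nhds_zero_nat.const_mul
    (Real.log (Fintype.card U))).const_add (∫ ω, κ (WithLp.toLp 2 ω) ∂gaussianPi J
      + L * ∫ ω, ‖(WithLp.toLp 2 ω : EuclideanSpace ℝ I)‖ ∂gaussianPi I)
  rw [mul_zero, add_zero] at hlim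
  refine ge_of_tendsto' hlim fun n ↦ ?_
  simpa [div_eq_mul_inv] using hscaled (n + 1) (by positivity)

end ChevetLipschitz

section LogAverage

variable {Ω : Type*} [MeasurableSpace Ω] {μ : Measure Ω} [IsProbabilityMeasure μ] {Y : Ω → ℝ}
  {a b : ℝ}

theorem integral_log_le_log_integral (hY : ∀ ω, 0 < Y ω) (hY_int : Integrable Y μ)
    (hlog_int : Integrable (fun ω ↦ Real.log (Y ω)) μ) :
    ∫ ω, Real.log (Y ω) ∂μ ≤ Real.log (∫ ω, Y ω ∂μ) := by
  set x := ∫ ω, Y ω ∂μ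
  have hx : 0 < x := (integral_pos_iff_support_of_nonneg (fun ω ↦ (hY ω).le) hY_int).2 <| by
    simp [support_eq_univ fun ω ↦ (hY ω).ne']
  have hratio : Integrable (fun ω ↦ Y ω / x - 1) μ := (hY_int.div_const x).sub (integrable_const 1)
  calc ∫ ω, Real.log (Y ω) ∂μ
      ≤ ∫ ω, (Real.log x + (Y ω / x - 1)) ∂μ :=
        integral_mono hlog_int ((integrable_const _).add hratio) fun ω ↦ by
          have hlog := Real.log_le_sub_one_of_pos (div_pos (hY ω) hx)
          rw [Real.log_div (hY ω).ne' hx.ne'] at hlog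
          exact sub_le_iff_le_add'.1 hlog
    _ = Real.log x := by
        rw [integral_add (integrable_const _) hratio,
          integral_sub (hY_int.div_const x) (integrable_const 1), integral_div, div_self hx.ne']
        simp

theorem log_add_sub_div_sub_sq_le_log {a x y : ℝ} (ha : 0 < a) (hx : 0 < x) (hay : a ≤ y) :
    Real.log x + (y - x) / x - (y - x) ^ 2 / (a * x) ≤ Real.log y := by
  have hy : 0 < y := ha.trans_le hay
  have hlog : 1 - (y / x)⁻¹ ≤ Real.log y - Real.log x := by
    rw [← Real.log_div hy.ne' hx.ne']
    exact Real.one_sub_inv_le_log_of_pos (by positivity)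
  have hinv : 1 - (y / x)⁻¹ = (y - x) / x - (y - x) ^ 2 / (y * x) := by field_simp; ring
  have hsq : (y - x) ^ 2 / (y * x) ≤ (y - x) ^ 2 / (a * x) := by gcongr
  linarith

theorem log_integral_sub_variance_le_integral_log (ha : 0 < a) (hY : AEMeasurable Y μ)
    (hYab : ∀ ω, Y ω ∈ Icc a b) :
    Real.log (∫ ω, Y ω ∂μ) - Var[Y; μ] / (a * ∫ ω, Y ω ∂μ) ≤ ∫ ω, Real.log (Y ω) ∂μ := by
  have hbdd : ∀ f : ℝ → ℝ, ContinuousOn f (Icc a b) → AEMeasurable (fun ω ↦ f (Y ω)) μ →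
      Integrable (fun ω ↦ f (Y ω)) μ := fun f hf hfY ↦ by
    obtain ⟨C, hC⟩ := isCompact_Icc.exists_bound_of_continuousOn hf
    exact .of_bound hfY.aestronglyMeasurable C (ae_of_all _ fun ω ↦ hC _ (hYab ω))
  have hY_int : Integrable Y μ := hbdd id continuousOn_id hY
  set x := ∫ ω, Y ω ∂μ
  have hx : 0 < x := ha.trans_le <| by
    simpa using integral_mono (integrable_const a) hY_int fun ω ↦ (hYab ω).1
  have hdev : Integrable (fun ω ↦ (Y ω - x) / x) μ := (hY_int.sub (integrable_const x)).div_const x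
  have hlin : Integrable (fun ω ↦ Real.log x + (Y ω - x) / x) μ := (integrable_const _).add hdev
  have hquad : Integrable (fun ω ↦ (Y ω - x) ^ 2 / (a * x)) μ :=
    hbdd (fun y ↦ (y - x) ^ 2 / (a * x)) (by fun_prop) (by fun_prop)
  calc Real.log x - Var[Y; μ] / (a * x)
      = ∫ ω, (Real.log x + (Y ω - x) / x - (Y ω - x) ^ 2 / (a * x)) ∂μ := by
        rw [integral_sub hlin hquad, integral_add (integrable_const _) hdev,
          integral_div, integral_div, integral_sub hY_int (integrable_const x),
          variance_eq_integral hY]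
        simp [x]
    _ ≤ ∫ ω, Real.log (Y ω) ∂μ := integral_mono (hlin.sub hquad)
        (hbdd Real.log (Real.continuousOn_log.mono fun y hy ↦ (ha.trans_le hy.1).ne')
          hY.log) fun ω ↦ log_add_sub_div_sub_sq_le_log ha hx (hYab ω).1

theorem log_integral_sub_variance_le_integral_log_average {U : Type*} [Fintype U] [Nonempty U]
    (ha : 0 < a) (hY : Measurable Y) (hYab : ∀ ω, Y ω ∈ Icc a b) :
    Real.log (∫ ω, Y ω ∂μ) - Var[Y; μ] / (a * ∫ ω, Y ω ∂μ) / Fintype.card U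
      ≤ ∫ x : U → Ω, Real.log ((∑ u, Y (x u)) / Fintype.card U) ∂Measure.pi fun _ ↦ μ := by
  have hcard : (Fintype.card U : ℝ) ≠ 0 := by simp
  have hY_memLp : MemLp Y 2 μ := memLp_of_bounded (ae_of_all _ hYab) hY.aestronglyMeasurable 2
  have hmean : ∫ x : U → Ω, (∑ u, Y (x u)) / Fintype.card U ∂Measure.pi (fun _ ↦ μ)
      = ∫ ω, Y ω ∂μ := by
    rw [integral_div, integral_finsetSum _ fun u _ ↦ integrable_comp_eval
      (hY_memLp.integrable one_le_two)]
    simp [integral_comp_eval (μ := fun _ : U ↦ μ) hY.aestronglyMeasurable, hcard]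
  have hvar : Var[fun x : U → Ω ↦ (∑ u, Y (x u)) / Fintype.card U; Measure.pi fun _ ↦ μ]
      = Var[Y; μ] / Fintype.card U := by
    have hsum := variance_sum_pi (μ := fun _ : U ↦ μ) fun _ ↦ hY_memLp
    simp only [Finset.sum_fn, Finset.sum_const, Finset.card_univ, nsmul_eq_mul] at hsum
    simp_rw [div_eq_inv_mul]
    rw [variance_const_mul, hsum]
    field_simp
  have hbound : ∀ x : U → Ω, (∑ u, Y (x u)) / Fintype.card U ∈ Icc a b := fun x ↦ by
    constructor
    · rw [le_div_iff₀' (by positivity), ← nsmul_eq_mul, ← Finset.card_univ]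
      exact Finset.card_nsmul_le_sum _ _ _ fun u _ ↦ (hYab (x u)).1
    · rw [div_le_iff₀' (by positivity), ← nsmul_eq_mul, ← Finset.card_univ]
      exact Finset.sum_le_card_nsmul _ _ _ fun u _ ↦ (hYab (x u)).2
  have hlog := log_integral_sub_variance_le_integral_log (μ := Measure.pi fun _ : U ↦ μ) ha
    (Measurable.aemeasurable (by fun_prop)) hbound
  rwa [hmean, hvar, div_right_comm] at hlog

end LogAverage

theorem measurePreserving_curry {I J X : Type*} [Fintype I] [Fintype J] [MeasurableSpace X]
    (μ : Measure X) [IsProbabilityMeasure μ] :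
    MeasurePreserving (MeasurableEquiv.curry I J X) (Measure.pi fun _ ↦ μ)
      (Measure.pi fun _ ↦ Measure.pi fun _ ↦ μ) := by
  refine ⟨(MeasurableEquiv.curry I J X).measurable, ?_⟩
  simpa only [Measure.infinitePi_eq_pi] using Measure.infinitePi_map_curry fun (_ : I) (_ : J) ↦ μ

section GaussianConcentration

theorem integral_logSumExp_smul_gaussianPi_le {U : Type*} [Fintype U] [Nonempty U] (c : ℝ) :
    ∫ ω, logSumExp (fun u ↦ c * ω u) ∂gaussianPi U
      ≤ Real.log (Fintype.card U) + c ^ 2 / 2 := by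
  have hexp_int : ∀ u, Integrable (fun ω ↦ Real.exp (c * ω u)) (gaussianPi U) := fun u ↦
    integrable_comp_eval (μ := fun _ : U ↦ gaussianReal 0 1) (integrable_exp_mul_gaussianReal c)
  have hexp : ∀ u, ∫ ω, Real.exp (c * ω u) ∂gaussianPi U = Real.exp (c ^ 2 / 2) := fun u ↦ by
    rw [integral_comp_eval (μ := fun _ : U ↦ gaussianReal 0 1) (f := fun x ↦ Real.exp (c * x))
      (by fun_prop)]
    simpa [mgf] using congrFun (mgf_id_gaussianReal (μ := 0) (v := 1)) c
  have hlse_int : Integrable (fun ω ↦ logSumExp fun u ↦ c * ω u) (gaussianPi U) := by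
    classical
    simpa [Pi.single_apply] using
      integrable_logSumExp_gaussianPi c fun u : U ↦ EuclideanSpace.single u 1
  calc ∫ ω, logSumExp (fun u ↦ c * ω u) ∂gaussianPi U
      ≤ Real.log (∫ ω, ∑ u, Real.exp (c * ω u) ∂gaussianPi U) :=
        integral_log_le_log_integral (fun ω ↦ sum_exp_pos _)
          (integrable_finsetSum _ fun u _ ↦ hexp_int u) hlse_int
    _ = Real.log (Fintype.card U) + c ^ 2 / 2 := by
        rw [integral_finsetSum _ fun u _ ↦ hexp_int u]
        simp_rw [hexp]
        simp [Real.log_mul]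

variable {J : Type*} [Fintype J] {L : ℝ≥0} {F : EuclideanSpace ℝ J → ℝ}

theorem integrable_logSumExp_copies {U : Type*} [Fintype U] [Nonempty U] (hF : LipschitzWith L F) :
    Integrable (fun ω ↦ logSumExp fun u ↦ F (WithLp.toLp 2 fun j ↦ ω (u, j)))
      (gaussianPi (U × J)) := by
  classical
  simpa using integrable_logSumExp_comp_gaussianPi hF fun u : U ↦ EuclideanSpace.single u (1 : ℝ)

-- The copies of `ω` are the images of an orthonormal family, so Chevet's inequality applies.
theorem integral_logSumExp_copies_le {U : Type*} [Fintype U] [Nonempty U] (hF : LipschitzWith L F) :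
    ∫ ω, logSumExp (fun u ↦ F (WithLp.toLp 2 fun j ↦ ω (u, j))) ∂gaussianPi (U × J)
      ≤ ∫ ω, F (WithLp.toLp 2 ω) ∂gaussianPi J + (Real.log (Fintype.card U) + L ^ 2 / 2) := by
  classical
  refine le_trans ?_ (add_le_add_right (integral_logSumExp_smul_gaussianPi_le (U := U) L) _)
  simpa using integral_logSumExp_gaussianPi_le hF
    (e := fun u : U ↦ EuclideanSpace.single u 1) (by simp)

theorem integral_log_average_exp_copies {U : Type*} [Fintype U] [Nonempty U]
    (hF : LipschitzWith L F) :
    ∫ x : U → J → ℝ, Real.log ((∑ u, Real.exp (F (WithLp.toLp 2 (x u)))) / Fintype.card U)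
        ∂Measure.pi (fun _ ↦ gaussianPi J)
      = ∫ ω, logSumExp (fun u ↦ F (WithLp.toLp 2 fun j ↦ ω (u, j))) ∂gaussianPi (U × J)
        - Real.log (Fintype.card U) := by
  have hlog : ∀ x : U → J → ℝ,
      Real.log ((∑ u, Real.exp (F (WithLp.toLp 2 (x u)))) / Fintype.card U)
        = logSumExp (fun u ↦ F (WithLp.toLp 2 (x u))) - Real.log (Fintype.card U) := fun x ↦
    Real.log_div (sum_exp_pos _).ne' (by simp)
  simp_rw [hlog]
  rw [← (measurePreserving_curry (gaussianReal 0 1)).integral_comp']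
  exact (integral_sub (integrable_logSumExp_copies hF) (integrable_const _)).trans (by simp)

theorem log_integral_exp_gaussianPi_le_of_bounded (hF : LipschitzWith L F)
    {B : ℝ} (hB : ∀ x, |F x| ≤ B) :
    Real.log (∫ ω, Real.exp (F (WithLp.toLp 2 ω)) ∂gaussianPi J)
      ≤ ∫ ω, F (WithLp.toLp 2 ω) ∂gaussianPi J + L ^ 2 / 2 := by
  set Y : (J → ℝ) → ℝ := fun ω ↦ Real.exp (F (WithLp.toLp 2 ω))
  have hY : Measurable Y := (Real.continuous_exp.comp (hF.continuous.comp (by fun_prop))).measurable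
  have hYab : ∀ ω, Y ω ∈ Icc (Real.exp (-B)) (Real.exp B) := fun ω ↦
    ⟨Real.exp_le_exp.2 (abs_le.1 (hB _)).1, Real.exp_le_exp.2 (abs_le.1 (hB _)).2⟩
  set D := Var[Y; gaussianPi J] / (Real.exp (-B) * ∫ ω, Y ω ∂gaussianPi J)
  have hcopies : ∀ N : ℕ, Real.log (∫ ω, Y ω ∂gaussianPi J)
      ≤ ∫ ω, F (WithLp.toLp 2 ω) ∂gaussianPi J + L ^ 2 / 2 + D * (1 / (N + 1)) := fun N ↦ by
    have haverage := log_integral_sub_variance_le_integral_log_average (U := Fin (N + 1))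
      (μ := gaussianPi J) (Real.exp_pos _) hY hYab
    have hchevet := integral_logSumExp_copies_le (U := Fin (N + 1)) hF
    rw [integral_log_average_exp_copies hF] at haverage
    simp only [Fintype.card_fin, Nat.cast_add_one] at haverage hchevet
    rw [mul_one_div]
    linarith
  have hlim := (tendsto_one_div_add_atTop_nhds_zero_nat.const_mul D).const_add
    (∫ ω, F (WithLp.toLp 2 ω) ∂gaussianPi J + L ^ 2 / 2)
  rw [mul_zero, add_zero] at hlim
  exact ge_of_tendsto' hlim hcopies

theorem lintegral_exp_gaussianPi_le_of_bounded (hF : LipschitzWith L F)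
    {B : ℝ} (hB : ∀ x, |F x| ≤ B) :
    ∫⁻ ω, ENNReal.ofReal (Real.exp (F (WithLp.toLp 2 ω))) ∂gaussianPi J
      ≤ ENNReal.ofReal (Real.exp (∫ ω, F (WithLp.toLp 2 ω) ∂gaussianPi J + L ^ 2 / 2)) := by
  have hint : Integrable (fun ω ↦ Real.exp (F (WithLp.toLp 2 ω))) (gaussianPi J) :=
    integrable_gaussianPi_of_bounded (hF.continuous.comp (by fun_prop)).rexp (C := Real.exp B)
      fun ω ↦ by simpa using (abs_le.1 (hB _)).2
  rw [← ofReal_integral_eq_lintegral_ofReal hint (ae_of_all _ fun _ ↦ (Real.exp_pos _).le)]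
  exact ENNReal.ofReal_le_ofReal
    ((Real.log_le_iff_le_exp (integral_exp_pos hint)).1
      (log_integral_exp_gaussianPi_le_of_bounded hF hB))

theorem lintegral_exp_gaussianPi_le (hF : LipschitzWith L F) :
    ∫⁻ ω, ENNReal.ofReal (Real.exp (F (WithLp.toLp 2 ω))) ∂gaussianPi J
      ≤ ENNReal.ofReal (Real.exp (∫ ω, F (WithLp.toLp 2 ω) ∂gaussianPi J + L ^ 2 / 2)) := by
  set T : ℕ → EuclideanSpace ℝ J → ℝ := fun k x ↦ max (-k) (min k (F x))
  have hT : ∀ k, LipschitzWith L (T k) := fun k ↦ (hF.const_min k).const_max (-k)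
  have hT_cont : ∀ k, Continuous fun ω ↦ T k (WithLp.toLp 2 ω) := fun k ↦
    (hT k).continuous.comp (by fun_prop)
  have hT_le : ∀ k x, |T k x| ≤ k := fun k x ↦
    abs_le.2 ⟨le_max_left _ _, max_le (by simp) (min_le_left _ _)⟩
  have hT_le_abs : ∀ k x, |T k x| ≤ |F x| := fun k x ↦ abs_le.2
    ⟨le_max_of_le_right (le_min ((neg_nonpos.2 (abs_nonneg _)).trans k.cast_nonneg) (neg_abs_le _)),
      max_le ((neg_nonpos.2 k.cast_nonneg).trans (abs_nonneg _))
        ((min_le_right _ _).trans (le_abs_self _))⟩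
  have hT_tendsto : ∀ x, Tendsto (fun k ↦ T k x) atTop (𝓝 (F x)) := fun x ↦ by
    refine tendsto_const_nhds.congr' ?_
    filter_upwards [eventually_ge_atTop ⌈|F x|⌉₊] with k hk
    have hFk := abs_le.1 (Nat.ceil_le.1 hk)
    simp [T, hFk.1, hFk.2]
  have hmean : Tendsto (fun k ↦ ∫ ω, T k (WithLp.toLp 2 ω) ∂gaussianPi J) atTop
      (𝓝 (∫ ω, F (WithLp.toLp 2 ω) ∂gaussianPi J)) :=
    tendsto_integral_of_dominated_convergence (fun ω ↦ |F (WithLp.toLp 2 ω)|)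
      (fun k ↦ (hT_cont k).aestronglyMeasurable) (integrable_comp_toLp_gaussianPi hF).abs
      (fun k ↦ ae_of_all _ fun ω ↦ hT_le_abs k _) (ae_of_all _ fun ω ↦ hT_tendsto _)
  calc ∫⁻ ω, ENNReal.ofReal (Real.exp (F (WithLp.toLp 2 ω))) ∂gaussianPi J
      = ∫⁻ ω, liminf (fun k ↦ ENNReal.ofReal (Real.exp (T k (WithLp.toLp 2 ω)))) atTop
          ∂gaussianPi J := lintegral_congr fun ω ↦
        (ENNReal.tendsto_ofReal ((hT_tendsto _).rexp)).liminf_eq.symm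
    _ ≤ liminf (fun k ↦ ∫⁻ ω, ENNReal.ofReal (Real.exp (T k (WithLp.toLp 2 ω))) ∂gaussianPi J)
          atTop :=
        lintegral_liminf_le fun k ↦ ((hT_cont k).rexp.measurable).ennreal_ofReal
    _ ≤ liminf (fun k ↦ ENNReal.ofReal
          (Real.exp (∫ ω, T k (WithLp.toLp 2 ω) ∂gaussianPi J + L ^ 2 / 2))) atTop :=
        liminf_le_liminf (Eventually.of_forall fun k ↦
          lintegral_exp_gaussianPi_le_of_bounded (hT k) (hT_le k))
    _ = ENNReal.ofReal (Real.exp (∫ ω, F (WithLp.toLp 2 ω) ∂gaussianPi J + L ^ 2 / 2)) :=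
        (ENNReal.tendsto_ofReal (hmean.add_const _).rexp).liminf_eq

theorem hasSubgaussianMGF_gaussianPi (hF : LipschitzWith L F) :
    HasSubgaussianMGF (fun ω ↦ F (WithLp.toLp 2 ω) - ∫ ω, F (WithLp.toLp 2 ω) ∂gaussianPi J) (L ^ 2)
      (gaussianPi J) := by
  have hmgf : ∀ t : ℝ, ∫⁻ ω, ENNReal.ofReal (Real.exp (t * (F (WithLp.toLp 2 ω)
      - ∫ ω, F (WithLp.toLp 2 ω) ∂gaussianPi J))) ∂gaussianPi J
      ≤ ENNReal.ofReal (Real.exp (L ^ 2 * t ^ 2 / 2)) := fun t ↦ by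
    set a := ∫ ω, F (WithLp.toLp 2 ω) ∂gaussianPi J with ha
    have htF : LipschitzWith (‖t‖₊ * L) fun x ↦ t * (F x - a) := by
      simpa [comp_def] using (lipschitzWith_smul t).comp (hF.sub (LipschitzWith.const a))
    refine (lintegral_exp_gaussianPi_le htF).trans_eq ?_
    rw [integral_const_mul, integral_sub (integrable_comp_toLp_gaussianPi hF) (integrable_const a)]
    simp [ha, mul_pow, mul_comm]
  have hint : ∀ t : ℝ, Integrable (fun ω ↦ Real.exp (t * (F (WithLp.toLp 2 ω)
      - ∫ ω, F (WithLp.toLp 2 ω) ∂gaussianPi J))) (gaussianPi J) := fun t ↦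
    (lintegral_ofReal_ne_top_iff_integrable
      (((hF.continuous.comp (by fun_prop)).sub
        continuous_const).const_mul t).rexp.aestronglyMeasurable
      (ae_of_all _ fun _ ↦ (Real.exp_pos _).le)).1 ((hmgf t).trans_lt ENNReal.ofReal_lt_top).ne
  refine ⟨hint, fun t ↦ ?_⟩
  rw [mgf, ← ENNReal.ofReal_le_ofReal_iff (Real.exp_pos _).le, ofReal_integral_eq_lintegral_ofReal
    (hint t) (ae_of_all _ fun _ ↦ (Real.exp_pos _).le)]
  exact hmgf t

end GaussianConcentration

section ChevetTail

variable {I J : Type*} [Fintype I] [Fintype J] {L : ℝ≥0} {κ : EuclideanSpace ℝ J → ℝ} {r : ℝ}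

theorem gaussianPi_exists_lt_le_of_finite {U : Type*} [Finite U] [Nonempty U]
    (hκ : LipschitzWith L κ) {e : U → EuclideanSpace ℝ I} (he : ∀ u, ‖e u‖ = 1) (hr : 0 ≤ r) :
    gaussianPi (I × J) {ω | ∃ u, ∫ ω, κ (WithLp.toLp 2 ω) ∂gaussianPi J
        + L * ∫ ω, ‖(WithLp.toLp 2 ω : EuclideanSpace ℝ I)‖ ∂gaussianPi I + r
        < κ (WithLp.toLp 2 fun j ↦ ∑ i, e u i * ω (i, j))}
      ≤ ENNReal.ofReal (Real.exp (-r ^ 2 / (2 * L ^ 2))) := by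
  have htail := (hasSubgaussianMGF_gaussianPi
    (lipschitzWith_iSup_comp_toLp_sum_mul hκ he)).measure_ge_le hr
  rw [NNReal.coe_pow] at htail
  refine le_trans (measure_mono ?_)
    ((ENNReal.le_ofReal_iff_toReal_le (measure_ne_top _ _) (Real.exp_pos _).le).2 htail)
  rintro ω ⟨u, hu⟩
  have hle : κ (WithLp.toLp 2 fun j ↦ ∑ i, e u i * ω (i, j))
      ≤ ⨆ u, κ (WithLp.toLp 2 fun j ↦ ∑ i, e u i * ω (i, j)) :=
    le_ciSup (f := fun u ↦ κ (WithLp.toLp 2 fun j ↦ ∑ i, e u i * ω (i, j)))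
      (finite_range _).bddAbove u
  exact le_sub_iff_add_le'.2 ((add_le_add_left (integral_iSup_gaussianPi_le hκ he) r).trans
    (hu.le.trans hle))

theorem gaussianPi_exists_lt_le (hκ : LipschitzWith L κ) (hr : 0 ≤ r) :
    gaussianPi (I × J) {ω | ∃ u : EuclideanSpace ℝ I, ‖u‖ = 1 ∧
        ∫ ω, κ (WithLp.toLp 2 ω) ∂gaussianPi J
        + L * ∫ ω, ‖(WithLp.toLp 2 ω : EuclideanSpace ℝ I)‖ ∂gaussianPi I + r
        < κ (WithLp.toLp 2 fun j ↦ ∑ i, u i * ω (i, j))}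
      ≤ ENNReal.ofReal (Real.exp (-r ^ 2 / (2 * L ^ 2))) := by
  set b := ∫ ω, κ (WithLp.toLp 2 ω) ∂gaussianPi J
    + L * ∫ ω, ‖(WithLp.toLp 2 ω : EuclideanSpace ℝ I)‖ ∂gaussianPi I + r
  rcases isEmpty_or_nonempty (Metric.sphere (0 : EuclideanSpace ℝ I) 1) with hS | hS
  · simp only [mem_sphere_zero_iff_norm, isEmpty_subtype] at hS
    simp [hS]
  let d : ℕ → Metric.sphere (0 : EuclideanSpace ℝ I) 1 := TopologicalSpace.denseSeq _
  have hsubset : {ω : I × J → ℝ | ∃ u : EuclideanSpace ℝ I, ‖u‖ = 1 ∧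
      b < κ (WithLp.toLp 2 fun j ↦ ∑ i, u i * ω (i, j))} ⊆
      ⋃ N : ℕ, {ω | ∃ n : Fin (N + 1),
        b < κ (WithLp.toLp 2 fun j ↦ ∑ i, (d n).1 i * ω (i, j))} := by
    rintro ω ⟨u, hu, hb⟩
    have hopen : IsOpen {v : Metric.sphere (0 : EuclideanSpace ℝ I) 1 |
        b < κ (WithLp.toLp 2 fun j ↦ ∑ i, v.1 i * ω (i, j))} :=
      isOpen_lt continuous_const (hκ.continuous.comp (by fun_prop))
    obtain ⟨n, hn⟩ := (TopologicalSpace.denseRange_denseSeq _).exists_mem_open hopen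
      ⟨⟨u, by simpa using hu⟩, hb⟩
    exact mem_iUnion.2 ⟨n, Fin.last n, hn⟩
  have hmono : Monotone fun N : ℕ ↦ {ω : I × J → ℝ |
      ∃ n : Fin (N + 1), b < κ (WithLp.toLp 2 fun j ↦ ∑ i, (d n).1 i * ω (i, j))} :=
    fun N M hNM ω ⟨n, hn⟩ ↦ ⟨Fin.castLE (by omega) n, hn⟩
  refine (measure_mono hsubset).trans ?_
  rw [hmono.measure_iUnion]
  exact iSup_le fun N ↦ gaussianPi_exists_lt_le_of_finite hκ (by simp) hr

end ChevetTail

section Multipliers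

variable {n : ℕ}

/-- The multipliers `(ν, λ)` over which `ξ_up` is a supremum, those with `0 ≤ ν` and
`0 ≤ λ i ≤ 2 ν`, as a convex cone. -/
def multiplierCone (n : ℕ) : ConvexCone ℝ (ℝ × (Fin n → ℝ)) where
  carrier := {p | 0 ≤ p.1 ∧ ∀ i, 0 ≤ p.2 i ∧ p.2 i ≤ 2 * p.1}
  smul_mem' c hc p hp := ⟨mul_nonneg hc.le hp.1, fun i ↦ ⟨mul_nonneg hc.le (hp.2 i).1, by
    simpa [mul_left_comm] using mul_le_mul_of_nonneg_left (hp.2 i).2 hc.le⟩⟩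
  add_mem' p hp q hq := ⟨add_nonneg hp.1 hq.1, fun i ↦ ⟨add_nonneg (hp.2 i).1 (hq.2 i).1, by
    simpa [mul_add] using add_le_add (hp.2 i).2 (hq.2 i).2⟩⟩

theorem mem_multiplierCone {p : ℝ × (Fin n → ℝ)} :
    p ∈ multiplierCone n ↔ 0 ≤ p.1 ∧ ∀ i, 0 ≤ p.2 i ∧ p.2 i ≤ 2 * p.1 := Iff.rfl

theorem zero_mem_multiplierCone : 0 ∈ multiplierCone n := by simp [mem_multiplierCone]

instance : Nonempty (multiplierCone n) := ⟨⟨0, zero_mem_multiplierCone⟩⟩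

/-- The vector `ν·1 − λ` attached to a multiplier `(ν, λ)`; as `(ν, λ)` runs over
`multiplierCone n`, its entries run over `[-ν, ν]`. -/
def multiplierShift (p : ℝ × (Fin n → ℝ)) : EuclideanSpace ℝ (Fin n) :=
  WithLp.toLp 2 fun i ↦ p.1 - p.2 i

theorem multiplierShift_zero : multiplierShift (0 : ℝ × (Fin n → ℝ)) = 0 := by
  ext i
  simp [multiplierShift]

theorem multiplierShift_add (p q : ℝ × (Fin n → ℝ)) :
    multiplierShift (p + q) = multiplierShift p + multiplierShift q := by
  ext i
  simp [multiplierShift, add_sub_add_comm]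

theorem multiplierShift_smul (c : ℝ) (p : ℝ × (Fin n → ℝ)) :
    multiplierShift (c • p) = c • multiplierShift p := by
  ext i
  simp [multiplierShift, mul_sub]

@[fun_prop]
theorem continuous_multiplierShift : Continuous (multiplierShift : ℝ × (Fin n → ℝ) → _) := by
  unfold multiplierShift
  fun_prop

theorem tailSum_nonneg {k : ℕ} {xt lam : Fin n → ℝ} (hxt : ∀ i, 0 ≤ xt i) (hlam : ∀ i, 0 ≤ lam i) :
    0 ≤ tailSum k lam xt :=
  Finset.sum_nonneg fun i _ ↦ mul_nonneg (hlam i) (hxt i)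

theorem tailSum_le_sum {k : ℕ} {xt lam : Fin n → ℝ} (hxt : ∀ i, 0 ≤ xt i)
    (hlam : ∀ i, 0 ≤ lam i) : tailSum k lam xt ≤ ∑ i, lam i * xt i :=
  Finset.sum_le_sum_of_subset_of_nonneg (Finset.filter_subset _ _)
    fun i _ _ ↦ mul_nonneg (hlam i) (hxt i)

/-- The vector `λ = 2 ν · 1{x̃ + w < 0}` turns `ν·1 − λ` into `ν` times the sign vector of
`x̃ + w`. -/
theorem exists_mem_multiplierCone_inner_sub_eq {xt : Fin n → ℝ} (hxt : ∀ i, 0 ≤ xt i) {ν : ℝ}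
    (hν : 0 ≤ ν) (w : EuclideanSpace ℝ (Fin n)) :
    ∃ p ∈ multiplierCone n, inner ℝ (multiplierShift p) w - ∑ i, p.2 i * xt i
      = ν * (l1norm (xt + w.ofLp) - l1norm xt) := by
  classical
  refine ⟨(ν, fun i ↦ if xt i + w i < 0 then 2 * ν else 0), ⟨hν, fun i ↦ ?_⟩, ?_⟩
  · dsimp only
    split_ifs <;> constructor <;> linarith
  · rw [← sum_mul_eq_inner, ← Finset.sum_sub_distrib, l1norm, l1norm, ← Finset.sum_sub_distrib,
      Finset.mul_sum]
    refine Finset.sum_congr rfl fun i _ ↦ ?_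
    rw [Pi.add_apply, abs_of_nonneg (hxt i)]
    simp only [multiplierShift]
    split_ifs with hi
    · rw [abs_of_neg hi]
      ring
    · rw [abs_of_nonneg (not_lt.1 hi)]
      ring

end Multipliers

section DualPenalty

variable {m n k : ℕ} {C : ℝ} {xt : Fin n → ℝ}

theorem e2norm_eq_norm {d : ℕ} (x : Fin d → ℝ) :
    e2norm x = ‖(WithLp.toLp 2 x : EuclideanSpace ℝ (Fin d))‖ := by
  simp [e2norm, EuclideanSpace.norm_eq]

/-- The part of `ξ_up` depending on `h`, namely the supremum over `(ν, λ)` of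
`-C ‖h + ν·1 − λ‖ − ∑ λᵢ x̃ᵢ`. -/
noncomputable def dualPenalty (k : ℕ) (C : ℝ) (xt : Fin n → ℝ) (h : EuclideanSpace ℝ (Fin n)) : ℝ :=
  ⨆ p : multiplierCone n, (-(C * ‖h + multiplierShift p.1‖) - tailSum k p.1.2 xt)

theorem bddAbove_dualPenalty (hC : 0 ≤ C) (hxt : ∀ i, 0 ≤ xt i) (h : EuclideanSpace ℝ (Fin n)) :
    BddAbove (range fun p : multiplierCone n ↦
      -(C * ‖h + multiplierShift p.1‖) - tailSum k p.1.2 xt) := by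
  refine ⟨0, forall_mem_range.2 fun p ↦ ?_⟩
  have hnorm : 0 ≤ C * ‖h + multiplierShift p.1‖ := by positivity
  have htail := tailSum_nonneg (k := k) hxt fun i ↦ (p.2.2 i).1
  linarith

theorem le_dualPenalty (hC : 0 ≤ C) (hxt : ∀ i, 0 ≤ xt i) (h : EuclideanSpace ℝ (Fin n))
    {p : ℝ × (Fin n → ℝ)} (hp : p ∈ multiplierCone n) :
    -(C * ‖h + multiplierShift p‖) - ∑ i, p.2 i * xt i ≤ dualPenalty k C xt h :=
  (sub_le_sub_left (tailSum_le_sum hxt fun i ↦ (hp.2 i).1) _).trans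
    (le_ciSup (bddAbove_dualPenalty hC hxt h) ⟨p, hp⟩)

theorem lipschitzWith_dualPenalty (hC : 0 ≤ C) (hxt : ∀ i, 0 ≤ xt i) :
    LipschitzWith C.toNNReal (dualPenalty k C xt) := by
  refine lipschitzWith_ciSup (fun p ↦ LipschitzWith.of_dist_le_mul fun x y ↦ ?_)
    (bddAbove_dualPenalty hC hxt)
  rw [Real.dist_eq, Real.coe_toNNReal C hC, dist_comm, dist_eq_norm,
    sub_sub_sub_cancel_right, neg_sub_neg, ← mul_sub, abs_mul, abs_of_nonneg hC]
  gcongr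
  simpa using abs_norm_sub_norm_le (y + multiplierShift p.1) (x + multiplierShift p.1)

theorem xiUpFun_eq (hC : 0 ≤ C) (hxt : ∀ i, 0 ≤ xt i) (σ : ℝ) (p : (Fin m → ℝ) × (Fin n → ℝ)) :
    xiUpFun m n k σ C xt p
      = Real.sqrt (C ^ 2 + σ ^ 2) * ‖(WithLp.toLp 2 p.1 : EuclideanSpace ℝ (Fin m))‖
        + dualPenalty k C xt (WithLp.toLp 2 p.2) := by
  rw [dualPenalty, add_ciSup (bddAbove_dualPenalty hC hxt _), xiUpFun, iSup]
  congr 1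
  ext z
  have hshift : ∀ (ν : ℝ) (lam : Fin n → ℝ),
      (WithLp.toLp 2 p.2 + multiplierShift (ν, lam) : EuclideanSpace ℝ (Fin n))
        = WithLp.toLp 2 fun i ↦ p.2 i + ν - lam i := fun ν lam ↦ by
    ext i
    simp [multiplierShift, add_sub_assoc]
  simp only [Set.mem_ofPred_eq, mem_range, Subtype.exists, Prod.exists, mem_multiplierCone, hshift,
    e2norm_eq_norm, exists_prop, and_assoc, eq_comm (a := z), sub_eq_add_neg, add_assoc]

end DualPenalty

section Duality

theorem exists_forall_mem_lt_of_forall_mem_exists_lt {E F : Type*}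
    [TopologicalSpace E] [AddCommGroup E] [Module ℝ E] [IsTopologicalAddGroup E]
    [ContinuousSMul ℝ E] [TopologicalSpace F] [AddCommGroup F] [Module ℝ F]
    [IsTopologicalAddGroup F] [ContinuousSMul ℝ F] {X : Set E} {Y : Set F} {f : E → F → ℝ} {t : ℝ}
    (hX : X.Nonempty) (hXc : IsCompact X)
    (hf : ∀ y ∈ Y, Continuous fun x ↦ f x y) (hf' : ∀ x ∈ X, Continuous (f x))
    (hconv : ∀ y ∈ Y, ConvexOn ℝ X fun x ↦ f x y) (hconc : ∀ x ∈ X, ConcaveOn ℝ Y (f x))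
    (h : ∀ x ∈ X, ∃ y ∈ Y, t < f x y) : ∃ y ∈ Y, ∀ x ∈ X, t < f x y := by
  obtain ⟨x₀, hx₀⟩ := hX
  choose! y hyY hy using h
  obtain ⟨T, hTX, hT⟩ := hXc.elim_nhds_subcover (fun x ↦ {x' | t < f x' (y x)})
    fun x hx ↦ (isOpen_lt continuous_const (hf _ (hyY x hx))).mem_nhds (hy x hx)
  refine Sion.exists_lt_iInf_of_lt_iInf_of_finite ⟨x₀, hx₀⟩ hXc
    (fun y hy ↦ (hf y hy).lowerSemicontinuous.lowerSemicontinuousOn _)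
    (fun y hy ↦ (hconv y hy).quasiconvexOn) (hconc x₀ hx₀).1
    (fun x hx ↦ (hf' x hx).upperSemicontinuous.upperSemicontinuousOn _)
    (fun x hx ↦ (hconc x hx).quasiconcaveOn) (hconv _ (hyY x₀ hx₀)).1
    (T.finite_toSet.image y) (image_subset_iff.2 fun x hx ↦ hyY x (hTX x hx)) fun x hx ↦ ?_
  obtain ⟨x', hx'T, hlt⟩ := mem_iUnion₂.1 (hT hx)
  exact ⟨y x', mem_image_of_mem y hx'T, hlt⟩

variable {m n k : ℕ} {C t : ℝ} {xt : Fin n → ℝ}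
  {T : EuclideanSpace ℝ (Fin n) →L[ℝ] EuclideanSpace ℝ (Fin m)} {v : EuclideanSpace ℝ (Fin m)}

/-- The Lagrangian of minimising `‖T w - v‖` subject to `‖x̃ + w‖₁ ≤ ‖x̃‖₁`. Both the norm and the
constraint are written as suprema of affine functions of `w`, with dual variables `u` and
`(ν, λ)`. -/
noncomputable def lassoLagrangian (T : EuclideanSpace ℝ (Fin n) →L[ℝ] EuclideanSpace ℝ (Fin m))
    (v : EuclideanSpace ℝ (Fin m)) (xt : Fin n → ℝ) (w : EuclideanSpace ℝ (Fin n))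
    (y : EuclideanSpace ℝ (Fin m) × ℝ × (Fin n → ℝ)) : ℝ :=
  inner ℝ y.1 (T w - v) + inner ℝ (multiplierShift y.2) w - ∑ i, y.2.2 i * xt i

theorem lassoLagrangian_eq (w : EuclideanSpace ℝ (Fin n))
    (y : EuclideanSpace ℝ (Fin m) × ℝ × (Fin n → ℝ)) :
    lassoLagrangian T v xt w y = inner ℝ (T.adjoint y.1 + multiplierShift y.2) w
      - inner ℝ y.1 v - ∑ i, y.2.2 i * xt i := by
  rw [lassoLagrangian, inner_sub_right, inner_add_left, ContinuousLinearMap.adjoint_inner_left]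
  ring

theorem convexOn_lassoLagrangian {X : Set (EuclideanSpace ℝ (Fin n))} (hX : Convex ℝ X)
    (y : EuclideanSpace ℝ (Fin m) × ℝ × (Fin n → ℝ)) :
    ConvexOn ℝ X fun w ↦ lassoLagrangian T v xt w y := by
  simp only [lassoLagrangian_eq, sub_eq_add_neg]
  exact (((innerₗ _ (T.adjoint y.1 + multiplierShift y.2)).convexOn hX).add_const _).add_const _

theorem concaveOn_lassoLagrangian {Y : Set (EuclideanSpace ℝ (Fin m) × ℝ × (Fin n → ℝ))}
    (hY : Convex ℝ Y) (w : EuclideanSpace ℝ (Fin n)) :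
    ConcaveOn ℝ Y (lassoLagrangian T v xt w) := by
  refine ⟨hY, fun y _ y' _ a b _ _ _ ↦ le_of_eq ?_⟩
  simp only [lassoLagrangian, Prod.fst_add, Prod.snd_add, Prod.smul_fst, Prod.smul_snd,
    multiplierShift_add, multiplierShift_smul, inner_add_left, real_inner_smul_left, Pi.add_apply,
    Pi.smul_apply, smul_eq_mul, add_mul, Finset.sum_add_distrib, mul_assoc, ← Finset.mul_sum]
  ring

theorem exists_lt_lassoLagrangian (ht : 0 ≤ t) (hxt : ∀ i, 0 ≤ xt i)
    (hlasso : ∀ w : EuclideanSpace ℝ (Fin n), l1norm (xt + w.ofLp) ≤ l1norm xt → t < ‖T w - v‖)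
    (w : EuclideanSpace ℝ (Fin n)) :
    ∃ y ∈ Metric.closedBall (0 : EuclideanSpace ℝ (Fin m)) 1 ×ˢ (multiplierCone n : Set _),
      t < lassoLagrangian T v xt w y := by
  rcases le_or_gt (l1norm (xt + w.ofLp)) (l1norm xt) with hw | hw
  · set z := T w - v with hz
    have htz : t < ‖z‖ := hlasso w hw
    have hz0 : ‖z‖ ≠ 0 := (ht.trans_lt htz).ne'
    refine ⟨(‖z‖⁻¹ • z, 0), ⟨?_, zero_mem_multiplierCone⟩, ?_⟩
    · simp [norm_smul, inv_mul_cancel₀ hz0]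
    · have hval : lassoLagrangian T v xt w (‖z‖⁻¹ • z, 0) = ‖z‖ := by
        simp [lassoLagrangian, ← hz, multiplierShift_zero, real_inner_smul_left, sq,
          inv_mul_cancel_left₀ hz0]
      rwa [hval]
  · set gap := l1norm (xt + w.ofLp) - l1norm xt with hgap
    have hgap0 : 0 < gap := sub_pos.2 hw
    obtain ⟨p, hp, hval⟩ := exists_mem_multiplierCone_inner_sub_eq hxt
      (div_nonneg (add_nonneg ht zero_le_one) hgap0.le) w
    refine ⟨(0, p), ⟨by simp, hp⟩, ?_⟩
    rw [lassoLagrangian, inner_zero_left, zero_add, hval, ← hgap, div_mul_cancel₀ _ hgap0.ne']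
    exact lt_add_one t

theorem exists_mem_closedBall_inner_eq {E : Type*} [NormedAddCommGroup E] [InnerProductSpace ℝ E]
    (hC : 0 ≤ C) (b : E) : ∃ w ∈ Metric.closedBall (0 : E) C, inner ℝ b w = -(C * ‖b‖) := by
  rcases eq_or_ne b 0 with rfl | hb
  · exact ⟨0, by simpa, by simp⟩
  have hb0 : ‖b‖ ≠ 0 := norm_ne_zero_iff.2 hb
  refine ⟨-(C / ‖b‖) • b, ?_, ?_⟩
  · simp [norm_smul, abs_of_nonneg hC, div_mul_cancel₀ _ hb0]
  · rw [inner_smul_right, real_inner_self_eq_norm_sq]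
    field_simp

theorem exists_lt_neg_mul_norm_adjoint_add_sub (hC : 0 ≤ C) (ht : 0 ≤ t) (hxt : ∀ i, 0 ≤ xt i)
    (hlasso : ∀ w : EuclideanSpace ℝ (Fin n), l1norm (xt + w.ofLp) ≤ l1norm xt → t < ‖T w - v‖) :
    ∃ u, ‖u‖ ≤ 1 ∧ ∃ p ∈ multiplierCone n,
      t < -(C * ‖T.adjoint u + multiplierShift p‖) - inner ℝ u v - ∑ i, p.2 i * xt i := by
  obtain ⟨⟨u, p⟩, ⟨hu, hp⟩, hlt⟩ := exists_forall_mem_lt_of_forall_mem_exists_lt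
    (X := Metric.closedBall (0 : EuclideanSpace ℝ (Fin n)) C)
    (f := lassoLagrangian T v xt) (Metric.nonempty_closedBall.2 hC) (isCompact_closedBall 0 C)
    (fun y _ ↦ by unfold lassoLagrangian; fun_prop)
    (fun w _ ↦ by unfold lassoLagrangian; fun_prop)
    (fun y _ ↦ convexOn_lassoLagrangian (convex_closedBall 0 C) y)
    (fun w _ ↦ concaveOn_lassoLagrangian
      ((convex_closedBall 0 1).prod (multiplierCone n).convex) w)
    (fun w _ ↦ exists_lt_lassoLagrangian ht hxt hlasso w)
  obtain ⟨w, hw, hinner⟩ :=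
    exists_mem_closedBall_inner_eq hC (T.adjoint u + multiplierShift p)
  refine ⟨u, mem_closedBall_zero_iff.1 hu, p, hp, ?_⟩
  simpa only [lassoLagrangian_eq, hinner] using hlt w hw

/-- Since `0 ≤ t`, the dual point `u` is nonzero, and by homogeneity it may be rescaled to the unit
sphere. -/
theorem exists_norm_eq_one_lt_dualPenalty_sub (hC : 0 ≤ C) (ht : 0 ≤ t) (hxt : ∀ i, 0 ≤ xt i)
    (hlasso : ∀ w : EuclideanSpace ℝ (Fin n), l1norm (xt + w.ofLp) ≤ l1norm xt → t < ‖T w - v‖) :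
    ∃ u, ‖u‖ = 1 ∧ t < dualPenalty k C xt (T.adjoint u) - inner ℝ u v := by
  obtain ⟨u, hu1, p, hp, hlt⟩ := exists_lt_neg_mul_norm_adjoint_add_sub hC ht hxt hlasso
  set b := T.adjoint u + multiplierShift p with hb
  have hu : u ≠ 0 := by
    rintro rfl
    have hpen : 0 ≤ C * ‖b‖ := by positivity
    have hsum : 0 ≤ ∑ i, p.2 i * xt i :=
      Finset.sum_nonneg fun i _ ↦ mul_nonneg (hp.2 i).1 (hxt i)
    rw [inner_zero_left] at hlt
    linarith
  set s := ‖u‖⁻¹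
  have hs1 : 1 ≤ s := (one_le_inv₀ (norm_pos_iff.2 hu)).2 hu1
  have hs0 : 0 < s := zero_lt_one.trans_le hs1
  have hsu : ‖s • u‖ = 1 := by
    rw [norm_smul, norm_inv, norm_norm, inv_mul_cancel₀ (norm_ne_zero_iff.2 hu)]
  refine ⟨s • u, hsu, ?_⟩
  have hpen := le_dualPenalty (k := k) hC hxt (T.adjoint (s • u))
    ((multiplierCone n).smul_mem hs0 hp)
  have hscale : -(C * ‖T.adjoint (s • u) + multiplierShift (s • p)‖) - ∑ i, (s • p).2 i * xt i
      = s * (-(C * ‖b‖) - ∑ i, p.2 i * xt i) := by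
    simp only [map_smul, multiplierShift_smul, ← smul_add, ← hb, norm_smul,
      Real.norm_of_nonneg hs0.le, Prod.smul_snd, Pi.smul_apply, smul_eq_mul, mul_assoc,
      ← Finset.mul_sum]
    ring
  rw [hscale] at hpen
  rw [real_inner_smul_left]
  calc t ≤ s * t := le_mul_of_one_le_left ht hs1
    _ < s * (-(C * ‖b‖) - inner ℝ u v - ∑ i, p.2 i * xt i) := mul_lt_mul_of_pos_left hlt hs0
    _ = s * (-(C * ‖b‖) - ∑ i, p.2 i * xt i) - s * inner ℝ u v := by ring
    _ ≤ _ := sub_le_sub_right hpen _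

theorem lassoVal_add_eq_norm (xt : Fin n → ℝ) (ω : (Fin m → Fin n → ℝ) × (Fin m → ℝ))
    (w : EuclideanSpace ℝ (Fin n)) :
    lassoVal m n xt ω (xt + w.ofLp)
      = ‖(Matrix.of ω.1).toEuclideanLin w - WithLp.toLp 2 ω.2‖ := by
  rw [lassoVal, e2norm_eq_norm, ← norm_neg]
  congr 1
  ext i
  simp [mul_add, Finset.sum_add_distrib, Matrix.mulVec, dotProduct]

theorem toEuclideanLin_adjoint_apply (A : Fin m → Fin n → ℝ) (u : EuclideanSpace ℝ (Fin m)) :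
    ((Matrix.of A).toEuclideanLin.toContinuousLinearMap).adjoint u
      = WithLp.toLp 2 fun j ↦ ∑ i, u i * A i j := by
  refine ext_inner_right ℝ fun w ↦ ?_
  rw [ContinuousLinearMap.adjoint_inner_left, ← sum_mul_eq_inner, ← sum_mul_eq_inner]
  simp only [LinearMap.coe_toContinuousLinearMap', Matrix.toLpLin_apply, Matrix.mulVec,
    dotProduct, Matrix.of_apply, Finset.mul_sum, Finset.sum_mul, mul_assoc]
  exact Finset.sum_comm

theorem zetaObj_le_lassoVal {ω : (Fin m → Fin n → ℝ) × (Fin m → ℝ)} {x : Fin n → ℝ}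
    (hx : l1norm x ≤ l1norm xt) : zetaObj m n xt ω ≤ lassoVal m n xt ω x :=
  csInf_le ⟨0, by rintro _ ⟨x', -, rfl⟩; exact Real.sqrt_nonneg _⟩ ⟨x, hx, rfl⟩

theorem exists_norm_eq_one_lt_of_lt_zetaObj (hC : 0 ≤ C) (ht : 0 ≤ t) (hxt : ∀ i, 0 ≤ xt i)
    {ω : (Fin m → Fin n → ℝ) × (Fin m → ℝ)} (hω : t < zetaObj m n xt ω) :
    ∃ u : EuclideanSpace ℝ (Fin m), ‖u‖ = 1 ∧
      t < dualPenalty k C xt (WithLp.toLp 2 fun j ↦ ∑ i, u i * ω.1 i j) - ∑ i, u i * ω.2 i := by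
  have hlasso : ∀ w : EuclideanSpace ℝ (Fin n), l1norm (xt + w.ofLp) ≤ l1norm xt →
      t < ‖(Matrix.of ω.1).toEuclideanLin.toContinuousLinearMap w - WithLp.toLp 2 ω.2‖ :=
    fun w hw ↦ hω.trans_le ((zetaObj_le_lassoVal hw).trans_eq (lassoVal_add_eq_norm xt ω w))
  obtain ⟨u, hu, hlt⟩ := exists_norm_eq_one_lt_dualPenalty_sub (k := k) hC ht hxt hlasso
  rw [toEuclideanLin_adjoint_apply, ← sum_mul_eq_inner] at hlt
  exact ⟨u, hu, hlt⟩

end Duality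

section LassoProbability

variable {m n k : ℕ} {σ C r : ℝ} {xt : Fin n → ℝ}

/-- `dualPenalty` with the noise appended as one more Gaussian coordinate: applied to the
combination of the rows of `[A, v / σ]` with weights `u`, it is the dual objective at `u`. -/
noncomputable def noisyDualPenalty (k : ℕ) (σ C : ℝ) (xt : Fin n → ℝ)
    (x : EuclideanSpace ℝ (Fin n ⊕ Unit)) : ℝ :=
  dualPenalty k C xt (WithLp.toLp 2 fun j ↦ x (.inl j)) - σ * x (.inr ())

theorem lipschitzWith_noisyDualPenalty (hC : 0 ≤ C) (hxt : ∀ i, 0 ≤ xt i) :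
    LipschitzWith (√(C ^ 2 + σ ^ 2)).toNNReal (noisyDualPenalty k σ C xt) := by
  refine LipschitzWith.of_dist_le_mul fun x y ↦ ?_
  rw [Real.coe_toNNReal _ (Real.sqrt_nonneg _)]
  set x' : EuclideanSpace ℝ (Fin n) := WithLp.toLp 2 fun j ↦ x (.inl j) with hx'
  set y' : EuclideanSpace ℝ (Fin n) := WithLp.toLp 2 fun j ↦ y (.inl j) with hy'
  have hnorm : dist x y ^ 2 = dist x' y' ^ 2 + |x (.inr ()) - y (.inr ())| ^ 2 := by
    simp [dist_eq_norm, EuclideanSpace.real_norm_sq_eq, hx', hy']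
  have hpen : dist (dualPenalty k C xt x') (dualPenalty k C xt y') ≤ C * dist x' y' := by
    simpa [hC] using (lipschitzWith_dualPenalty (k := k) hC hxt).dist_le_mul x' y'
  have hnoise : dist (σ * x (.inr ())) (σ * y (.inr ()))
      = |σ| * |x (.inr ()) - y (.inr ())| := by
    rw [Real.dist_eq, ← mul_sub, abs_mul]
  calc dist (noisyDualPenalty k σ C xt x) (noisyDualPenalty k σ C xt y)
      ≤ C * dist x' y' + |σ| * |x (.inr ()) - y (.inr ())| :=
        (dist_sub_sub_le _ _ _ _).trans (add_le_add hpen hnoise.le)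
    _ ≤ √((C ^ 2 + σ ^ 2) * dist x y ^ 2) := by
        refine Real.le_sqrt_of_sq_le ?_
        rw [hnorm, ← sq_abs σ]
        nlinarith [sq_nonneg (C * |x (.inr ()) - y (.inr ())| - |σ| * dist x' y')]
    _ = √(C ^ 2 + σ ^ 2) * dist x y := by
        rw [Real.sqrt_mul (by positivity), Real.sqrt_sq dist_nonneg]

theorem integral_noisyDualPenalty (hC : 0 ≤ C) (hxt : ∀ i, 0 ≤ xt i) :
    ∫ ω, noisyDualPenalty k σ C xt (WithLp.toLp 2 ω) ∂gaussianPi (Fin n ⊕ Unit)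
      = ∫ h, dualPenalty k C xt (WithLp.toLp 2 h) ∂gaussianPi (Fin n) := by
  have hlip := lipschitzWith_dualPenalty (k := k) hC hxt
  have hnoise : ∫ ω, -(σ * ω ()) ∂gaussianPi Unit = 0 := by
    rw [integral_neg, integral_const_mul,
      integral_comp_eval (μ := fun _ : Unit ↦ gaussianReal 0 1) (f := fun x ↦ x)
        aestronglyMeasurable_id, integral_id_gaussianReal, mul_zero, neg_zero]
  have hsum := integral_add_gaussianPi_sum
    (f := fun h ↦ dualPenalty k C xt (WithLp.toLp 2 h)) (g := fun ω : Unit → ℝ ↦ -(σ * ω ()))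
    (hlip.continuous.comp (by fun_prop)) (integrable_comp_toLp_gaussianPi hlip) (by fun_prop)
    ((integrable_eval_gaussianPi ()).const_mul σ).neg
  rwa [hnoise, add_zero] at hsum

theorem integral_xiUpFun (hC : 0 ≤ C) (hxt : ∀ i, 0 ≤ xt i) :
    ∫ p, xiUpFun m n k σ C xt p ∂muGH m n
      = ∫ h, dualPenalty k C xt (WithLp.toLp 2 h) ∂gaussianPi (Fin n)
        + √(C ^ 2 + σ ^ 2)
          * ∫ g, ‖(WithLp.toLp 2 g : EuclideanSpace ℝ (Fin m))‖ ∂gaussianPi (Fin m) := by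
  have hmu : muGH m n = (gaussianPi (Fin m)).prod (gaussianPi (Fin n)) := rfl
  have hg := (integrable_comp_toLp_gaussianPi
    (lipschitzWith_one_norm (E := EuclideanSpace ℝ (Fin m)))).const_mul √(C ^ 2 + σ ^ 2)
  have hh := integrable_comp_toLp_gaussianPi (lipschitzWith_dualPenalty (k := k) hC hxt)
  simp only [xiUpFun_eq hC hxt, hmu]
  rw [integral_add (hg.comp_fst _) (hh.comp_snd _),
    integral_fun_fst (fun g ↦ √(C ^ 2 + σ ^ 2) * ‖(WithLp.toLp 2 g : EuclideanSpace ℝ (Fin m))‖),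
    integral_fun_snd (fun h ↦ dualPenalty k C xt (WithLp.toLp 2 h)), integral_const_mul]
  simp [add_comm]

theorem measurePreserving_gaussianPi_muAv (σ : ℝ) :
    MeasurePreserving (fun ω : Fin m × (Fin n ⊕ Unit) → ℝ ↦
      ((fun i j ↦ ω (i, .inl j)), fun i ↦ σ * ω (i, .inr ()))) (gaussianPi _) (muAv m n σ) := by
  have hinj : Injective (Sum.elim (Prod.map id .inl) fun i ↦ (i, .inr ()) :
      (Fin m × Fin n) ⊕ Fin m → Fin m × (Fin n ⊕ Unit)) := by
    rintro (⟨i, j⟩ | i) (⟨i', j'⟩ | i') <;> simp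
  have hscale : MeasurePreserving (σ * ·) (gaussianReal 0 1) (gaussianReal 0 (σ ^ 2).toNNReal) := by
    refine ⟨by fun_prop, ?_⟩
    rw [gaussianReal_map_const_mul, mul_zero, mul_one]
    congr 1
    exact (Real.toNNReal_of_nonneg (sq_nonneg σ)).symm
  have hA := measurePreserving_curry (I := Fin m) (J := Fin n) (gaussianReal 0 1)
  have hv := measurePreserving_pi (fun _ : Fin m ↦ gaussianReal 0 1) _ fun _ ↦ hscale
  have hsplit := measurePreserving_sumPiEquivProdPi
    fun _ : (Fin m × Fin n) ⊕ Fin m ↦ gaussianReal 0 1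
  exact ((hA.prod hv).comp hsplit).comp (measurePreserving_gaussianPi_comp hinj)

/-- The samples `(A, v)` for which the dual objective exceeds `t` somewhere on the unit sphere. -/
def dualExceedance (m k : ℕ) (C : ℝ) (xt : Fin n → ℝ) (t : ℝ) :
    Set ((Fin m → Fin n → ℝ) × (Fin m → ℝ)) :=
  {ω | ∃ u : EuclideanSpace ℝ (Fin m), ‖u‖ = 1 ∧
    t < dualPenalty k C xt (WithLp.toLp 2 fun j ↦ ∑ i, u i * ω.1 i j) - ∑ i, u i * ω.2 i}

theorem isOpen_dualExceedance (hC : 0 ≤ C) (hxt : ∀ i, 0 ≤ xt i) (t : ℝ) :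
    IsOpen (dualExceedance m k C xt t) := by
  simp only [dualExceedance, ofPred_exists, ofPred_and]
  refine isOpen_iUnion fun u ↦ isOpen_const.inter (isOpen_lt continuous_const ?_)
  exact ((lipschitzWith_dualPenalty hC hxt).continuous.comp (by fun_prop)).sub (by fun_prop)

theorem muAv_dualExceedance_le (hC : 0 ≤ C) (hxt : ∀ i, 0 ≤ xt i) (hr : 0 ≤ r) :
    muAv m n σ (dualExceedance m k C xt (∫ p, xiUpFun m n k σ C xt p ∂muGH m n + r))
      ≤ ENNReal.ofReal (Real.exp (-r ^ 2 / (2 * (C ^ 2 + σ ^ 2)))) := by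
  have hbound := gaussianPi_exists_lt_le (I := Fin m)
    (lipschitzWith_noisyDualPenalty (k := k) (σ := σ) hC hxt) hr
  rw [integral_noisyDualPenalty hC hxt, Real.coe_toNNReal _ (Real.sqrt_nonneg _),
    ← integral_xiUpFun hC hxt, Real.sq_sqrt (by positivity)] at hbound
  rw [← (measurePreserving_gaussianPi_muAv σ).measure_preimage
    (isOpen_dualExceedance hC hxt _).measurableSet.nullMeasurableSet]
  simpa only [dualExceedance, noisyDualPenalty, preimage_ofPred_eq, Finset.mul_sum,
    mul_left_comm] using hbound

theorem zetaObj_le_of_notMem_dualExceedance (hC : 0 ≤ C) (hxt : ∀ i, 0 ≤ xt i) {t : ℝ}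
    (ht : 0 ≤ t) {ω : (Fin m → Fin n → ℝ) × (Fin m → ℝ)} (hω : ω ∉ dualExceedance m k C xt t) :
    zetaObj m n xt ω ≤ t :=
  not_lt.1 fun hlt ↦ hω (exists_norm_eq_one_lt_of_lt_zetaObj hC ht hxt hlt)

theorem lasso_stmt14_general (m n k : ℕ) (xt : Fin n → ℝ) (hxt : ∀ i, 0 ≤ xt i) (σ C t : ℝ)
    (hC : 0 < C) (ht : 0 ≤ t) (hEt : ∫ p, xiUpFun m n k σ C xt p ∂muGH m n ≤ t) :
    ENNReal.ofReal (1 - Real.exp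
        (-(t - ∫ p, xiUpFun m n k σ C xt p ∂muGH m n) ^ 2 / (2 * (C ^ 2 + σ ^ 2))))
      ≤ muAv m n σ {ω | zetaObj m n xt ω ≤ t} := by
  have : IsProbabilityMeasure (muAv m n σ) := by
    unfold muAv
    infer_instance
  have hbound := muAv_dualExceedance_le (m := m) (k := k) (σ := σ) hC.le hxt (sub_nonneg.2 hEt)
  rw [add_sub_cancel] at hbound
  rw [ENNReal.ofReal_sub _ (Real.exp_pos _).le, ENNReal.ofReal_one]
  calc _ ≤ 1 - muAv m n σ (dualExceedance m k C xt t) := tsub_le_tsub_left hbound 1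
    _ = muAv m n σ (dualExceedance m k C xt t)ᶜ :=
        (prob_compl_eq_one_sub (isOpen_dualExceedance hC.le hxt t).measurableSet).symm
    _ ≤ muAv m n σ {ω | zetaObj m n xt ω ≤ t} :=
        measure_mono fun ω hω ↦ zetaObj_le_of_notMem_dualExceedance hC.le hxt ht hω

theorem one_sub_two_mul_exp_sub_exp_sub_exp_le {C r s : ℝ} (hC : 0 < C) (hr : 0 ≤ r)
    (hrs : r ≤ s) (σ a b : ℝ) :
    1 - 2 * Real.exp (-r ^ 2 / (2 * (2 * C ^ 2 + σ ^ 2))) - Real.exp a - Real.exp b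
      ≤ 1 - Real.exp (-s ^ 2 / (2 * (C ^ 2 + σ ^ 2))) := by
  have hexp : Real.exp (-s ^ 2 / (2 * (C ^ 2 + σ ^ 2)))
      ≤ Real.exp (-r ^ 2 / (2 * (2 * C ^ 2 + σ ^ 2))) := by
    rw [neg_div, neg_div]
    gcongr
    linarith [sq_nonneg C]
  linarith [Real.exp_pos (-r ^ 2 / (2 * (2 * C ^ 2 + σ ^ 2))), Real.exp_pos a, Real.exp_pos b]

end LassoProbability

theorem lasso_stmt14 (m n k : ℕ) (hm : 1 ≤ m) (hn : 1 ≤ n) (hk1 : 1 ≤ k) (hkn : k ≤ n)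
    (xt : Fin n → ℝ) (hxt : kSparseNonneg n k xt)
    (σ C : ℝ) (hσ : 0 < σ) (hC : 0 < C)
    (hEξ : 0 ≤ ∫ p, xiUpFun m n k σ C xt p ∂(muGH m n)) :
    ∀ ε₁ ∈ Set.Ioo (0 : ℝ) 1, ∀ ε₂ ∈ Set.Ioo (0 : ℝ) 1, ∀ ε₃ ∈ Set.Ioo (0 : ℝ) 1,
      muAv m n σ
        {ω | zetaObj m n xt ω
          ≤ (1 + ε₁) * (∫ p, xiUpFun m n k σ C xt p ∂(muGH m n))
            + (ε₂ + ε₃) * Real.sqrt n}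
      ≥ ENNReal.ofReal
          (1 - 2 * Real.exp (-(ε₁ * ∫ p, xiUpFun m n k σ C xt p ∂(muGH m n)) ^ 2
                / (2 * (2 * C ^ 2 + σ ^ 2)))
            - Real.exp (-(ε₂ ^ 2 * n) / (2 * σ ^ 2))
            - Real.exp (-(ε₃ ^ 2 * n) / 2)) := by
  intro ε₁ hε₁ ε₂ hε₂ ε₃ hε₃
  have hr := mul_nonneg hε₁.1.le hEξ
  have hslack := mul_nonneg (add_nonneg hε₂.1.le hε₃.1.le) (Real.sqrt_nonneg n)
  exact (ENNReal.ofReal_le_ofReal (one_sub_two_mul_exp_sub_exp_sub_exp_le hC hr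
    (by linarith) σ _ _)).trans
      (lasso_stmt14_general m n k xt hxt.2 σ C _ hC (by linarith) (by linarith))
end
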